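/- Let 𝒳 be the closure of the admissible set 𝒜 in L∞(Ω_T;ℝ²), so that (𝒳, L∞) is a nonempty complete metric space, every element of 𝒳 is Lipschitz and agrees with w* on ∂Ω_T, and the a.e.-gradient map ∇ : 𝒳 → L¹(Ω_T; M^{2×2}) is well defined. If w = (u,v) ∈ 𝒳 is a point at which the map ∇ is continuous, then u is a Lipschitz solution to the initial–Neumann problem u_t = (σ(u_x))_x + b u_x + c u + f, u(·,0) = u0, u_x = 0 on ∂Ω×(0,T), and u satisfies: (a) u = u* in Ω¹_T ∪ Ω³_T, ‖u − u*‖_{L∞(Ω_T)} < ε, ‖u_t − u*_t‖_{L∞(Ω_T)} < ε; (b) u_x < s^−_{r1} in Ω¹_T, u_x ∈ [s^−_{r1}, s^−_{r2}] ∪ [s^+_{r1}, s^+_{r2}] a.e. in Ω²_T, u_x > s^+_{r2} in Ω³_T; (c) u_x = s^−_{r1} a.e. in Ω^{0,−}_T and u_x = s^+_{r2} a.e. in Ω^{0,+}_T; (d) with F^±_T = {(x,t) ∈ Ω²_T : u_x ∈ [s^±_{r1}, s^±_{r2}]}: |F^+_T| = γ_u^E |Ω²_T|, |F^−_T| = (1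 − γ_u^E)|Ω²_T|, and |γ_u^E − Γ_{w*}^E| < ε, where E = Ω²_T. -/

import Mathlib

open MeasureTheory Set
open scoped NNReal

noncomputable section

/-- The open space-time domain `Ω_T = (0,1) × (0,T)`. -/
def OmegaT (T : ℝ) : Set (ℝ × ℝ) := Ioo (0:ℝ) 1 ×ˢ Ioo (0:ℝ) T

/-- The closed space-time domain `cl Ω_T = [0,1] × [0,T]`. -/
def ClOmegaT (T : ℝ) : Set (ℝ × ℝ) := Icc (0:ℝ) 1 ×ˢ Icc (0:ℝ) T

/-- Parabolic α-Hölder continuity on `cl Ω_T`. -/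
def ParabolicHolder (α T : ℝ) (g : ℝ → ℝ → ℝ) : Prop :=
  ∃ C : ℝ, ∀ x ∈ Icc (0:ℝ) 1, ∀ y ∈ Icc (0:ℝ) 1, ∀ t ∈ Icc (0:ℝ) T, ∀ s ∈ Icc (0:ℝ) T,
    |g x t - g y s| ≤ C * (|x - y| ^ α + |t - s| ^ (α / 2))

/-- Hypotheses on the forward-backward diffusion flux `σ`, with derivative function `σ'`
(one-sided derivative on `(-∞,s1]` and `[s2,∞)`). -/
structure FluxHyp (α s1 s2 lam Lam : ℝ) (sigma sigma' : ℝ → ℝ) : Prop where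
  alpha_pos : 0 < α
  alpha_lt_one : α < 1
  s1_pos : 0 < s1
  s1_lt_s2 : s1 < s2
  lam_pos : 0 < lam
  lam_le_Lam : lam ≤ Lam
  deriv_left : ∀ s ∈ Iic s1, HasDerivWithinAt sigma (sigma' s) (Iic s1) s
  deriv_right : ∀ s ∈ Ici s2, HasDerivWithinAt sigma (sigma' s) (Ici s2) s
  holder_left : ∃ C : ℝ, ∀ s ∈ Iic s1, ∀ t ∈ Iic s1, |sigma' s - sigma' t| ≤ C * |s - t| ^ α
  holder_right : ∃ C : ℝ, ∀ s ∈ Ici s2, ∀ t ∈ Ici s2, |sigma' s - sigma' t| ≤ C * |s - t| ^ α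
  deriv_pos : ∀ s : ℝ, s < s1 ∨ s2 < s → 0 < sigma' s
  deriv_lb : ∀ s : ℝ, s < s1 / 2 ∨ 2 * s2 < s → lam ≤ sigma' s
  deriv_ub : ∀ s : ℝ, s < s1 / 2 ∨ 2 * s2 < s → sigma' s ≤ Lam
  sigma_zero : sigma 0 = 0
  sigma_s2_lt_s1 : sigma s2 < sigma s1
  sigma_s2_nonneg : 0 ≤ sigma s2

/-- Hypotheses on the convection coefficient `b` (with spatial derivative `bx`),
reaction coefficient `c`, source `f` and the function `d` with `c = b_x + d(t)`. -/
structure CoeffHyp (α T : ℝ) (b bx c f : ℝ → ℝ → ℝ) (d : ℝ → ℝ) : Prop where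
  b_cont : ContinuousOn (fun p : ℝ × ℝ => b p.1 p.2) (ClOmegaT T)
  b_holder : ParabolicHolder α T b
  b_deriv : ∀ p ∈ ClOmegaT T, HasDerivWithinAt (fun y => b y p.2) (bx p.1 p.2) (Icc (0:ℝ) 1) p.1
  bx_cont : ContinuousOn (fun p : ℝ × ℝ => bx p.1 p.2) (ClOmegaT T)
  c_cont : ContinuousOn (fun p : ℝ × ℝ => c p.1 p.2) (ClOmegaT T)
  c_holder : ParabolicHolder α T c
  f_cont : ContinuousOn (fun p : ℝ × ℝ => f p.1 p.2) (ClOmegaT T)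
  f_holder : ParabolicHolder α T f
  d_cont : ContinuousOn d (Icc (0:ℝ) T)
  c_eq : ∀ p ∈ ClOmegaT T, c p.1 p.2 = bx p.1 p.2 + d p.2

/-- Hypotheses on the initial datum `u0 ∈ C^{2+α}([0,1])` with `u0'(0) = u0'(1) = 0`. -/
structure InitHyp (α : ℝ) (u0 u0' u0'' : ℝ → ℝ) : Prop where
  deriv1 : ∀ x ∈ Icc (0:ℝ) 1, HasDerivWithinAt u0 (u0' x) (Icc (0:ℝ) 1) x
  deriv2 : ∀ x ∈ Icc (0:ℝ) 1, HasDerivWithinAt u0' (u0'' x) (Icc (0:ℝ) 1) x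
  holder : ∃ C : ℝ, ∀ x ∈ Icc (0:ℝ) 1, ∀ y ∈ Icc (0:ℝ) 1, |u0'' x - u0'' y| ≤ C * |x - y| ^ α
  compat0 : u0' 0 = 0
  compat1 : u0' 1 = 0

/-- `u` (with a.e. spatial derivative `ux`) is a Lipschitz (weak) solution of the
initial–Neumann problem for `u_t = (σ(u_x))_x + b u_x + c u + f` on `Ω_T`. -/
def IsLipschitzSolution (T : ℝ) (sigma : ℝ → ℝ) (b c f : ℝ → ℝ → ℝ) (u0 : ℝ → ℝ)
    (u ux : ℝ → ℝ → ℝ) : Prop :=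
  (∃ K : ℝ≥0, LipschitzOnWith K (fun p : ℝ × ℝ => u p.1 p.2) (ClOmegaT T)) ∧
  (∀ᵐ p ∂(volume.restrict (OmegaT T)), HasDerivAt (fun y => u y p.2) (ux p.1 p.2) p.1) ∧
  (∀ ζ : ℝ → ℝ → ℝ, ContDiff ℝ (⊤ : ℕ∞) (fun p : ℝ × ℝ => ζ p.1 p.2) →
    ∀ s ∈ Icc (0:ℝ) T,
      (∫ t in Ioo (0:ℝ) s, ∫ x in Ioo (0:ℝ) 1,
        (u x t * deriv (fun τ => ζ x τ) t - sigma (ux x t) * deriv (fun y => ζ y t) x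
          + (b x t * ux x t + c x t * u x t + f x t) * ζ x t))
      = ∫ x in Ioo (0:ℝ) 1, (u x s * ζ x s - u0 x * ζ x 0))

/-- The forward-phase constraint: `u_x ∈ (-∞,s1) ∪ (s2,∞)` a.e. in `Ω_T`. -/
def ForwardRange (T s1 s2 : ℝ) (ux : ℝ → ℝ → ℝ) : Prop :=
  ∀ᵐ p ∂(volume.restrict (OmegaT T)), ux p.1 p.2 < s1 ∨ s2 < ux p.1 p.2

/-- `F(x,t) = ∫_0^x f(y,t) dy`. -/
def Fint (f : ℝ → ℝ → ℝ) (x t : ℝ) : ℝ := ∫ y in (0:ℝ)..x, f y t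

/-- The potential operator `P_u(x,t) = ∫_0^x (c(y,t) - b_y(y,t)) u(y,t) dy`. -/
def Pot (c bx : ℝ → ℝ → ℝ) (u : ℝ → ℝ → ℝ) (x t : ℝ) : ℝ :=
  ∫ y in (0:ℝ)..x, (c y t - bx y t) * u y t

/-- The quantity `v_t - b u - P_u - F` at `(x,t)` (the second coordinate of the gradient
constraint in the nonlocal differential inclusion). -/
def GVal (b c bx f : ℝ → ℝ → ℝ) (u vt : ℝ → ℝ → ℝ) (x t : ℝ) : ℝ :=
  vt x t - b x t * u x t - Pot c bx u x t - Fint f x t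

/-- `Σ0`, the graph of `σ`. -/
def Sigma0 (sigma : ℝ → ℝ) : Set (ℝ × ℝ) := {q | q.2 = sigma q.1}

/-- `U0 = {(s,r) : σ(s2) < r < σ(s1), s_r^- < s < s_r^+}`. -/
def U0set (sigma : ℝ → ℝ) (s1 s2 : ℝ) (sm sp : ℝ → ℝ) : Set (ℝ × ℝ) :=
  {q | sigma s2 < q.2 ∧ q.2 < sigma s1 ∧ sm q.2 < q.1 ∧ q.1 < sp q.2}

/-- `K0 = {(s,σ(s)) : s ∈ [s1*,s1] ∪ [s2,s2*]}`. -/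
def K0set (sigma : ℝ → ℝ) (s1star s1 s2 s2star : ℝ) : Set (ℝ × ℝ) :=
  {q | (q.1 ∈ Icc s1star s1 ∨ q.1 ∈ Icc s2 s2star) ∧ q.2 = sigma q.1}

/-- `w = (u,v)` (with a.e. partial derivatives `ux`, `vx`, `vt`) is a subsolution of the
nonlocal differential inclusion: `v_x = u` and `(u_x, v_t - bu - P_u - F) ∈ Σ0 ∪ U0` a.e. -/
structure IsSubsolution (T : ℝ) (sigma : ℝ → ℝ) (s1 s2 : ℝ) (sm sp : ℝ → ℝ)
    (b bx c f : ℝ → ℝ → ℝ) (u v ux vx vt : ℝ → ℝ → ℝ) : Prop where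
  lip_u : ∃ K : ℝ≥0, LipschitzOnWith K (fun p : ℝ × ℝ => u p.1 p.2) (ClOmegaT T)
  lip_v : ∃ K : ℝ≥0, LipschitzOnWith K (fun p : ℝ × ℝ => v p.1 p.2) (ClOmegaT T)
  du : ∀ᵐ p ∂(volume.restrict (OmegaT T)), HasDerivAt (fun y => u y p.2) (ux p.1 p.2) p.1
  dvx : ∀ᵐ p ∂(volume.restrict (OmegaT T)), HasDerivAt (fun y => v y p.2) (vx p.1 p.2) p.1
  dvt : ∀ᵐ p ∂(volume.restrict (OmegaT T)), HasDerivAt (fun τ => v p.1 τ) (vt p.1 p.2) p.2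
  vx_eq_u : ∀ᵐ p ∂(volume.restrict (OmegaT T)), vx p.1 p.2 = u p.1 p.2
  incl : ∀ᵐ p ∂(volume.restrict (OmegaT T)),
    (ux p.1 p.2, GVal b c bx f u vt p.1 p.2) ∈ Sigma0 sigma ∪ U0set sigma s1 s2 sm sp

/-- The transition set `O^w` of a subsolution `w = (u,v)`. -/
def TransSet (T : ℝ) (sigma : ℝ → ℝ) (s1star s1 s2 s2star : ℝ) (sm sp : ℝ → ℝ)
    (b bx c f : ℝ → ℝ → ℝ) (u vt ux : ℝ → ℝ → ℝ) : Set (ℝ × ℝ) :=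
  {p ∈ OmegaT T | (ux p.1 p.2, GVal b c bx f u vt p.1 p.2)
      ∈ K0set sigma s1star s1 s2 s2star ∪ U0set sigma s1 s2 sm sp}

/-- `Z_w = (u_x - S_w^-)/(S_w^+ - S_w^-)` with `S_w^± = s^±_{v_t - bu - P_u - F}`. -/
def Zfun (sm sp : ℝ → ℝ) (b bx c f : ℝ → ℝ → ℝ) (u vt ux : ℝ → ℝ → ℝ) (p : ℝ × ℝ) : ℝ :=
  (ux p.1 p.2 - sm (GVal b c bx f u vt p.1 p.2))
    / (sp (GVal b c bx f u vt p.1 p.2) - sm (GVal b c bx f u vt p.1 p.2))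

/-- The transition gauge `Γ_w^E = (1/|E|) ∫_E Z_w`. -/
def Gauge (sm sp : ℝ → ℝ) (b bx c f : ℝ → ℝ → ℝ) (u vt ux : ℝ → ℝ → ℝ)
    (E : Set (ℝ × ℝ)) : ℝ :=
  ((volume E).toReal)⁻¹ * ∫ p in E, Zfun sm sp b bx c f u vt ux p

/-- Membership in `C^{2,1}(cl Ω_T)`, with the derivative data `ux`, `uxx`, `ut`. -/
structure C21 (T : ℝ) (u ux uxx ut : ℝ → ℝ → ℝ) : Prop where
  dx : ∀ p ∈ ClOmegaT T, HasDerivWithinAt (fun y => u y p.2) (ux p.1 p.2) (Icc (0:ℝ) 1) p.1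
  dxx : ∀ p ∈ ClOmegaT T, HasDerivWithinAt (fun y => ux y p.2) (uxx p.1 p.2) (Icc (0:ℝ) 1) p.1
  dt : ∀ p ∈ ClOmegaT T, HasDerivWithinAt (fun τ => u p.1 τ) (ut p.1 p.2) (Icc (0:ℝ) T) p.2
  cont : ContinuousOn (fun p : ℝ × ℝ => u p.1 p.2) (ClOmegaT T)
  cont_x : ContinuousOn (fun p : ℝ × ℝ => ux p.1 p.2) (ClOmegaT T)
  cont_xx : ContinuousOn (fun p : ℝ × ℝ => uxx p.1 p.2) (ClOmegaT T)
  cont_t : ContinuousOn (fun p : ℝ × ℝ => ut p.1 p.2) (ClOmegaT T)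

/-- Membership in `C^{3,1}(cl Ω_T)`, with the derivative data `vx`, `vxx`, `vxxx`, `vt`. -/
structure C31 (T : ℝ) (v vx vxx vxxx vt : ℝ → ℝ → ℝ) : Prop where
  dx : ∀ p ∈ ClOmegaT T, HasDerivWithinAt (fun y => v y p.2) (vx p.1 p.2) (Icc (0:ℝ) 1) p.1
  dxx : ∀ p ∈ ClOmegaT T, HasDerivWithinAt (fun y => vx y p.2) (vxx p.1 p.2) (Icc (0:ℝ) 1) p.1
  dxxx : ∀ p ∈ ClOmegaT T, HasDerivWithinAt (fun y => vxx y p.2) (vxxx p.1 p.2) (Icc (0:ℝ) 1) p.1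
  dt : ∀ p ∈ ClOmegaT T, HasDerivWithinAt (fun τ => v p.1 τ) (vt p.1 p.2) (Icc (0:ℝ) T) p.2
  cont : ContinuousOn (fun p : ℝ × ℝ => v p.1 p.2) (ClOmegaT T)
  cont_x : ContinuousOn (fun p : ℝ × ℝ => vx p.1 p.2) (ClOmegaT T)
  cont_xx : ContinuousOn (fun p : ℝ × ℝ => vxx p.1 p.2) (ClOmegaT T)
  cont_xxx : ContinuousOn (fun p : ℝ × ℝ => vxxx p.1 p.2) (ClOmegaT T)
  cont_t : ContinuousOn (fun p : ℝ × ℝ => vt p.1 p.2) (ClOmegaT T)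

/-- `Ω¹_T = {(x,t) ∈ Ω_T : u*_x(x,t) < s^-_{r1}}`. -/
def Omega1 (T smr1 : ℝ) (usx : ℝ → ℝ → ℝ) : Set (ℝ × ℝ) :=
  {p ∈ OmegaT T | usx p.1 p.2 < smr1}

/-- `Ω²_T = {(x,t) ∈ Ω_T : s^-_{r1} < u*_x(x,t) < s^+_{r2}}`. -/
def Omega2 (T smr1 spr2 : ℝ) (usx : ℝ → ℝ → ℝ) : Set (ℝ × ℝ) :=
  {p ∈ OmegaT T | smr1 < usx p.1 p.2 ∧ usx p.1 p.2 < spr2}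

/-- `Ω³_T = {(x,t) ∈ Ω_T : u*_x(x,t) > s^+_{r2}}`. -/
def Omega3 (T spr2 : ℝ) (usx : ℝ → ℝ → ℝ) : Set (ℝ × ℝ) :=
  {p ∈ OmegaT T | spr2 < usx p.1 p.2}

/-- `Ω^{0,-}_T = {(x,t) ∈ Ω_T : u*_x(x,t) = s^-_{r1}}`. -/
def Omega0m (T smr1 : ℝ) (usx : ℝ → ℝ → ℝ) : Set (ℝ × ℝ) :=
  {p ∈ OmegaT T | usx p.1 p.2 = smr1}

/-- `Ω^{0,+}_T = {(x,t) ∈ Ω_T : u*_x(x,t) = s^+_{r2}}`. -/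
def Omega0p (T spr2 : ℝ) (usx : ℝ → ℝ → ℝ) : Set (ℝ × ℝ) :=
  {p ∈ OmegaT T | usx p.1 p.2 = spr2}

/-- The `L∞(Ω_T)` norm (essential supremum over `Ω_T` of the absolute value). -/
def EssSupAbs (T : ℝ) (g : ℝ → ℝ → ℝ) : ℝ :=
  essSup (fun p : ℝ × ℝ => |g p.1 p.2|) (volume.restrict (OmegaT T))

/-- Hypotheses on the modified flux `σ̃ ∈ C^{1+α}(ℝ)` (with derivative `σ̃'`). -/
structure TildeHyp (α r1 r2 lamt Lamt : ℝ) (sigma sm sp sigmat sigmat' : ℝ → ℝ) : Prop where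
  deriv : ∀ s : ℝ, HasDerivAt sigmat (sigmat' s) s
  holder : ∃ C : ℝ, ∀ s t : ℝ, |sigmat' s - sigmat' t| ≤ C * |s - t| ^ α
  eq_left : ∀ s : ℝ, s ≤ sm r1 → sigmat s = sigma s
  eq_right : ∀ s : ℝ, sp r2 ≤ s → sigmat s = sigma s
  lt_mid : ∀ s : ℝ, sm r1 < s → s ≤ sm r2 → sigmat s < sigma s
  gt_mid : ∀ s : ℝ, sp r1 ≤ s → s < sp r2 → sigma s < sigmat s
  lamt_pos : 0 < lamt
  lamt_le_Lamt : lamt ≤ Lamt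
  deriv_lb : ∀ s : ℝ, lamt ≤ sigmat' s
  deriv_ub : ∀ s : ℝ, sigmat' s ≤ Lamt

/-- `u*` is the classical solution in `C^{2+α,1+α/2}(cl Ω_T)` of the modified problem. -/
structure StarSol (α T : ℝ) (sigmat sigmat' : ℝ → ℝ) (b bx c f : ℝ → ℝ → ℝ) (u0 : ℝ → ℝ)
    (us usx usxx ust : ℝ → ℝ → ℝ) : Prop where
  reg : C21 T us usx usxx ust
  holder_xx : ParabolicHolder α T usxx
  holder_t : ParabolicHolder α T ust
  pde : ∀ p ∈ OmegaT T, ust p.1 p.2 =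
    sigmat' (usx p.1 p.2) * usxx p.1 p.2 + b p.1 p.2 * usx p.1 p.2
      + c p.1 p.2 * us p.1 p.2 + f p.1 p.2
  ic : ∀ x ∈ Icc (0:ℝ) 1, us x 0 = u0 x
  bc : ∀ t ∈ Icc (0:ℝ) T, usx 0 t = 0 ∧ usx 1 t = 0

/-- The auxiliary function
`v*(x,t) = ∫_0^t (σ̃(u*_x) + b u* + P_{u*} + F)(x,τ) dτ + ∫_0^x u0(y) dy`. -/
def VStar (sigmat : ℝ → ℝ) (b bx c f : ℝ → ℝ → ℝ) (u0 : ℝ → ℝ) (us usx : ℝ → ℝ → ℝ)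
    (x t : ℝ) : ℝ :=
  (∫ τ in (0:ℝ)..t, (sigmat (usx x τ) + b x τ * us x τ + Pot c bx us x τ + Fint f x τ))
    + ∫ y in (0:ℝ)..x, u0 y

/-- The classical time derivative of `v*`: `v*_t = σ̃(u*_x) + b u* + P_{u*} + F`. -/
def VStarT (sigmat : ℝ → ℝ) (b bx c f : ℝ → ℝ → ℝ) (us usx : ℝ → ℝ → ℝ) (x t : ℝ) : ℝ :=
  sigmat (usx x t) + b x t * us x t + Pot c bx us x t + Fint f x t

/-- A `2×2` matrix `(a b; c d)` regarded as a point of Euclidean `ℝ⁴`, so that the Euclidean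
distance is the Hilbert–Schmidt distance. -/
def mk4 (a b c d : ℝ) : EuclideanSpace ℝ (Fin 4) :=
  (WithLp.equiv 2 (Fin 4 → ℝ)).symm ![a, b, c, d]

/-- `K' = {(s,σ(s)) : s ∈ [s^-_{r1}, s^-_{r2}] ∪ [s^+_{r1}, s^+_{r2}]}`. -/
def Kprime (sigma : ℝ → ℝ) (sm sp : ℝ → ℝ) (r1 r2 : ℝ) : Set (ℝ × ℝ) :=
  {q | (q.1 ∈ Icc (sm r1) (sm r2) ∨ q.1 ∈ Icc (sp r1) (sp r2)) ∧ q.2 = sigma q.1}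

/-- `U' = {(s,r) : r1 < r < r2, s_r^- < s < s_r^+}`. -/
def Uprime (sm sp : ℝ → ℝ) (r1 r2 : ℝ) : Set (ℝ × ℝ) :=
  {q | r1 < q.2 ∧ q.2 < r2 ∧ sm q.2 < q.1 ∧ q.1 < sp q.2}

/-- The compact matrix set `K((x,t);u)` (as a subset of Euclidean `ℝ⁴`). -/
def KmatSet (sigma sm sp : ℝ → ℝ) (r1 r2 mstar : ℝ) (b c bx f : ℝ → ℝ → ℝ)
    (u : ℝ → ℝ → ℝ) (x t : ℝ) : Set (EuclideanSpace ℝ (Fin 4)) :=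
  {A | ∃ s c' q : ℝ, A = mk4 s c' (u x t) q ∧ |c'| ≤ mstar ∧
    (s, q - b x t * u x t - Pot c bx u x t - Fint f x t) ∈ Kprime sigma sm sp r1 r2}

/-- The condition `∇w(x,t) ∈ U((x,t);u)` for `w = (u,v)` with gradient data
`ux, ut, vx, vt`. -/
def GradInU (r1 r2 mstar : ℝ) (sm sp : ℝ → ℝ) (b c bx f : ℝ → ℝ → ℝ)
    (u ux ut vx vt : ℝ → ℝ → ℝ) (p : ℝ × ℝ) : Prop :=
  vx p.1 p.2 = u p.1 p.2 ∧ |ut p.1 p.2| < mstar ∧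
    (ux p.1 p.2, GVal b c bx f u vt p.1 p.2) ∈ Uprime sm sp r1 r2

/-- A pair `w = (u,v)` together with all relevant partial-derivative data. -/
structure PairData where
  u : ℝ → ℝ → ℝ
  ux : ℝ → ℝ → ℝ
  uxx : ℝ → ℝ → ℝ
  ut : ℝ → ℝ → ℝ
  v : ℝ → ℝ → ℝ
  vx : ℝ → ℝ → ℝ
  vxx : ℝ → ℝ → ℝ
  vxxx : ℝ → ℝ → ℝ
  vt : ℝ → ℝ → ℝ

/-- Membership in the admissible set `𝒜` of subsolutions. Here `us, usx, ust` are the data of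
`u*`, `vs` is `v*`, `E = Ω²_T`, `mstar = m*` and `GammaStar = Γ_{w*}^E`. -/
def InAdmissible (T r1 r2 mstar ε GammaStar : ℝ) (sigma sm sp : ℝ → ℝ)
    (b bx c f : ℝ → ℝ → ℝ) (us ust vs : ℝ → ℝ → ℝ) (E : Set (ℝ × ℝ))
    (W : PairData) : Prop :=
  C21 T W.u W.ux W.uxx W.ut ∧
  C31 T W.v W.vx W.vxx W.vxxx W.vt ∧
  (∃ O : Set (ℝ × ℝ), IsOpen O ∧ closure O ⊆ E ∧ IsCompact (closure O) ∧
    volume (frontier O) = 0 ∧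
    (∀ p ∈ OmegaT T \ closure O, W.u p.1 p.2 = us p.1 p.2 ∧ W.v p.1 p.2 = vs p.1 p.2) ∧
    (∀ p ∈ OmegaT T \ closure O, Pot c bx W.u p.1 p.2 = Pot c bx us p.1 p.2)) ∧
  EssSupAbs T (fun x t => W.u x t - us x t) < ε / 2 ∧
  EssSupAbs T (fun x t => W.ut x t - ust x t) < ε / 2 ∧
  (∀ p ∈ E, GradInU r1 r2 mstar sm sp b c bx f W.u W.ux W.ut W.vx W.vt p) ∧
  |Gauge sm sp b bx c f W.u W.vt W.ux E - GammaStar| < ε / 2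

/-- Membership in the set `𝒜_δ` of `δ`-approximating subsolutions (the extra integral
condition beyond membership in `𝒜`). -/
def DeltaApproxCond (r1 r2 mstar δ : ℝ) (sigma sm sp : ℝ → ℝ)
    (b bx c f : ℝ → ℝ → ℝ) (E : Set (ℝ × ℝ)) (W : PairData) : Prop :=
  (∫ p in E, Metric.infDist
      (mk4 (W.ux p.1 p.2) (W.ut p.1 p.2) (W.vx p.1 p.2) (W.vt p.1 p.2))
      (KmatSet sigma sm sp r1 r2 mstar b c bx f W.u p.1 p.2))
    ≤ δ * (volume E).toReal

/-! ### Basic facts on the domains -/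

lemma isOpen_OmegaT (T : ℝ) : IsOpen (OmegaT T) := isOpen_Ioo.prod isOpen_Ioo

lemma measurableSet_OmegaT (T : ℝ) : MeasurableSet (OmegaT T) := (isOpen_OmegaT T).measurableSet

lemma isCompact_ClOmegaT (T : ℝ) : IsCompact (ClOmegaT T) := isCompact_Icc.prod isCompact_Icc

lemma OmegaT_subset (T : ℝ) : OmegaT T ⊆ ClOmegaT T :=
  prod_mono Ioo_subset_Icc_self Ioo_subset_Icc_self

lemma closure_OmegaT {T : ℝ} (hT : 0 < T) : closure (OmegaT T) = ClOmegaT T := by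
  unfold OmegaT ClOmegaT
  rw [closure_prod_eq, closure_Ioo (by norm_num), closure_Ioo hT.ne]

lemma volume_OmegaT_lt_top (T : ℝ) : volume (OmegaT T) < ⊤ :=
  lt_of_le_of_lt (measure_mono (OmegaT_subset T)) (isCompact_ClOmegaT T).measure_lt_top

instance isFiniteMeasure_OmegaT (T : ℝ) :
    IsFiniteMeasure ((volume : Measure (ℝ × ℝ)).restrict (OmegaT T)) :=
  ⟨by rw [Measure.restrict_apply_univ]; exact volume_OmegaT_lt_top T⟩

lemma OmegaT_nonempty {T : ℝ} (hT : 0 < T) : (OmegaT T).Nonempty :=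
  ⟨(1/2, T/2), ⟨by norm_num, by norm_num⟩, ⟨by simp; linarith, by simp; linarith⟩⟩

lemma neBot_ae_OmegaT {T : ℝ} (hT : 0 < T) :
    (ae ((volume : Measure (ℝ × ℝ)).restrict (OmegaT T))).NeBot := by
  rw [ae_neBot, Ne, Measure.restrict_eq_zero]
  exact ((isOpen_OmegaT T).measure_pos _ (OmegaT_nonempty hT)).ne'

lemma bdd_of_contOn {T : ℝ} {g : ℝ × ℝ → ℝ} (hg : ContinuousOn g (ClOmegaT T)) :
    ∃ M : ℝ, 0 ≤ M ∧ ∀ p ∈ ClOmegaT T, |g p| ≤ M := by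
  obtain ⟨M, hM⟩ := (isCompact_ClOmegaT T).exists_bound_of_continuousOn hg
  exact ⟨max M 0, le_max_right _ _, fun p hp => (hM p hp).trans (le_max_left _ _)⟩

/-! ### Essential suprema -/

lemma EssSupAbs_le {T : ℝ} (hT : 0 < T) {g : ℝ → ℝ → ℝ} {C : ℝ}
    (h : ∀ᵐ p ∂(volume.restrict (OmegaT T)), |g p.1 p.2| ≤ C) : EssSupAbs T g ≤ C := by
  have := neBot_ae_OmegaT hT
  refine essSup_le_of_ae_le C h ?_
  refine Filter.IsBoundedUnder.isCoboundedUnder_le ?_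
  exact ⟨0, by simp⟩

lemma EssSupAbs_le' {T : ℝ} (hT : 0 < T) {g : ℝ → ℝ → ℝ} {C : ℝ}
    (h : ∀ p ∈ OmegaT T, |g p.1 p.2| ≤ C) : EssSupAbs T g ≤ C :=
  EssSupAbs_le hT ((ae_restrict_iff' (measurableSet_OmegaT T)).2 (Filter.Eventually.of_forall h))

lemma le_EssSupAbs {T : ℝ} {g : ℝ → ℝ → ℝ}
    (hg : ContinuousOn (fun p : ℝ × ℝ => g p.1 p.2) (ClOmegaT T)) :
    ∀ p ∈ OmegaT T, |g p.1 p.2| ≤ EssSupAbs T g := by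
  obtain ⟨M, hM0, hM⟩ := bdd_of_contOn hg
  have hae : ∀ᵐ p ∂(volume.restrict (OmegaT T)), |g p.1 p.2| ≤ EssSupAbs T g := by
    refine ae_le_essSup (f := fun p : ℝ × ℝ => |g p.1 p.2|) ⟨M, ?_⟩
    rw [Filter.eventually_map]
    exact (ae_restrict_iff' (measurableSet_OmegaT T)).2
      (Filter.Eventually.of_forall fun p hp => hM p (OmegaT_subset T hp))
  by_contra hcon
  push Not at hcon
  obtain ⟨p, hp, hlt⟩ := hcon
  have hgo : ContinuousOn (fun p : ℝ × ℝ => |g p.1 p.2|) (OmegaT T) :=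
    (hg.mono (OmegaT_subset T)).abs
  have hop := hgo.isOpen_inter_preimage (isOpen_OmegaT T) (isOpen_Ioi (a := EssSupAbs T g))
  have hpos := hop.measure_pos volume ⟨p, hp, hlt⟩
  have h0 := (ae_restrict_iff' (measurableSet_OmegaT T)).1 hae
  rw [ae_iff] at h0
  refine hpos.ne' (measure_mono_null ?_ h0)
  rintro q ⟨hq, hq'⟩
  simp only [mem_ofPred_eq, not_forall]
  exact ⟨hq, not_le.2 hq'⟩

/-- Continuous functions agreeing on `Ω_T \ closure O` agree up to the boundary. -/
lemma eq_of_eq_off {T : ℝ} (hT : 0 < T) {O : Set (ℝ × ℝ)} {g h : ℝ × ℝ → ℝ}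
    (hg : ContinuousOn g (ClOmegaT T)) (hh : ContinuousOn h (ClOmegaT T))
    (heq : ∀ p ∈ OmegaT T \ closure O, g p = h p) :
    ∀ p ∈ ClOmegaT T \ closure O, g p = h p := by
  rintro p ⟨hp, hpO⟩
  have hsub : closure (OmegaT T \ closure O) ⊆ ClOmegaT T := by
    rw [← closure_OmegaT hT]; exact closure_mono sdiff_subset
  have hmem : p ∈ closure (OmegaT T \ closure O) := by
    rw [← closure_OmegaT hT] at hp
    have : p ∈ (closure O)ᶜ ∩ closure (OmegaT T) := ⟨hpO, hp⟩
    have := (isClosed_closure.isOpen_compl).inter_closure this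
    rwa [inter_comm] at this
  exact EqOn.of_subset_closure (s := OmegaT T \ closure O) (t := closure (OmegaT T \ closure O))
    (fun q hq => heq q hq) (hg.mono hsub) (hh.mono hsub) subset_closure (subset_refl _) hmem

lemma le_of_le_Omega {T : ℝ} (hT : 0 < T) {g : ℝ × ℝ → ℝ} {C : ℝ}
    (hg : ContinuousOn g (ClOmegaT T)) (h : ∀ p ∈ OmegaT T, g p ≤ C) :
    ∀ p ∈ ClOmegaT T, g p ≤ C := by
  intro p hp
  rw [← closure_OmegaT hT] at hp hg
  exact le_on_closure h hg continuousOn_const hp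

/-! ### Continuous extension -/

/-- Clamping. -/
def clampR (a x : ℝ) : ℝ := max 0 (min x a)

lemma clampR_mem {a : ℝ} (ha : 0 ≤ a) (x : ℝ) : clampR a x ∈ Icc 0 a :=
  ⟨le_max_left _ _, max_le ha (min_le_right _ _)⟩

lemma clampR_eq {a x : ℝ} (hx : x ∈ Icc 0 a) : clampR a x = x := by
  unfold clampR; rw [min_eq_left hx.2, max_eq_right hx.1]

lemma continuous_clampR (a : ℝ) : Continuous (clampR a) := by unfold clampR; fun_prop

/-- extension of `g` from `cl Ω_T` -/
def extR (T : ℝ) (g : ℝ → ℝ → ℝ) : ℝ → ℝ → ℝ := fun x t => g (clampR 1 x) (clampR T t)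

lemma extR_eq {T : ℝ} {g : ℝ → ℝ → ℝ} {x t : ℝ} (hx : x ∈ Icc (0:ℝ) 1) (ht : t ∈ Icc 0 T) :
    extR T g x t = g x t := by
  unfold extR; rw [clampR_eq hx, clampR_eq ht]

lemma continuous_extR {T : ℝ} (hT : 0 < T) {g : ℝ → ℝ → ℝ}
    (hg : ContinuousOn (fun p : ℝ × ℝ => g p.1 p.2) (ClOmegaT T)) :
    Continuous (fun p : ℝ × ℝ => extR T g p.1 p.2) := by
  refine hg.comp_continuous (f := fun p : ℝ × ℝ => (clampR 1 p.1, clampR T p.2)) ?_ ?_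
  · exact ((continuous_clampR 1).comp continuous_fst).prodMk
      ((continuous_clampR T).comp continuous_snd)
  · exact fun p => ⟨clampR_mem zero_le_one _, clampR_mem hT.le _⟩

lemma slice_x {T : ℝ} {g : ℝ → ℝ → ℝ}
    (hg : ContinuousOn (fun p : ℝ × ℝ => g p.1 p.2) (ClOmegaT T)) {t : ℝ} (ht : t ∈ Icc 0 T) :
    ContinuousOn (fun x => g x t) (Icc 0 1) :=
  hg.comp (f := fun x : ℝ => (x, t)) (by fun_prop) (fun _ hx => ⟨hx, ht⟩)

lemma slice_t {T : ℝ} {g : ℝ → ℝ → ℝ}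
    (hg : ContinuousOn (fun p : ℝ × ℝ => g p.1 p.2) (ClOmegaT T)) {x : ℝ} (hx : x ∈ Icc (0:ℝ) 1) :
    ContinuousOn (fun t => g x t) (Icc 0 T) :=
  hg.comp (f := fun t : ℝ => (x, t)) (by fun_prop) (fun _ ht => ⟨hx, ht⟩)

lemma ii_of_cont {g : ℝ → ℝ} {a x : ℝ} (hg : ContinuousOn g (Icc 0 a)) (hx : x ∈ Icc 0 a) :
    IntervalIntegrable g volume 0 x :=
  (hg.mono (Icc_subset_Icc_right hx.2)).intervalIntegrable_of_Icc hx.1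

lemma integral_ext_x {T : ℝ} {g : ℝ → ℝ → ℝ} {x t : ℝ} (hx : x ∈ Icc (0:ℝ) 1) (ht : t ∈ Icc 0 T) :
    ∫ y in (0:ℝ)..x, g y t = ∫ y in (0:ℝ)..x, extR T g y t := by
  refine intervalIntegral.integral_congr fun y hy => ?_
  rw [uIcc_of_le hx.1] at hy
  exact (extR_eq ⟨hy.1, hy.2.trans hx.2⟩ ht).symm

lemma integral_ext_t {T : ℝ} {g : ℝ → ℝ → ℝ} {x t : ℝ} (hx : x ∈ Icc (0:ℝ) 1) (ht : t ∈ Icc 0 T) :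
    ∫ τ in (0:ℝ)..t, g x τ = ∫ τ in (0:ℝ)..t, extR T g x τ := by
  refine intervalIntegral.integral_congr fun y hy => ?_
  rw [uIcc_of_le ht.1] at hy
  exact (extR_eq hx ⟨hy.1, hy.2.trans ht.2⟩).symm

lemma contOn_primitive {T : ℝ} (hT : 0 < T) {g : ℝ → ℝ → ℝ}
    (hg : ContinuousOn (fun p : ℝ × ℝ => g p.1 p.2) (ClOmegaT T)) :
    ContinuousOn (fun p : ℝ × ℝ => ∫ y in (0:ℝ)..p.1, g y p.2) (ClOmegaT T) := by
  have hc := continuous_extR hT hg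
  have : Continuous (fun p : ℝ × ℝ => ∫ y in (0:ℝ)..p.1, extR T g y p.2) := by
    refine intervalIntegral.continuous_parametric_intervalIntegral_of_continuous
      (f := fun p : ℝ × ℝ => fun y => extR T g y p.2) ?_ continuous_fst
    exact hc.comp (f := fun q : (ℝ × ℝ) × ℝ => (q.2, q.1.2)) (by fun_prop)
  exact this.continuousOn.congr fun p hp => integral_ext_x hp.1 hp.2

lemma swap_cont {g : ℝ → ℝ → ℝ} (hg : Continuous (fun p : ℝ × ℝ => g p.1 p.2)) {x t : ℝ}
    (hx : 0 ≤ x) (ht : 0 ≤ t) :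
    ∫ y in (0:ℝ)..x, ∫ τ in (0:ℝ)..t, g y τ = ∫ τ in (0:ℝ)..t, ∫ y in (0:ℝ)..x, g y τ := by
  simp only [intervalIntegral.integral_of_le hx, intervalIntegral.integral_of_le ht]
  refine integral_integral_swap ?_
  rw [Measure.prod_restrict]
  refine IntegrableOn.mono_set (t := Icc 0 x ×ˢ Icc 0 t) ?_
    (prod_mono Ioc_subset_Icc_self Ioc_subset_Icc_self)
  exact ContinuousOn.integrableOn_compact (isCompact_Icc.prod isCompact_Icc) hg.continuousOn

lemma swap_contOn {T : ℝ} (hT : 0 < T) {g : ℝ → ℝ → ℝ}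
    (hg : ContinuousOn (fun p : ℝ × ℝ => g p.1 p.2) (ClOmegaT T)) {x t : ℝ}
    (hx : x ∈ Icc (0:ℝ) 1) (ht : t ∈ Icc 0 T) :
    ∫ y in (0:ℝ)..x, ∫ τ in (0:ℝ)..t, g y τ = ∫ τ in (0:ℝ)..t, ∫ y in (0:ℝ)..x, g y τ := by
  have h1 : ∫ y in (0:ℝ)..x, ∫ τ in (0:ℝ)..t, g y τ
      = ∫ y in (0:ℝ)..x, ∫ τ in (0:ℝ)..t, extR T g y τ := by
    refine intervalIntegral.integral_congr fun y hy => ?_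
    rw [uIcc_of_le hx.1] at hy
    exact integral_ext_t ⟨hy.1, hy.2.trans hx.2⟩ ht
  have h2 : ∫ τ in (0:ℝ)..t, ∫ y in (0:ℝ)..x, g y τ
      = ∫ τ in (0:ℝ)..t, ∫ y in (0:ℝ)..x, extR T g y τ := by
    refine intervalIntegral.integral_congr fun y hy => ?_
    rw [uIcc_of_le ht.1] at hy
    exact integral_ext_x hx ⟨hy.1, hy.2.trans ht.2⟩
  rw [h1, h2, swap_cont (continuous_extR hT hg) hx.1 ht.1]

/-- FTC with one-sided derivatives on `[0,a]`. -/
lemma ftc_Icc {g g' : ℝ → ℝ} {a : ℝ} (hd : ∀ x ∈ Icc 0 a, HasDerivWithinAt g (g' x) (Icc 0 a) x)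
    (hc : ContinuousOn g' (Icc 0 a)) {x : ℝ} (hx : x ∈ Icc 0 a) :
    ∫ y in (0:ℝ)..x, g' y = g x - g 0 := by
  have hcg : ContinuousOn g (Icc 0 a) := fun y hy => (hd y hy).continuousWithinAt
  refine intervalIntegral.integral_eq_sub_of_hasDerivAt_of_le hx.1
    (hcg.mono (Icc_subset_Icc_right hx.2)) ?_ (ii_of_cont hc hx)
  intro y hy
  have hy' : y ∈ Ioo 0 a := ⟨hy.1, hy.2.trans_le hx.2⟩
  exact (hd y (Ioo_subset_Icc_self hy')).hasDerivAt (Icc_mem_nhds hy'.1 hy'.2)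

/-- derivative of a primitive -/
lemma deriv_primitive {g : ℝ → ℝ} {a : ℝ} (hc : ContinuousOn g (Icc 0 a)) {x : ℝ}
    (hx : x ∈ Icc 0 a) :
    HasDerivWithinAt (fun z => ∫ y in (0:ℝ)..z, g y) (g x) (Icc 0 a) x := by
  have ha : 0 ≤ a := hx.1.trans hx.2
  set G : ℝ → ℝ := fun y => g (clampR a y) with hG
  have hGc : Continuous G :=
    hc.comp_continuous (continuous_clampR a) (fun y => clampR_mem ha y)
  have h1 : HasDerivAt (fun z => ∫ y in (0:ℝ)..z, G y) (G x) x :=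
    intervalIntegral.integral_hasDerivAt_right (hGc.intervalIntegrable _ _)
      (hGc.stronglyMeasurableAtFilter _ _) hGc.continuousAt
  have h2 : G x = g x := by simp [hG, clampR_eq hx]
  rw [← h2]
  have key : ∀ z ∈ Icc 0 a, ∫ y in (0:ℝ)..z, g y = ∫ y in (0:ℝ)..z, G y := by
    intro z hz
    refine intervalIntegral.integral_congr fun y hy => ?_
    rw [uIcc_of_le hz.1] at hy
    simp [hG, clampR_eq (show y ∈ Icc 0 a from ⟨hy.1, hy.2.trans hz.2⟩)]
  exact h1.hasDerivWithinAt.congr key (key x hx)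

/-- Differentiation under the integral sign. -/
lemma leibniz {T : ℝ} (hT : 0 < T) {u ut : ℝ → ℝ → ℝ}
    (hu : ContinuousOn (fun p : ℝ × ℝ => u p.1 p.2) (ClOmegaT T))
    (hut : ContinuousOn (fun p : ℝ × ℝ => ut p.1 p.2) (ClOmegaT T))
    (hd : ∀ p ∈ ClOmegaT T, HasDerivWithinAt (fun τ => u p.1 τ) (ut p.1 p.2) (Icc (0:ℝ) T) p.2)
    {x t : ℝ} (hx : x ∈ Icc (0:ℝ) 1) (ht : t ∈ Icc 0 T) :
    HasDerivWithinAt (fun τ => ∫ y in (0:ℝ)..x, u y τ) (∫ y in (0:ℝ)..x, ut y t)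
      (Icc 0 T) t := by
  have h0 : (0:ℝ) ∈ Icc 0 T := ⟨le_rfl, hT.le⟩
  have key : ∀ τ ∈ Icc 0 T, ∫ y in (0:ℝ)..x, u y τ
      = (∫ y in (0:ℝ)..x, u y 0) + ∫ s in (0:ℝ)..τ, ∫ y in (0:ℝ)..x, ut y s := by
    intro τ hτ
    rw [← swap_contOn hT hut hx hτ, ← intervalIntegral.integral_add]
    · refine intervalIntegral.integral_congr fun y hy => ?_
      rw [uIcc_of_le hx.1] at hy
      have hy' : y ∈ Icc (0:ℝ) 1 := ⟨hy.1, hy.2.trans hx.2⟩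
      rw [ftc_Icc (g := fun s => u y s) (fun s hs => hd (y, s) ⟨hy', hs⟩) (slice_t hut hy') hτ]
      ring
    · exact ii_of_cont (slice_x hu h0) hx
    · have : ContinuousOn (fun y => u y τ - u y 0) (Icc 0 1) := (slice_x hu hτ).sub (slice_x hu h0)
      refine (ii_of_cont this hx).congr ?_
      intro y hy
      rw [uIoc_of_le hx.1] at hy
      have hy' : y ∈ Icc (0:ℝ) 1 := ⟨hy.1.le, hy.2.trans hx.2⟩
      simp only
      rw [ftc_Icc (g := fun s => u y s) (fun s hs => hd (y, s) ⟨hy', hs⟩) (slice_t hut hy') hτ]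
  have hcont : ContinuousOn (fun s => ∫ y in (0:ℝ)..x, ut y s) (Icc 0 T) :=
    slice_t (g := fun x s => ∫ y in (0:ℝ)..x, ut y s) (contOn_primitive hT hut) hx
  exact ((deriv_primitive hcont ht).const_add _).congr key (key t ht)

/-! ### The inverse branches of the flux -/

lemma branch_strictMono {σ sm : ℝ → ℝ} {S : Set ℝ} {A B p q : ℝ} (hσ : StrictMonoOn σ S)
    (hS : Icc p q ⊆ S) (hsm : ∀ r ∈ Icc A B, sm r ∈ Icc p q ∧ σ (sm r) = r) :
    StrictMonoOn sm (Icc A B) := by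
  intro r hr r' hr' hlt
  have h1 := hsm r hr
  have h2 := hsm r' hr'
  rw [← hσ.lt_iff_lt (hS h1.1) (hS h2.1), h1.2, h2.2]
  exact hlt

lemma branch_continuousAt {σ sm : ℝ → ℝ} {S : Set ℝ} {A B p q : ℝ} (hσ : StrictMonoOn σ S)
    (hS : Icc p q ⊆ S) (hp : σ p = A) (hq : σ q = B)
    (hsm : ∀ r ∈ Icc A B, sm r ∈ Icc p q ∧ σ (sm r) = r) {r : ℝ} (hr : r ∈ Ioo A B) :
    ContinuousAt sm r := by
  have hmono := branch_strictMono hσ hS hsm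
  have hrI := Ioo_subset_Icc_self hr
  have h1 := hsm r hrI
  have hpq : p ≤ q := h1.1.1.trans h1.1.2
  have hpS : p ∈ S := hS ⟨le_rfl, hpq⟩
  have hqS : q ∈ S := hS ⟨hpq, le_rfl⟩
  refine continuousAt_of_monotoneOn_of_image_mem_nhds (s := Icc A B) hmono.monotoneOn
    (Icc_mem_nhds hr.1 hr.2) ?_
  have ha : p < sm r := by
    rw [← hσ.lt_iff_lt hpS (hS h1.1), h1.2, hp]; exact hr.1
  have hb : sm r < q := by
    rw [← hσ.lt_iff_lt (hS h1.1) hqS, h1.2, hq]; exact hr.2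
  refine Filter.mem_of_superset (Icc_mem_nhds ha hb) ?_
  intro y hy
  have hyS := hS hy
  have hmem : σ y ∈ Icc A B := by
    rw [← hp, ← hq]
    exact ⟨(hσ.le_iff_le hpS hyS).2 hy.1, (hσ.le_iff_le hyS hqS).2 hy.2⟩
  refine ⟨σ y, hmem, ?_⟩
  have h2 := hsm _ hmem
  exact hσ.injOn (hS h2.1) hyS h2.2

lemma flux_mono_left {α s1 s2 lam Lam : ℝ} {sigma sigma' : ℝ → ℝ}
    (h : FluxHyp α s1 s2 lam Lam sigma sigma') : StrictMonoOn sigma (Iic s1) := by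
  refine strictMonoOn_of_deriv_pos (convex_Iic s1)
    (fun s hs => (h.deriv_left s hs).continuousWithinAt) ?_
  intro x hx
  rw [interior_Iic] at hx
  rw [((h.deriv_left x (mem_Iic.2 (mem_Iio.1 hx).le)).hasDerivAt (Iic_mem_nhds hx)).deriv]
  exact h.deriv_pos x (Or.inl hx)

lemma flux_mono_right {α s1 s2 lam Lam : ℝ} {sigma sigma' : ℝ → ℝ}
    (h : FluxHyp α s1 s2 lam Lam sigma sigma') : StrictMonoOn sigma (Ici s2) := by
  refine strictMonoOn_of_deriv_pos (convex_Ici s2)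
    (fun s hs => (h.deriv_right s hs).continuousWithinAt) ?_
  intro x hx
  rw [interior_Ici] at hx
  rw [((h.deriv_right x (mem_Ici.2 (mem_Ioi.1 hx).le)).hasDerivAt (Ici_mem_nhds hx)).deriv]
  exact h.deriv_pos x (Or.inr hx)

/-! ### The potential operators -/

section Coeff

variable {α T : ℝ} {b bx c f : ℝ → ℝ → ℝ} {d : ℝ → ℝ}

lemma contOn_cbx (hcoeff : CoeffHyp α T b bx c f d) {u : ℝ → ℝ → ℝ}
    (hu : ContinuousOn (fun p : ℝ × ℝ => u p.1 p.2) (ClOmegaT T)) :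
    ContinuousOn (fun p : ℝ × ℝ => (c p.1 p.2 - bx p.1 p.2) * u p.1 p.2) (ClOmegaT T) :=
  (hcoeff.c_cont.sub hcoeff.bx_cont).mul hu

lemma contOn_Pot (hT : 0 < T) (hcoeff : CoeffHyp α T b bx c f d) {u : ℝ → ℝ → ℝ}
    (hu : ContinuousOn (fun p : ℝ × ℝ => u p.1 p.2) (ClOmegaT T)) :
    ContinuousOn (fun p : ℝ × ℝ => Pot c bx u p.1 p.2) (ClOmegaT T) :=
  contOn_primitive hT (g := fun y t => (c y t - bx y t) * u y t) (contOn_cbx hcoeff hu)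

lemma contOn_Fint (hT : 0 < T) (hcoeff : CoeffHyp α T b bx c f d) :
    ContinuousOn (fun p : ℝ × ℝ => Fint f p.1 p.2) (ClOmegaT T) :=
  contOn_primitive hT hcoeff.f_cont

lemma Pot_eq (hcoeff : CoeffHyp α T b bx c f d) {u : ℝ → ℝ → ℝ} {x t : ℝ}
    (hx : x ∈ Icc (0:ℝ) 1) (ht : t ∈ Icc 0 T) :
    Pot c bx u x t = d t * ∫ y in (0:ℝ)..x, u y t := by
  unfold Pot
  rw [← intervalIntegral.integral_const_mul]
  refine intervalIntegral.integral_congr fun y hy => ?_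
  rw [uIcc_of_le hx.1] at hy
  have := hcoeff.c_eq (y, t) ⟨⟨hy.1, hy.2.trans hx.2⟩, ht⟩
  simp only at this ⊢
  rw [this]; ring

lemma contOn_GVal (hT : 0 < T) (hcoeff : CoeffHyp α T b bx c f d) {u vt : ℝ → ℝ → ℝ}
    (hu : ContinuousOn (fun p : ℝ × ℝ => u p.1 p.2) (ClOmegaT T))
    (hvt : ContinuousOn (fun p : ℝ × ℝ => vt p.1 p.2) (ClOmegaT T)) :
    ContinuousOn (fun p : ℝ × ℝ => GVal b c bx f u vt p.1 p.2) (ClOmegaT T) := by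
  unfold GVal
  exact ((hvt.sub (hcoeff.b_cont.mul hu)).sub (contOn_Pot hT hcoeff hu)).sub
    (contOn_Fint hT hcoeff)

/-- `(b u + P_u + F)_x = b u_x + c u + f`. -/
lemma deriv_lower (hcoeff : CoeffHyp α T b bx c f d) {u ux : ℝ → ℝ → ℝ}
    (hu : ContinuousOn (fun p : ℝ × ℝ => u p.1 p.2) (ClOmegaT T))
    (hd : ∀ p ∈ ClOmegaT T, HasDerivWithinAt (fun y => u y p.2) (ux p.1 p.2) (Icc (0:ℝ) 1) p.1)
    {x t : ℝ} (hx : x ∈ Icc (0:ℝ) 1) (ht : t ∈ Icc 0 T) :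
    HasDerivWithinAt (fun y => b y t * u y t + Pot c bx u y t + Fint f y t)
      (b x t * ux x t + c x t * u x t + f x t) (Icc 0 1) x := by
  have h1 : HasDerivWithinAt (fun y => b y t * u y t) (bx x t * u x t + b x t * ux x t)
      (Icc 0 1) x := (hcoeff.b_deriv (x, t) ⟨hx, ht⟩).mul (hd (x, t) ⟨hx, ht⟩)
  have h2 : HasDerivWithinAt (fun y => Pot c bx u y t) ((c x t - bx x t) * u x t) (Icc 0 1) x :=
    deriv_primitive (g := fun y => (c y t - bx y t) * u y t)
      (slice_x (g := fun y t => (c y t - bx y t) * u y t) (contOn_cbx hcoeff hu) ht) hx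
  have h3 : HasDerivWithinAt (fun y => Fint f y t) (f x t) (Icc 0 1) x :=
    deriv_primitive (g := fun y => f y t) (slice_x hcoeff.f_cont ht) hx
  refine ((h1.add h2).add h3).congr_deriv ?_
  ring

variable {sigmat sigmat' : ℝ → ℝ} {u0 u0' u0'' : ℝ → ℝ} {us usx usxx ust : ℝ → ℝ → ℝ}

lemma contOn_VStarT (hT : 0 < T) (hcoeff : CoeffHyp α T b bx c f d)
    (hst : ∀ s, HasDerivAt sigmat (sigmat' s) s)
    (hstar : StarSol α T sigmat sigmat' b bx c f u0 us usx usxx ust) :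
    ContinuousOn (fun p : ℝ × ℝ => VStarT sigmat b bx c f us usx p.1 p.2) (ClOmegaT T) := by
  unfold VStarT
  have hc : Continuous sigmat := continuous_iff_continuousAt.2 fun s => (hst s).continuousAt
  exact (((hc.comp_continuousOn hstar.reg.cont_x).add (hcoeff.b_cont.mul hstar.reg.cont)).add
    (contOn_Pot hT hcoeff hstar.reg.cont)).add (contOn_Fint hT hcoeff)

lemma VStarT_x (hT : 0 < T) (hcoeff : CoeffHyp α T b bx c f d)
    (hst : ∀ s, HasDerivAt sigmat (sigmat' s) s)
    (hstar : StarSol α T sigmat sigmat' b bx c f u0 us usx usxx ust) {x t : ℝ}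
    (hx : x ∈ Icc (0:ℝ) 1) (ht : t ∈ Ioo 0 T) :
    VStarT sigmat b bx c f us usx x t
      = VStarT sigmat b bx c f us usx 0 t + ∫ y in (0:ℝ)..x, ust y t := by
  have htI := Ioo_subset_Icc_self ht
  have := intervalIntegral.integral_eq_sub_of_hasDerivAt_of_le hx.1
    (f := fun y => VStarT sigmat b bx c f us usx y t) (f' := fun y => ust y t)
    ((slice_x (g := VStarT sigmat b bx c f us usx)
      (contOn_VStarT hT hcoeff hst hstar) htI).mono (Icc_subset_Icc_right hx.2)) ?_
    (ii_of_cont (slice_x hstar.reg.cont_t htI) hx)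
  · rw [this]; ring
  · intro y hy
    have hyo : y ∈ Ioo (0:ℝ) 1 := ⟨hy.1, hy.2.trans_le hx.2⟩
    have hyI := Ioo_subset_Icc_self hyo
    have hn : Icc (0:ℝ) 1 ∈ nhds y := Icc_mem_nhds hyo.1 hyo.2
    have h1 := (deriv_lower hcoeff hstar.reg.cont hstar.reg.dx hyI htI).hasDerivAt hn
    have h2 : HasDerivAt (fun y => sigmat (usx y t)) (sigmat' (usx y t) * usxx y t) y :=
      (hst (usx y t)).comp y ((hstar.reg.dxx (y, t) ⟨hyI, htI⟩).hasDerivAt hn)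
    have h3 := h2.add h1
    have hp := hstar.pde (y, t) ⟨hyo, ht⟩
    simp only at hp
    have : ust y t = sigmat' (usx y t) * usxx y t
        + (b y t * usx y t + c y t * us y t + f y t) := by rw [hp]; ring
    rw [this]
    refine h3.congr_of_eventuallyEq (Filter.Eventually.of_forall fun z => ?_)
    simp only [VStarT, Pi.add_apply]; ring

lemma VStar_t (hT : 0 < T) (hcoeff : CoeffHyp α T b bx c f d)
    (hst : ∀ s, HasDerivAt sigmat (sigmat' s) s)
    (hstar : StarSol α T sigmat sigmat' b bx c f u0 us usx usxx ust) {x t : ℝ}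
    (hx : x ∈ Icc (0:ℝ) 1) (ht : t ∈ Icc 0 T) :
    HasDerivWithinAt (fun τ => VStar sigmat b bx c f u0 us usx x τ)
      (VStarT sigmat b bx c f us usx x t) (Icc 0 T) t := by
  have := deriv_primitive (slice_t (g := VStarT sigmat b bx c f us usx)
    (contOn_VStarT hT hcoeff hst hstar) hx) ht
  exact this.add_const _

lemma VStar_x (hT : 0 < T) (hcoeff : CoeffHyp α T b bx c f d)
    (hst : ∀ s, HasDerivAt sigmat (sigmat' s) s)
    (hstar : StarSol α T sigmat sigmat' b bx c f u0 us usx usxx ust) {x t : ℝ}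
    (hx : x ∈ Icc (0:ℝ) 1) (ht : t ∈ Ioo 0 T) :
    VStar sigmat b bx c f u0 us usx x t
      = VStar sigmat b bx c f u0 us usx 0 t + ∫ y in (0:ℝ)..x, us y t := by
  have htI := Ioo_subset_Icc_self ht
  have h0T : (0:ℝ) ∈ Icc 0 T := ⟨le_rfl, hT.le⟩
  have h01 : (0:ℝ) ∈ Icc (0:ℝ) 1 := ⟨le_rfl, zero_le_one⟩
  have e1 : ∫ τ in (0:ℝ)..t, VStarT sigmat b bx c f us usx x τ
      = (∫ τ in (0:ℝ)..t, VStarT sigmat b bx c f us usx 0 τ)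
        + ∫ τ in (0:ℝ)..t, ∫ y in (0:ℝ)..x, ust y τ := by
    rw [← intervalIntegral.integral_add]
    · refine intervalIntegral.integral_congr_ae (Filter.Eventually.of_forall fun τ hτ => ?_)
      rw [uIoc_of_le ht.1.le] at hτ
      exact VStarT_x hT hcoeff hst hstar hx ⟨hτ.1, hτ.2.trans_lt ht.2⟩
    · exact ii_of_cont (slice_t (g := VStarT sigmat b bx c f us usx)
        (contOn_VStarT hT hcoeff hst hstar) h01) htI
    · exact ii_of_cont (slice_t (g := fun x s => ∫ y in (0:ℝ)..x, ust y s)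
        (contOn_primitive hT hstar.reg.cont_t) hx) htI
  have e2 : ∫ τ in (0:ℝ)..t, ∫ y in (0:ℝ)..x, ust y τ
      = (∫ y in (0:ℝ)..x, us y t) - ∫ y in (0:ℝ)..x, u0 y := by
    have hl := ftc_Icc (g := fun τ => ∫ y in (0:ℝ)..x, us y τ)
      (fun s hs => leibniz hT hstar.reg.cont hstar.reg.cont_t hstar.reg.dt hx hs)
      (slice_t (g := fun x s => ∫ y in (0:ℝ)..x, ust y s)
        (contOn_primitive hT hstar.reg.cont_t) hx) htI
    rw [hl]
    congr 1
    refine intervalIntegral.integral_congr fun y hy => ?_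
    rw [uIcc_of_le hx.1] at hy
    exact hstar.ic y ⟨hy.1, hy.2.trans hx.2⟩
  have hdef : ∀ z, VStar sigmat b bx c f u0 us usx z t
    = (∫ τ in (0:ℝ)..t, VStarT sigmat b bx c f us usx z τ) + ∫ y in (0:ℝ)..z, u0 y := fun _ => rfl
  rw [hdef, hdef, e1, e2, intervalIntegral.integral_same]; ring

lemma VStar_dx (hT : 0 < T) (hcoeff : CoeffHyp α T b bx c f d)
    (hst : ∀ s, HasDerivAt sigmat (sigmat' s) s)
    (hstar : StarSol α T sigmat sigmat' b bx c f u0 us usx usxx ust) {x t : ℝ}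
    (hx : x ∈ Icc (0:ℝ) 1) (ht : t ∈ Ioo 0 T) :
    HasDerivWithinAt (fun y => VStar sigmat b bx c f u0 us usx y t) (us x t) (Icc 0 1) x := by
  have := (deriv_primitive (slice_x hstar.reg.cont (Ioo_subset_Icc_self ht)) hx).const_add
    (VStar sigmat b bx c f u0 us usx 0 t)
  exact this.congr (fun y hy => VStar_x hT hcoeff hst hstar hy ht)
    (VStar_x hT hcoeff hst hstar hx ht)

end Coeff

lemma ev_x {S : Set (ℝ × ℝ)} (hS : IsOpen S) {p : ℝ × ℝ} (hp : p ∈ S) :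
    ∀ᶠ y in nhds p.1, (y, p.2) ∈ S :=
  (Continuous.continuousAt (f := fun y : ℝ => (y, p.2)) (by fun_prop)).eventually
    (hS.mem_nhds hp)

lemma ev_t {S : Set (ℝ × ℝ)} (hS : IsOpen S) {p : ℝ × ℝ} (hp : p ∈ S) :
    ∀ᶠ τ in nhds p.2, (p.1, τ) ∈ S :=
  (Continuous.continuousAt (f := fun τ : ℝ => (p.1, τ)) (by fun_prop)).eventually
    (hS.mem_nhds hp)

lemma ux_eq_on {S : Set (ℝ × ℝ)} (hS : IsOpen S) {g h : ℝ → ℝ → ℝ}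
    (heq : ∀ p ∈ S, g p.1 p.2 = h p.1 p.2) {p : ℝ × ℝ} (hp : p ∈ S) {a a' : ℝ}
    (hg : HasDerivAt (fun y => g y p.2) a p.1) (hh : HasDerivAt (fun y => h y p.2) a' p.1) :
    a = a' := by
  refine hg.unique (hh.congr_of_eventuallyEq ?_)
  filter_upwards [ev_x hS hp] with y hy using heq _ hy

lemma ut_eq_on {S : Set (ℝ × ℝ)} (hS : IsOpen S) {g h : ℝ → ℝ → ℝ}
    (heq : ∀ p ∈ S, g p.1 p.2 = h p.1 p.2) {p : ℝ × ℝ} (hp : p ∈ S) {a a' : ℝ}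
    (hg : HasDerivAt (fun τ => g p.1 τ) a p.2) (hh : HasDerivAt (fun τ => h p.1 τ) a' p.2) :
    a = a' := by
  refine hg.unique (hh.congr_of_eventuallyEq ?_)
  filter_upwards [ev_t hS hp] with y hy using heq _ hy

lemma nx {T : ℝ} {p : ℝ × ℝ} (hp : p ∈ OmegaT T) : Icc (0:ℝ) 1 ∈ nhds p.1 :=
  Icc_mem_nhds hp.1.1 hp.1.2

lemma nt {T : ℝ} {p : ℝ × ℝ} (hp : p ∈ OmegaT T) : Icc (0:ℝ) T ∈ nhds p.2 :=
  Icc_mem_nhds hp.2.1 hp.2.2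

/-- Consequences of admissibility. -/
structure Good (T r1 r2 ε : ℝ) (sm sp sigmat : ℝ → ℝ) (b bx c f : ℝ → ℝ → ℝ) (u0 : ℝ → ℝ)
    (us usx ust : ℝ → ℝ → ℝ) (E : Set (ℝ × ℝ)) (W : PairData) : Prop where
  c21 : C21 T W.u W.ux W.uxx W.ut
  c31 : C31 T W.v W.vx W.vxx W.vxxx W.vt
  off_u : ∀ p ∈ OmegaT T, p ∉ E → W.u p.1 p.2 = us p.1 p.2
  off_ux : ∀ p ∈ OmegaT T, p ∉ E → W.ux p.1 p.2 = usx p.1 p.2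
  off_G : ∀ p ∈ OmegaT T, p ∉ E → GVal b c bx f W.u W.vt p.1 p.2 = sigmat (usx p.1 p.2)
  inE : ∀ p ∈ E, (W.ux p.1 p.2, GVal b c bx f W.u W.vt p.1 p.2) ∈ Uprime sm sp r1 r2
  vx_eq : ∀ p ∈ OmegaT T, W.vx p.1 p.2 = W.u p.1 p.2
  bdry0 : ∀ t ∈ Icc 0 T, GVal b c bx f W.u W.vt 0 t = 0
  bdry1 : ∀ t ∈ Icc 0 T, GVal b c bx f W.u W.vt 1 t = 0
  init : ∀ x ∈ Icc (0:ℝ) 1, W.u x 0 = u0 x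
  u_close : ∀ p ∈ OmegaT T, |W.u p.1 p.2 - us p.1 p.2| ≤ ε / 2
  ut_close : ∀ p ∈ OmegaT T, |W.ut p.1 p.2 - ust p.1 p.2| ≤ ε / 2

section

variable {α T r1 r2 mstar ε GammaStar : ℝ} {sigma sm sp sigmat sigmat' : ℝ → ℝ}
    {b bx c f : ℝ → ℝ → ℝ} {d : ℝ → ℝ} {u0 : ℝ → ℝ}
    {us usx usxx ust : ℝ → ℝ → ℝ} {E : Set (ℝ × ℝ)}

lemma good_of_adm (hT : 0 < T) (hcoeff : CoeffHyp α T b bx c f d)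
    (hst : ∀ s, HasDerivAt sigmat (sigmat' s) s) (hs0 : sigmat 0 = 0)
    (hstar : StarSol α T sigmat sigmat' b bx c f u0 us usx usxx ust)
    (hE : E ⊆ OmegaT T) {W : PairData}
    (hW : InAdmissible T r1 r2 mstar ε GammaStar sigma sm sp b bx c f
        us ust (VStar sigmat b bx c f u0 us usx) E W) :
    Good T r1 r2 ε sm sp sigmat b bx c f u0 us usx ust E W := by
  obtain ⟨h21, h31, ⟨O, hO, hOE, hOc, hOf, hOeq, hOP⟩, hes1, hes2, hgrad, hgam⟩ := hW
  have hopen : IsOpen (OmegaT T \ closure O) := (isOpen_OmegaT T).sdiff isClosed_closure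
  have hoffE : ∀ p ∈ OmegaT T, p ∉ E → p ∈ OmegaT T \ closure O :=
    fun p hp hpE => ⟨hp, fun h => hpE (hOE h)⟩
  have hvt : ∀ p ∈ OmegaT T \ closure O,
      W.vt p.1 p.2 = VStarT sigmat b bx c f us usx p.1 p.2 := by
    intro p hp
    have hpC := OmegaT_subset T hp.1
    exact ut_eq_on hopen (fun q hq => (hOeq q hq).2) hp
      ((h31.dt p hpC).hasDerivAt (nt hp.1))
      ((VStar_t hT hcoeff hst hstar hpC.1 hpC.2).hasDerivAt (nt hp.1))
  have hG : ∀ p ∈ OmegaT T \ closure O,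
      GVal b c bx f W.u W.vt p.1 p.2 = sigmat (usx p.1 p.2) := by
    intro p hp
    unfold GVal
    rw [hvt p hp, (hOeq p hp).1, hOP p hp]
    unfold VStarT; ring
  have hsc : Continuous sigmat := continuous_iff_continuousAt.2 fun s => (hst s).continuousAt
  have hGcl := eq_of_eq_off hT (g := fun p => GVal b c bx f W.u W.vt p.1 p.2)
    (h := fun p => sigmat (usx p.1 p.2)) (contOn_GVal hT hcoeff h21.cont h31.cont_t)
    (hsc.comp_continuousOn hstar.reg.cont_x) hG
  have hucl := eq_of_eq_off hT (g := fun p => W.u p.1 p.2)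
    (h := fun p => us p.1 p.2) h21.cont hstar.reg.cont (fun p hp => (hOeq p hp).1)
  refine ⟨h21, h31, ?_, ?_, ?_, ?_, ?_, ?_, ?_, ?_, ?_, ?_⟩
  · exact fun p hp hpE => (hOeq p (hoffE p hp hpE)).1
  · intro p hp hpE
    have hpC := OmegaT_subset T hp
    exact ux_eq_on hopen (fun q hq => (hOeq q hq).1) (hoffE p hp hpE)
      ((h21.dx p hpC).hasDerivAt (nx hp)) ((hstar.reg.dx p hpC).hasDerivAt (nx hp))
  · exact fun p hp hpE => hG p (hoffE p hp hpE)
  · exact fun p hp => (hgrad p hp).2.2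
  · intro p hp
    by_cases hpE : p ∈ E
    · exact (hgrad p hpE).1
    · have hpC := OmegaT_subset T hp
      rw [(hOeq p (hoffE p hp hpE)).1]
      exact ux_eq_on hopen (fun q hq => (hOeq q hq).2) (hoffE p hp hpE)
        ((h31.dx p hpC).hasDerivAt (nx hp))
        ((VStar_dx hT hcoeff hst hstar hpC.1 hp.2).hasDerivAt (nx hp))
  · intro t ht
    have h1 := hGcl (0, t) ⟨⟨⟨le_rfl, zero_le_one⟩, ht⟩, fun h => by
      have := (hE (hOE h)).1.1; simp at this⟩
    simp only at h1
    rw [h1, (hstar.bc t ht).1, hs0]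
  · intro t ht
    have h1 := hGcl (1, t) ⟨⟨⟨zero_le_one, le_rfl⟩, ht⟩, fun h => by
      have := (hE (hOE h)).1.2; simp at this⟩
    simp only at h1
    rw [h1, (hstar.bc t ht).2, hs0]
  · intro x hx
    have h1 := hucl (x, 0) ⟨⟨hx, ⟨le_rfl, hT.le⟩⟩, fun h => by
      have := (hE (hOE h)).2.1; simp at this⟩
    simp only at h1
    rw [h1, hstar.ic x hx]
  · exact fun p hp => (le_EssSupAbs (g := fun x t => W.u x t - us x t)
      (h21.cont.sub hstar.reg.cont) p hp).trans hes1.le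
  · exact fun p hp => (le_EssSupAbs (g := fun x t => W.ut x t - ust x t)
      (h21.cont_t.sub hstar.reg.cont_t) p hp).trans hes2.le

/-- `G_x = u_t - (b u_x + c u + f)` for admissible pairs. -/
lemma good_deriv_G (hT : 0 < T) (hcoeff : CoeffHyp α T b bx c f d) {W : PairData}
    (hW : Good T r1 r2 ε sm sp sigmat b bx c f u0 us usx ust E W) {x t : ℝ}
    (hx : x ∈ Icc (0:ℝ) 1) (ht : t ∈ Icc 0 T) :
    HasDerivWithinAt (fun y => GVal b c bx f W.u W.vt y t)
      (W.ut x t - (b x t * W.ux x t + c x t * W.u x t + f x t)) (Icc 0 1) x := by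
  have h01 : (0:ℝ) ∈ Icc (0:ℝ) 1 := ⟨le_rfl, zero_le_one⟩
  have hvx : ∀ p ∈ ClOmegaT T, W.vx p.1 p.2 = W.u p.1 p.2 := by
    intro p hp
    have := eq_of_eq_off hT (O := ∅) (g := fun p => W.vx p.1 p.2) (h := fun p => W.u p.1 p.2)
      hW.c31.cont_x hW.c21.cont (fun p hp => hW.vx_eq p hp.1) p
    simp only [closure_empty, sdiff_empty] at this
    exact this hp
  have hv : ∀ y ∈ Icc (0:ℝ) 1, ∀ τ ∈ Icc 0 T,
      W.v y τ = W.v 0 τ + ∫ z in (0:ℝ)..y, W.u z τ := by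
    intro y hy τ hτ
    have := ftc_Icc (g := fun y => W.v y τ) (g' := fun y => W.u y τ) (a := 1) ?_
      (slice_x hW.c21.cont hτ) hy
    · rw [this]; ring
    · intro z hz
      have h := hW.c31.dx (z, τ) ⟨hz, hτ⟩
      have h' := hvx (z, τ) ⟨hz, hτ⟩
      simp only at h h'
      rwa [h'] at h
  have hvt : ∀ y ∈ Icc (0:ℝ) 1, W.vt y t = W.vt 0 t + ∫ z in (0:ℝ)..y, W.ut z t := by
    intro y hy
    have h1 : HasDerivWithinAt (fun τ => W.v y τ) (W.vt y t) (Icc 0 T) t :=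
      hW.c31.dt (y, t) ⟨hy, ht⟩
    have h2 : HasDerivWithinAt (fun τ => W.v 0 τ + ∫ z in (0:ℝ)..y, W.u z τ)
        (W.vt 0 t + ∫ z in (0:ℝ)..y, W.ut z t) (Icc 0 T) t :=
      (hW.c31.dt (0, t) ⟨h01, ht⟩).add
        (leibniz hT hW.c21.cont hW.c21.cont_t hW.c21.dt hy ht)
    have h3 := h2.congr (fun τ hτ => hv y hy τ hτ) (hv y hy t ht)
    exact (uniqueDiffOn_Icc hT t ht).eq_deriv _ h1 h3
  have h1 : HasDerivWithinAt (fun y => W.vt y t) (W.ut x t) (Icc 0 1) x :=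
    ((deriv_primitive (slice_x hW.c21.cont_t ht) hx).const_add (W.vt 0 t)).congr hvt (hvt x hx)
  have h2 := h1.sub (deriv_lower hcoeff hW.c21.cont hW.c21.dx hx ht)
  refine h2.congr (fun y _ => ?_) ?_ <;> simp only [GVal, Pi.sub_apply] <;> ring

/-- weak form for admissible pairs -/
lemma good_weak (hT : 0 < T) (hcoeff : CoeffHyp α T b bx c f d) {W : PairData}
    (hW : Good T r1 r2 ε sm sp sigmat b bx c f u0 us usx ust E W)
    {ζ : ℝ → ℝ → ℝ} (hζ : ContDiff ℝ (⊤ : ℕ∞) (fun p : ℝ × ℝ => ζ p.1 p.2)) {s : ℝ}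
    (hs : s ∈ Icc 0 T) :
    (∫ t in (0:ℝ)..s, ∫ x in (0:ℝ)..1,
        (W.u x t * deriv (fun τ => ζ x τ) t
          - GVal b c bx f W.u W.vt x t * deriv (fun y => ζ y t) x
          + (b x t * W.ux x t + c x t * W.u x t + f x t) * ζ x t))
      = ∫ x in (0:ℝ)..1, (W.u x s * ζ x s - u0 x * ζ x 0) := by
  have h0T : (0:ℝ) ∈ Icc 0 T := ⟨le_rfl, hT.le⟩
  have h11 : (1:ℝ) ∈ Icc (0:ℝ) 1 := ⟨zero_le_one, le_rfl⟩
  have hζd : ∀ p : ℝ × ℝ, HasFDerivAt (fun p : ℝ × ℝ => ζ p.1 p.2)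
      (fderiv ℝ (fun p : ℝ × ℝ => ζ p.1 p.2) p) p := fun p =>
    ((hζ.differentiable (by simp)) p).hasFDerivAt
  set D : ℝ × ℝ → (ℝ × ℝ →L[ℝ] ℝ) := fderiv ℝ (fun p : ℝ × ℝ => ζ p.1 p.2) with hD
  have hDc : Continuous D := hζ.continuous_fderiv (by simp)
  have hζx : ∀ x t, HasDerivAt (fun y => ζ y t) (D (x, t) (1, 0)) x := by
    intro x t
    have h2 : HasDerivAt (fun y : ℝ => (y, t)) ((1:ℝ), (0:ℝ)) x :=
      (hasDerivAt_id x).prodMk (hasDerivAt_const x t)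
    exact (hζd (x, t)).comp_hasDerivAt x h2
  have hζt : ∀ x t, HasDerivAt (fun τ => ζ x τ) (D (x, t) (0, 1)) t := by
    intro x t
    have h2 : HasDerivAt (fun τ : ℝ => (x, τ)) ((0:ℝ), (1:ℝ)) t :=
      (hasDerivAt_const t x).prodMk (hasDerivAt_id t)
    exact (hζd (x, t)).comp_hasDerivAt t h2
  have hζc : Continuous (fun p : ℝ × ℝ => ζ p.1 p.2) := hζ.continuous
  have hGc := contOn_GVal hT hcoeff hW.c21.cont hW.c31.cont_t
  have inner : ∀ t ∈ Icc 0 T, ∫ x in (0:ℝ)..1,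
        (W.u x t * deriv (fun τ => ζ x τ) t
          - GVal b c bx f W.u W.vt x t * deriv (fun y => ζ y t) x
          + (b x t * W.ux x t + c x t * W.u x t + f x t) * ζ x t)
      = ∫ x in (0:ℝ)..1, (W.ut x t * ζ x t + W.u x t * D (x, t) (0, 1)) := by
    intro t ht
    have sl : ∀ {g : ℝ → ℝ → ℝ}, ContinuousOn (fun p : ℝ × ℝ => g p.1 p.2) (ClOmegaT T) →
      ContinuousOn (fun x => g x t) (Icc 0 1) := fun hg => slice_x hg ht
    have cu := sl hW.c21.cont
    have cux := sl hW.c21.cont_x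
    have cut := sl hW.c21.cont_t
    have cG := sl (g := fun x t => GVal b c bx f W.u W.vt x t) hGc
    have cb := sl hcoeff.b_cont
    have cc := sl hcoeff.c_cont
    have cf := sl hcoeff.f_cont
    have cζ : ContinuousOn (fun x => ζ x t) (Icc 0 1) := sl hζc.continuousOn
    have cDx : ContinuousOn (fun x => D (x, t) (1, 0)) (Icc 0 1) :=
      sl (g := fun x t => D (x, t) (1, 0)) (hDc.clm_apply continuous_const).continuousOn
    have cDt : ContinuousOn (fun x => D (x, t) (0, 1)) (Icc 0 1) :=
      sl (g := fun x t => D (x, t) (0, 1)) (hDc.clm_apply continuous_const).continuousOn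
    have hibp := ftc_Icc (a := 1) (g := fun x => GVal b c bx f W.u W.vt x t * ζ x t)
      (g' := fun x => (W.ut x t - (b x t * W.ux x t + c x t * W.u x t + f x t)) * ζ x t
        + GVal b c bx f W.u W.vt x t * D (x, t) (1, 0))
      (fun x hx => (good_deriv_G hT hcoeff hW hx ht).mul (hζx x t).hasDerivWithinAt)
      (by fun_prop) h11
    simp only [hW.bdry0 t ht, hW.bdry1 t ht, zero_mul, sub_zero] at hibp
    refine ((add_zero _).symm.trans (congrArg (_ + ·) hibp.symm)).trans ?_
    rw [← intervalIntegral.integral_add]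
    · refine intervalIntegral.integral_congr fun x _ => ?_
      simp only [(hζx x t).deriv, (hζt x t).deriv]
      ring
    · simp only [(hζx _ t).deriv, (hζt _ t).deriv]
      exact ii_of_cont (a := 1) (by fun_prop) h11
    · exact ii_of_cont (a := 1) (by fun_prop) h11
  have hcont : ContinuousOn (fun p : ℝ × ℝ => W.ut p.1 p.2 * ζ p.1 p.2
      + W.u p.1 p.2 * D (p.1, p.2) (0, 1)) (ClOmegaT T) :=
    (hW.c21.cont_t.mul hζc.continuousOn).add
      (hW.c21.cont.mul (hDc.clm_apply continuous_const).continuousOn)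
  have e1 : (∫ t in (0:ℝ)..s, ∫ x in (0:ℝ)..1,
        (W.u x t * deriv (fun τ => ζ x τ) t
          - GVal b c bx f W.u W.vt x t * deriv (fun y => ζ y t) x
          + (b x t * W.ux x t + c x t * W.u x t + f x t) * ζ x t))
      = ∫ t in (0:ℝ)..s, ∫ x in (0:ℝ)..1, (W.ut x t * ζ x t + W.u x t * D (x, t) (0, 1)) := by
    refine intervalIntegral.integral_congr fun t ht => ?_
    rw [uIcc_of_le hs.1] at ht
    exact inner t ⟨ht.1, ht.2.trans hs.2⟩
  rw [e1, ← swap_contOn hT (g := fun x t => W.ut x t * ζ x t + W.u x t * D (x, t) (0, 1))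
    hcont h11 hs]
  refine intervalIntegral.integral_congr fun x hx => ?_
  rw [uIcc_of_le zero_le_one] at hx
  rw [ftc_Icc (a := T) (g := fun t => W.u x t * ζ x t)
    (fun t ht => (hW.c21.dt (x, t) ⟨hx, ht⟩).mul (hζt x t).hasDerivWithinAt)
    (slice_t (g := fun x t => W.ut x t * ζ x t + W.u x t * D (x, t) (0, 1)) hcont hx) hs,
    hW.init x hx]

end

/-! ### Riemann-Lebesgue -/

lemma RL {g : ℝ × ℝ → ℝ} (hg : Integrable g) {a : ℕ → ℝ}
    (ha : Filter.Tendsto a Filter.atTop Filter.atTop) :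
    Filter.Tendsto (fun n => ∫ p, g p * Real.cos (a n * p.1)) Filter.atTop (nhds 0) := by
  have h := tendsto_integral_exp_smul_cocompact (V := ℝ × ℝ) (E := ℂ) (fun p => (g p : ℂ)) volume
  set L : ℕ → StrongDual ℝ (ℝ × ℝ) := fun n =>
    (a n / (2 * Real.pi)) • ContinuousLinearMap.fst ℝ ℝ ℝ with hL
  have hLt : Filter.Tendsto L Filter.atTop (Filter.cocompact _) := by
    rw [← Metric.cobounded_eq_cocompact, ← tendsto_norm_atTop_iff_cobounded]
    have hn : ∀ n, ‖L n‖ = |a n / (2 * Real.pi)| * ‖ContinuousLinearMap.fst ℝ ℝ ℝ‖ := by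
      intro n; rw [hL]; simp only [norm_smul, Real.norm_eq_abs]
    simp only [hn]
    have hpos : 0 < ‖ContinuousLinearMap.fst ℝ ℝ ℝ‖ := by
      rw [norm_pos_iff]; intro h0
      have := congrArg (fun l => l ((1:ℝ), (0:ℝ))) h0
      simp at this
    refine Filter.Tendsto.atTop_mul_const hpos ?_
    exact Filter.tendsto_abs_atTop_atTop.comp (ha.atTop_div_const (by positivity))
  have h2 := h.comp hLt
  have h3 := (Complex.continuous_re.tendsto 0).comp h2
  simp only [Complex.zero_re] at h3
  refine h3.congr fun n => ?_
  simp only [Function.comp]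
  have hIntg : Integrable (fun v : ℝ × ℝ => Real.fourierChar (-(L n) v) • (g v : ℂ)) := by
    refine Integrable.mono' (g := fun v => ‖g v‖) hg.norm ?_
      (Filter.Eventually.of_forall fun v => ?_)
    · have h1 : Continuous (fun v : ℝ × ℝ => ((Real.fourierChar (-(L n) v) : Circle) : ℂ)) :=
        continuous_subtype_val.comp (Real.continuous_fourierChar.comp (by fun_prop))
      exact h1.aestronglyMeasurable.smul hg.ofReal.aestronglyMeasurable
    · rw [Circle.smul_def, norm_smul, Circle.norm_coe, one_mul, Complex.norm_real]
  have := integral_re hIntg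
  simp only [RCLike.re_to_complex] at this
  rw [← this]
  refine integral_congr_ae (Filter.Eventually.of_forall fun p => ?_)
  simp only [Circle.smul_def, Real.fourierChar_apply, smul_eq_mul, Complex.re_mul_ofReal,
    Complex.exp_ofReal_mul_I_re, hL]
  rw [mul_comm]
  congr 1
  simp only [smul_apply, ContinuousLinearMap.coe_fst', smul_eq_mul, mul_neg,
    Real.cos_neg]
  congr 1
  field_simp

/-! ### Bump functions -/

/-- directional derivative -/
def dD (e : ℝ × ℝ) (g : ℝ × ℝ → ℝ) (p : ℝ × ℝ) : ℝ := fderiv ℝ g p e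

lemma dD_smooth (e : ℝ × ℝ) {g : ℝ × ℝ → ℝ} (hg : ContDiff ℝ (⊤ : ℕ∞) g) :
    ContDiff ℝ (⊤ : ℕ∞) (dD e g) := by
  have h := hg.fderiv_right (m := (⊤ : ℕ∞)) (by simp)
  exact h.clm_apply contDiff_const

lemma dD_x {g : ℝ × ℝ → ℝ} (hg : ContDiff ℝ (⊤ : ℕ∞) g) (p : ℝ × ℝ) :
    HasDerivAt (fun y => g (y, p.2)) (dD (1, 0) g p) p.1 := by
  have h1 : HasFDerivAt g (fderiv ℝ g p) (p.1, p.2) :=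
    (hg.differentiable (by simp) p).hasFDerivAt
  exact h1.comp_hasDerivAt p.1 (f := fun y : ℝ => (y, p.2))
    ((hasDerivAt_id p.1).prodMk (hasDerivAt_const p.1 p.2))

lemma dD_t {g : ℝ × ℝ → ℝ} (hg : ContDiff ℝ (⊤ : ℕ∞) g) (p : ℝ × ℝ) :
    HasDerivAt (fun τ => g (p.1, τ)) (dD (0, 1) g p) p.2 := by
  have h1 : HasFDerivAt g (fderiv ℝ g p) (p.1, p.2) :=
    (hg.differentiable (by simp) p).hasFDerivAt
  exact h1.comp_hasDerivAt p.2 (f := fun τ : ℝ => (p.1, τ))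
    ((hasDerivAt_const p.2 p.1).prodMk (hasDerivAt_id p.2))

lemma dD_off (e : ℝ × ℝ) {g : ℝ × ℝ → ℝ} {S : Set (ℝ × ℝ)} (hS : IsClosed S)
    (h0 : ∀ p, p ∉ S → g p = 0) : ∀ p, p ∉ S → dD e g p = 0 := by
  intro p hp
  have : g =ᶠ[nhds p] fun _ => 0 := by
    filter_upwards [hS.isOpen_compl.mem_nhds hp] with q hq using h0 q hq
  unfold dD
  rw [this.fderiv_eq]; simp

lemma bdd_off {g : ℝ × ℝ → ℝ} {S : Set (ℝ × ℝ)} (hS : IsCompact S) (hg : Continuous g)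
    (h0 : ∀ p, p ∉ S → g p = 0) : ∃ M, 0 ≤ M ∧ ∀ p, |g p| ≤ M := by
  obtain ⟨M, hM⟩ := hS.exists_bound_of_continuousOn hg.continuousOn
  refine ⟨max M 0, le_max_right _ _, fun p => ?_⟩
  by_cases hp : p ∈ S
  · exact (hM p hp).trans (le_max_left _ _)
  · rw [h0 p hp, abs_zero]; exact le_max_right _ _

/-- A cut-off with all derivative data. -/
structure Bump (χ χ1 χ2 χ3 χt χmt : ℝ × ℝ → ℝ) (S : Set (ℝ × ℝ)) (M : ℝ) : Prop where
  d1 : ∀ p : ℝ × ℝ, HasDerivAt (fun y => χ (y, p.2)) (χ1 p) p.1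
  d2 : ∀ p : ℝ × ℝ, HasDerivAt (fun y => χ1 (y, p.2)) (χ2 p) p.1
  d3 : ∀ p : ℝ × ℝ, HasDerivAt (fun y => χ2 (y, p.2)) (χ3 p) p.1
  dt : ∀ p : ℝ × ℝ, HasDerivAt (fun τ => χ (p.1, τ)) (χt p) p.2
  d1t : ∀ p : ℝ × ℝ, HasDerivAt (fun τ => χ1 (p.1, τ)) (χmt p) p.2
  c0 : Continuous χ
  c1 : Continuous χ1
  c2 : Continuous χ2
  c3 : Continuous χ3
  ct : Continuous χt
  c1t : Continuous χmt
  Scomp : IsCompact S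
  z0 : ∀ p, p ∉ S → χ p = 0
  z1 : ∀ p, p ∉ S → χ1 p = 0
  z2 : ∀ p, p ∉ S → χ2 p = 0
  z3 : ∀ p, p ∉ S → χ3 p = 0
  zt : ∀ p, p ∉ S → χt p = 0
  z1t : ∀ p, p ∉ S → χmt p = 0
  Mpos : 0 ≤ M
  b0 : ∀ p, |χ p| ≤ M
  b1 : ∀ p, |χ1 p| ≤ M
  b2 : ∀ p, |χ2 p| ≤ M
  bt : ∀ p, |χt p| ≤ M
  b1t : ∀ p, |χmt p| ≤ M

lemma exists_bump {A K : Set (ℝ × ℝ)} (hA : IsOpen A) (hK : IsCompact K) (hKA : K ⊆ A) {τ : ℝ}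
    (hτ : 0 < τ) : ∃ (χ χ1 χ2 χ3 χt χmt : ℝ × ℝ → ℝ) (S : Set (ℝ × ℝ)) (M : ℝ),
      Bump χ χ1 χ2 χ3 χt χmt S M ∧ S ⊆ A ∧ (∀ p, 0 ≤ χ p) ∧ (∀ p, χ p ≤ τ) ∧ (∀ p ∈ K, χ p = τ) := by
  obtain ⟨s, hs, hKs, hsA, hsc⟩ := exists_open_between_and_isCompact_closure hK hA hKA
  obtain ⟨g, hg, hr, hsup, hone⟩ := exists_contMDiff_support_eq_eq_one_iff
    (modelWithCornersSelf ℝ (ℝ × ℝ)) (n := (⊤ : ℕ∞)) hs hK.isClosed hKs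
  have hg' : ContDiff ℝ (⊤ : ℕ∞) g := hg.contDiff
  set χ : ℝ × ℝ → ℝ := fun p => τ * g p with hχ
  have hχs : ContDiff ℝ (⊤ : ℕ∞) χ := contDiff_const.mul hg'
  have h01 : ∀ p, 0 ≤ g p ∧ g p ≤ 1 := fun p => hr ⟨p, rfl⟩
  have hz : ∀ p, p ∉ closure s → χ p = 0 := by
    intro p hp
    have : p ∉ Function.support g := by rw [hsup]; exact fun h => hp (subset_closure h)
    simp only [Function.mem_support, not_not] at this
    simp [hχ, this]
  have hcl : IsClosed (closure s) := isClosed_closure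
  have s1 := dD_smooth (1, 0) hχs
  have s2 := dD_smooth (1, 0) s1
  have s3 := dD_smooth (1, 0) s2
  have st := dD_smooth (0, 1) hχs
  have s1t := dD_smooth (0, 1) s1
  have z1 := dD_off (1, 0) hcl hz
  have z2 := dD_off (1, 0) hcl z1
  have z3 := dD_off (1, 0) hcl z2
  have zt := dD_off (0, 1) hcl hz
  have z1t := dD_off (0, 1) hcl z1
  obtain ⟨M0, p0, hM0⟩ := bdd_off hsc hχs.continuous hz
  obtain ⟨M1, p1, hM1⟩ := bdd_off hsc s1.continuous z1
  obtain ⟨M2, p2, hM2⟩ := bdd_off hsc s2.continuous z2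
  obtain ⟨Mt, pt, hMt⟩ := bdd_off hsc st.continuous zt
  obtain ⟨M1t, p1t, hM1t⟩ := bdd_off hsc s1t.continuous z1t
  refine ⟨χ, _, _, _, _, _, closure s, M0 + M1 + M2 + Mt + M1t,
    ⟨dD_x hχs, dD_x s1, dD_x s2, dD_t hχs, dD_t s1, hχs.continuous, s1.continuous, s2.continuous,
      s3.continuous, st.continuous, s1t.continuous, hsc, hz, z1, z2, z3, zt, z1t, by positivity,
      fun p => ?_, fun p => ?_, fun p => ?_, fun p => ?_, fun p => ?_⟩, hsA, fun p => ?_, fun p => ?_,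
      fun p hp => ?_⟩
  · linarith [hM0 p]
  · linarith [hM1 p]
  · linarith [hM2 p]
  · linarith [hMt p]
  · linarith [hM1t p]
  · exact mul_nonneg hτ.le (h01 p).1
  · simp only [hχ]; nlinarith [(h01 p).2]
  · simp only [hχ, (hone p).1 hp, mul_one]

/-- perturbation data -/
def pert (W : PairData) (χ χ1 χ2 χ3 χt χmt : ℝ × ℝ → ℝ) (k : ℝ) : PairData where
  u x t := W.u x t + (k⁻¹ ^ 2 * χ1 (x, t) * Real.cos (k * x) - k⁻¹ * χ (x, t) * Real.sin (k * x))
  ux x t := W.ux x t + (k⁻¹ ^ 2 * χ2 (x, t) * Real.cos (k * x)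
    - 2 * k⁻¹ * χ1 (x, t) * Real.sin (k * x) - χ (x, t) * Real.cos (k * x))
  uxx x t := W.uxx x t + (k⁻¹ ^ 2 * χ3 (x, t) * Real.cos (k * x)
    - 3 * k⁻¹ * χ2 (x, t) * Real.sin (k * x) - 3 * χ1 (x, t) * Real.cos (k * x)
    + k * χ (x, t) * Real.sin (k * x))
  ut x t := W.ut x t + (k⁻¹ ^ 2 * χmt (x, t) * Real.cos (k * x)
    - k⁻¹ * χt (x, t) * Real.sin (k * x))
  v x t := W.v x t + k⁻¹ ^ 2 * χ (x, t) * Real.cos (k * x)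
  vx x t := W.vx x t + (k⁻¹ ^ 2 * χ1 (x, t) * Real.cos (k * x)
    - k⁻¹ * χ (x, t) * Real.sin (k * x))
  vxx x t := W.vxx x t + (k⁻¹ ^ 2 * χ2 (x, t) * Real.cos (k * x)
    - 2 * k⁻¹ * χ1 (x, t) * Real.sin (k * x) - χ (x, t) * Real.cos (k * x))
  vxxx x t := W.vxxx x t + (k⁻¹ ^ 2 * χ3 (x, t) * Real.cos (k * x)
    - 3 * k⁻¹ * χ2 (x, t) * Real.sin (k * x) - 3 * χ1 (x, t) * Real.cos (k * x)
    + k * χ (x, t) * Real.sin (k * x))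
  vt x t := W.vt x t + k⁻¹ ^ 2 * χt (x, t) * Real.cos (k * x)

section
variable {W : PairData} {χ χ1 χ2 χ3 χt χmt : ℝ × ℝ → ℝ} {S : Set (ℝ × ℝ)} {M : ℝ} {k : ℝ}

lemma dcos (k x : ℝ) : HasDerivAt (fun y => Real.cos (k * y)) (-(k * Real.sin (k * x))) x := by
  have := ((hasDerivAt_id x).const_mul k).cos
  simp only [id, mul_one] at this
  convert this using 1; ring

lemma dsin (k x : ℝ) : HasDerivAt (fun y => Real.sin (k * y)) (k * Real.cos (k * x)) x := by
  have := ((hasDerivAt_id x).const_mul k).sin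
  simp only [id, mul_one] at this
  convert this using 1; ring

lemma pd1 (hB : Bump χ χ1 χ2 χ3 χt χmt S M) (hk : k ≠ 0) (p : ℝ × ℝ) :
    HasDerivAt (fun x => k⁻¹ ^ 2 * χ (x, p.2) * Real.cos (k * x))
      (k⁻¹ ^ 2 * χ1 p * Real.cos (k * p.1) - k⁻¹ * χ p * Real.sin (k * p.1)) p.1 := by
  have := ((hB.d1 p).const_mul (k⁻¹ ^ 2)).mul (dcos k p.1)
  refine HasDerivAt.congr_deriv this ?_
  simp only [Prod.mk.eta]
  field_simp
  ring

lemma pd2 (hB : Bump χ χ1 χ2 χ3 χt χmt S M) (hk : k ≠ 0) (p : ℝ × ℝ) :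
    HasDerivAt (fun x => k⁻¹ ^ 2 * χ1 (x, p.2) * Real.cos (k * x)
      - k⁻¹ * χ (x, p.2) * Real.sin (k * x))
      (k⁻¹ ^ 2 * χ2 p * Real.cos (k * p.1)
    - 2 * k⁻¹ * χ1 p * Real.sin (k * p.1) - χ p * Real.cos (k * p.1)) p.1 := by
  have := (((hB.d2 p).const_mul (k⁻¹ ^ 2)).mul (dcos k p.1)).sub
    (((hB.d1 p).const_mul (k⁻¹)).mul (dsin k p.1))
  refine HasDerivAt.congr_deriv this ?_
  simp only [Prod.mk.eta]
  field_simp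
  ring

lemma pd3 (hB : Bump χ χ1 χ2 χ3 χt χmt S M) (hk : k ≠ 0) (p : ℝ × ℝ) :
    HasDerivAt (fun x => k⁻¹ ^ 2 * χ2 (x, p.2) * Real.cos (k * x)
    - 2 * k⁻¹ * χ1 (x, p.2) * Real.sin (k * x) - χ (x, p.2) * Real.cos (k * x))
    (k⁻¹ ^ 2 * χ3 p * Real.cos (k * p.1)
    - 3 * k⁻¹ * χ2 p * Real.sin (k * p.1) - 3 * χ1 p * Real.cos (k * p.1)
    + k * χ p * Real.sin (k * p.1)) p.1 := by
  have := ((((hB.d3 p).const_mul (k⁻¹ ^ 2)).mul (dcos k p.1)).sub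
    (((hB.d2 p).const_mul (2 * k⁻¹)).mul (dsin k p.1))).sub ((hB.d1 p).mul (dcos k p.1))
  refine HasDerivAt.congr_deriv this ?_
  simp only [Prod.mk.eta]
  field_simp
  ring

lemma pdt (hB : Bump χ χ1 χ2 χ3 χt χmt S M) (k : ℝ) (p : ℝ × ℝ) :
    HasDerivAt (fun t => k⁻¹ ^ 2 * χ (p.1, t) * Real.cos (k * p.1))
    (k⁻¹ ^ 2 * χt p * Real.cos (k * p.1)) p.2 :=
  ((hB.dt p).const_mul (k⁻¹ ^ 2)).mul_const _

lemma pd1t (hB : Bump χ χ1 χ2 χ3 χt χmt S M) (k : ℝ) (p : ℝ × ℝ) :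
    HasDerivAt (fun t => k⁻¹ ^ 2 * χ1 (p.1, t) * Real.cos (k * p.1)
      - k⁻¹ * χ (p.1, t) * Real.sin (k * p.1))
    (k⁻¹ ^ 2 * χmt p * Real.cos (k * p.1) - k⁻¹ * χt p * Real.sin (k * p.1)) p.2 :=
  (((hB.d1t p).const_mul (k⁻¹ ^ 2)).mul_const _).sub (((hB.dt p).const_mul (k⁻¹)).mul_const _)

lemma pert_c21 {T : ℝ} (hB : Bump χ χ1 χ2 χ3 χt χmt S M) (hk : k ≠ 0)
    (h : C21 T W.u W.ux W.uxx W.ut) :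
    C21 T (pert W χ χ1 χ2 χ3 χt χmt k).u (pert W χ χ1 χ2 χ3 χt χmt k).ux
      (pert W χ χ1 χ2 χ3 χt χmt k).uxx (pert W χ χ1 χ2 χ3 χt χmt k).ut := by
  have := hB.c0; have := hB.c1; have := hB.c2; have := hB.c3; have := hB.ct; have := hB.c1t
  exact ⟨fun p hp => (h.dx p hp).add (pd2 hB hk p).hasDerivWithinAt,
    fun p hp => (h.dxx p hp).add (pd3 hB hk p).hasDerivWithinAt,
    fun p hp => (h.dt p hp).add (pd1t hB k p).hasDerivWithinAt,
    h.cont.add (Continuous.continuousOn (by fun_prop)),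
    h.cont_x.add (Continuous.continuousOn (by fun_prop)),
    h.cont_xx.add (Continuous.continuousOn (by fun_prop)),
    h.cont_t.add (Continuous.continuousOn (by fun_prop))⟩

lemma pert_c31 {T : ℝ} (hB : Bump χ χ1 χ2 χ3 χt χmt S M) (hk : k ≠ 0)
    (h : C31 T W.v W.vx W.vxx W.vxxx W.vt) :
    C31 T (pert W χ χ1 χ2 χ3 χt χmt k).v (pert W χ χ1 χ2 χ3 χt χmt k).vx
      (pert W χ χ1 χ2 χ3 χt χmt k).vxx (pert W χ χ1 χ2 χ3 χt χmt k).vxxx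
      (pert W χ χ1 χ2 χ3 χt χmt k).vt := by
  have := hB.c0; have := hB.c1; have := hB.c2; have := hB.c3; have := hB.ct; have := hB.c1t
  exact ⟨fun p hp => (h.dx p hp).add (pd1 hB hk p).hasDerivWithinAt,
    fun p hp => (h.dxx p hp).add (pd2 hB hk p).hasDerivWithinAt,
    fun p hp => (h.dxxx p hp).add (pd3 hB hk p).hasDerivWithinAt,
    fun p hp => (h.dt p hp).add (pdt hB k p).hasDerivWithinAt,
    h.cont.add (Continuous.continuousOn (by fun_prop)),
    h.cont_x.add (Continuous.continuousOn (by fun_prop)),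
    h.cont_xx.add (Continuous.continuousOn (by fun_prop)),
    h.cont_xxx.add (Continuous.continuousOn (by fun_prop)),
    h.cont_t.add (Continuous.continuousOn (by fun_prop))⟩
end

/-! ### Neighbourhoods with null frontier -/

lemma null_nbhd {K E : Set (ℝ × ℝ)} (hK : IsCompact K) (hE : IsOpen E) (hKE : K ⊆ E) :
    ∃ V : Set (ℝ × ℝ), IsOpen V ∧ K ⊆ V ∧ closure V ⊆ E ∧ IsCompact (closure V) ∧
      volume (frontier V) = 0 := by
  have key : ∃ V : Set (ℝ × ℝ), K ⊆ V ∧ IsOpen V ∧ closure V ⊆ E ∧ IsCompact (closure V) ∧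
      volume (frontier V) = 0 := by
    refine hK.induction_on (p := fun s => ∃ V : Set (ℝ × ℝ), s ⊆ V ∧ IsOpen V ∧ closure V ⊆ E ∧
      IsCompact (closure V) ∧ volume (frontier V) = 0) ?_ ?_ ?_ ?_
    · exact ⟨∅, by simp⟩
    · rintro s t hst ⟨V, h1, h2⟩
      exact ⟨V, hst.trans h1, h2⟩
    · rintro s t ⟨V, h1, h2, h3, h4, h5⟩ ⟨V', h1', h2', h3', h4', h5'⟩
      refine ⟨V ∪ V', union_subset_union h1 h1', h2.union h2', ?_, ?_, ?_⟩
      · rw [closure_union]; exact union_subset h3 h3'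
      · rw [closure_union]; exact h4.union h4'
      · refine measure_mono_null (frontier_union_subset V V') ?_
        exact measure_union_null (measure_mono_null inter_subset_left h5)
          (measure_mono_null inter_subset_right h5')
    · intro x hx
      obtain ⟨r, hr, hrE⟩ := Metric.nhds_basis_closedBall.mem_iff.1 (hE.mem_nhds (hKE hx))
      refine ⟨Metric.ball x r, mem_nhdsWithin_of_mem_nhds (Metric.ball_mem_nhds x hr),
        Metric.ball x r, Subset.rfl, Metric.isOpen_ball,
        Metric.closure_ball_subset_closedBall.trans hrE, ?_, ?_⟩
      · exact (isCompact_closedBall x r).of_isClosed_subset isClosed_closure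
          Metric.closure_ball_subset_closedBall
      · exact measure_mono_null Metric.frontier_ball_subset_sphere (Measure.addHaar_sphere _ x r)
  obtain ⟨V, h1, h2, h3⟩ := key
  exact ⟨V, h2, h1, h3⟩

lemma margin {S : Set (ℝ × ℝ)} (hS : IsCompact S) {g : ℝ × ℝ → ℝ} (hg : ContinuousOn g S)
    {a : ℝ} (h : ∀ p ∈ S, g p < a) : ∃ η > 0, ∀ p ∈ S, g p + η < a := by
  rcases S.eq_empty_or_nonempty with rfl | hne
  · exact ⟨1, one_pos, by simp⟩
  · obtain ⟨q, hq, hmax⟩ := hS.exists_isMaxOn hne hg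
    refine ⟨(a - g q) / 2, by linarith [h q hq], fun p hp => ?_⟩
    have := hmax hp
    simp only [mem_ofPred_eq] at this
    linarith [h q hq]

lemma est1 {k M x θ : ℝ} (hk : 1 ≤ k) (hM : 0 ≤ M) (hx : |x| ≤ M) :
    |k⁻¹ ^ 2 * x * Real.cos θ| ≤ M * k⁻¹ := by
  have hk0 : 0 < k := by linarith
  have hi : 0 < k⁻¹ := inv_pos.2 hk0
  have hi1 : k⁻¹ ≤ 1 := inv_le_one_of_one_le₀ hk
  rw [abs_mul, abs_mul, abs_of_pos (by positivity : 0 < k⁻¹ ^ 2)]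
  have h1 := Real.abs_cos_le_one θ
  calc k⁻¹ ^ 2 * |x| * |Real.cos θ| ≤ k⁻¹ ^ 2 * M * 1 := by gcongr
    _ ≤ M * k⁻¹ := by
      have : k⁻¹ ^ 2 ≤ k⁻¹ := by nlinarith
      nlinarith

lemma est1s {k M x θ : ℝ} (hk : 1 ≤ k) (hM : 0 ≤ M) (hx : |x| ≤ M) :
    |k⁻¹ * x * Real.sin θ| ≤ M * k⁻¹ := by
  have hk0 : 0 < k := by linarith
  have hi : 0 < k⁻¹ := inv_pos.2 hk0
  rw [abs_mul, abs_mul, abs_of_pos hi]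
  have h1 := Real.abs_sin_le_one θ
  calc k⁻¹ * |x| * |Real.sin θ| ≤ k⁻¹ * M * 1 := by gcongr
    _ = M * k⁻¹ := by ring

lemma est2 {k M x y θ : ℝ} (hk : 1 ≤ k) (hM : 0 ≤ M) (hx : |x| ≤ M) (hy : |y| ≤ M) :
    |k⁻¹ ^ 2 * x * Real.cos θ - k⁻¹ * y * Real.sin θ| ≤ 3 * M * k⁻¹ := by
  have h1 := est1 (θ := θ) hk hM hx
  have h2 := est1s (θ := θ) hk hM hy
  have hi : 0 < k⁻¹ := inv_pos.2 (by linarith)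
  have := abs_sub (k⁻¹ ^ 2 * x * Real.cos θ) (k⁻¹ * y * Real.sin θ)
  nlinarith [mul_nonneg hM hi.le]

lemma est3 {k M x y θ : ℝ} (hk : 1 ≤ k) (hM : 0 ≤ M) (hx : |x| ≤ M) (hy : |y| ≤ M) :
    |k⁻¹ ^ 2 * x * Real.cos θ - 2 * k⁻¹ * y * Real.sin θ| ≤ 3 * M * k⁻¹ := by
  have h1 := est1 (θ := θ) hk hM hx
  have h2 := est1s (θ := θ) hk hM hy
  have hi : 0 < k⁻¹ := inv_pos.2 (by linarith)
  have e : 2 * k⁻¹ * y * Real.sin θ = 2 * (k⁻¹ * y * Real.sin θ) := by ring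
  rw [e]
  have := abs_sub (k⁻¹ ^ 2 * x * Real.cos θ) (2 * (k⁻¹ * y * Real.sin θ))
  rw [abs_mul 2, abs_of_pos (by norm_num : (0:ℝ) < 2)] at this
  linarith

/-- Facts about the inverse branches on `[r1,r2]`. -/
structure Br (r1 r2 δ0 : ℝ) (sm sp : ℝ → ℝ) : Prop where
  δpos : 0 < δ0
  smc : ∀ r ∈ Icc r1 r2, ContinuousAt sm r
  spc : ∀ r ∈ Icc r1 r2, ContinuousAt sp r
  gap : ∀ r ∈ Icc r1 r2, δ0 ≤ sp r - sm r

section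
variable {α T r1 r2 mstar ε GammaStar δ0 : ℝ} {sigma sm sp : ℝ → ℝ}
    {b bx c f : ℝ → ℝ → ℝ} {d : ℝ → ℝ} {us ust vs : ℝ → ℝ → ℝ} {E : Set (ℝ × ℝ)}
    {W : PairData} {χ χ1 χ2 χ3 χt χmt : ℝ × ℝ → ℝ} {S : Set (ℝ × ℝ)} {M : ℝ}

lemma pert_GVal (hcoeff : CoeffHyp α T b bx c f d) (hB : Bump χ χ1 χ2 χ3 χt χmt S M)
    (hS : S ⊆ OmegaT T) (h21 : C21 T W.u W.ux W.uxx W.ut) {k : ℝ} (hk : k ≠ 0)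
    {p : ℝ × ℝ} (hp : p ∈ ClOmegaT T) :
    Pot c bx (pert W χ χ1 χ2 χ3 χt χmt k).u p.1 p.2
      = Pot c bx W.u p.1 p.2 + d p.2 * (k⁻¹ ^ 2 * χ p * Real.cos (k * p.1)) := by
  rw [Pot_eq hcoeff hp.1 hp.2, Pot_eq hcoeff hp.1 hp.2]
  have h0 : ((0:ℝ), p.2) ∉ S := fun h => lt_irrefl _ (hS h).1.1
  have hc1 : Continuous (fun y : ℝ => χ1 (y, p.2)) := hB.c1.comp (by fun_prop)
  have hc0 : Continuous (fun y : ℝ => χ (y, p.2)) := hB.c0.comp (by fun_prop)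
  have hcont : Continuous (fun y => k⁻¹ ^ 2 * χ1 (y, p.2) * Real.cos (k * y)
      - k⁻¹ * χ (y, p.2) * Real.sin (k * y)) :=
    ((continuous_const.mul hc1).mul (by fun_prop)).sub
      ((continuous_const.mul hc0).mul (by fun_prop))
  have h1 : ∫ y in (0:ℝ)..p.1, (k⁻¹ ^ 2 * χ1 (y, p.2) * Real.cos (k * y)
      - k⁻¹ * χ (y, p.2) * Real.sin (k * y)) = k⁻¹ ^ 2 * χ p * Real.cos (k * p.1) := by
    rw [intervalIntegral.integral_eq_sub_of_hasDerivAt (f := fun y =>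
      k⁻¹ ^ 2 * χ (y, p.2) * Real.cos (k * y)) (fun y _ => pd1 hB hk (y, p.2))
      (hcont.intervalIntegrable _ _)]
    simp [hB.z0 _ h0]
  simp only [pert]
  rw [intervalIntegral.integral_add (ii_of_cont (slice_x h21.cont hp.2) hp.1)
    (hcont.intervalIntegrable _ _), h1]
  ring

lemma pert_G (hcoeff : CoeffHyp α T b bx c f d) (hB : Bump χ χ1 χ2 χ3 χt χmt S M)
    (hS : S ⊆ OmegaT T) (h21 : C21 T W.u W.ux W.uxx W.ut) :
    ∃ C, 0 ≤ C ∧ ∀ k : ℝ, 1 ≤ k → ∀ p ∈ ClOmegaT T,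
      |GVal b c bx f (pert W χ χ1 χ2 χ3 χt χmt k).u (pert W χ χ1 χ2 χ3 χt χmt k).vt p.1 p.2
        - GVal b c bx f W.u W.vt p.1 p.2| ≤ C * k⁻¹ := by
  obtain ⟨B, hB0, hBb⟩ := bdd_of_contOn hcoeff.b_cont
  obtain ⟨D, hD0, hDb⟩ := bdd_of_contOn (T := T) (g := fun p => d p.2)
    (hcoeff.d_cont.comp continuousOn_snd (fun p hp => hp.2))
  have hM := hB.Mpos
  refine ⟨M + B * (3 * M) + D * M, by positivity, fun k hk p hp => ?_⟩
  have hk0 : k ≠ 0 := by linarith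
  have hi : 0 < k⁻¹ := inv_pos.2 (by linarith)
  unfold GVal
  rw [pert_GVal hcoeff hB hS h21 hk0 hp]
  simp only [pert]
  have e : W.vt p.1 p.2 + k⁻¹ ^ 2 * χt (p.1, p.2) * Real.cos (k * p.1) -
          b p.1 p.2 * (W.u p.1 p.2 + (k⁻¹ ^ 2 * χ1 (p.1, p.2) * Real.cos (k * p.1) -
              k⁻¹ * χ (p.1, p.2) * Real.sin (k * p.1))) -
        (Pot c bx W.u p.1 p.2 + d p.2 * (k⁻¹ ^ 2 * χ p * Real.cos (k * p.1))) - Fint f p.1 p.2 -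
      (W.vt p.1 p.2 - b p.1 p.2 * W.u p.1 p.2 - Pot c bx W.u p.1 p.2 - Fint f p.1 p.2)
      = k⁻¹ ^ 2 * χt p * Real.cos (k * p.1) - b p.1 p.2 * (k⁻¹ ^ 2 * χ1 p * Real.cos (k * p.1) -
              k⁻¹ * χ p * Real.sin (k * p.1)) - d p.2 * (k⁻¹ ^ 2 * χ p * Real.cos (k * p.1)) := by
    simp only [Prod.mk.eta]; ring
  rw [e]
  have e1 := est1 (θ := k * p.1) hk hM (hB.bt p)
  have e2 := est2 (θ := k * p.1) hk hM (hB.b1 p) (hB.b0 p)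
  have e3 := est1 (θ := k * p.1) hk hM (hB.b0 p)
  have f2 : |b p.1 p.2 * (k⁻¹ ^ 2 * χ1 p * Real.cos (k * p.1) -
              k⁻¹ * χ p * Real.sin (k * p.1))| ≤ B * (3 * M * k⁻¹) := by
    rw [abs_mul]; exact mul_le_mul (hBb p hp) e2 (abs_nonneg _) hB0
  have f3 : |d p.2 * (k⁻¹ ^ 2 * χ p * Real.cos (k * p.1))| ≤ D * (M * k⁻¹) := by
    rw [abs_mul]; exact mul_le_mul (hDb p hp) e3 (abs_nonneg _) hD0
  refine (abs_sub _ _).trans ?_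
  have := abs_sub (k⁻¹ ^ 2 * χt p * Real.cos (k * p.1)) (b p.1 p.2 * (k⁻¹ ^ 2 * χ1 p *
    Real.cos (k * p.1) - k⁻¹ * χ p * Real.sin (k * p.1)))
  nlinarith

lemma pert_off (hcoeff : CoeffHyp α T b bx c f d) (hB : Bump χ χ1 χ2 χ3 χt χmt S M)
    (hS : S ⊆ OmegaT T) (h21 : C21 T W.u W.ux W.uxx W.ut) {k : ℝ} (hk : k ≠ 0)
    {p : ℝ × ℝ} (hp : p ∈ ClOmegaT T) (hpS : p ∉ S) :
    (pert W χ χ1 χ2 χ3 χt χmt k).u p.1 p.2 = W.u p.1 p.2 ∧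
    (pert W χ χ1 χ2 χ3 χt χmt k).ux p.1 p.2 = W.ux p.1 p.2 ∧
    (pert W χ χ1 χ2 χ3 χt χmt k).ut p.1 p.2 = W.ut p.1 p.2 ∧
    (pert W χ χ1 χ2 χ3 χt χmt k).v p.1 p.2 = W.v p.1 p.2 ∧
    Pot c bx (pert W χ χ1 χ2 χ3 χt χmt k).u p.1 p.2 = Pot c bx W.u p.1 p.2 ∧
    GVal b c bx f (pert W χ χ1 χ2 χ3 χt χmt k).u (pert W χ χ1 χ2 χ3 χt χmt k).vt p.1 p.2
      = GVal b c bx f W.u W.vt p.1 p.2 := by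
  have hP : Pot c bx (pert W χ χ1 χ2 χ3 χt χmt k).u p.1 p.2 = Pot c bx W.u p.1 p.2 := by
    rw [pert_GVal hcoeff hB hS h21 hk hp, hB.z0 p hpS]; ring
  refine ⟨?_, ?_, ?_, ?_, hP, ?_⟩
  · simp [pert, hB.z0 p hpS, hB.z1 p hpS]
  · simp [pert, hB.z0 p hpS, hB.z1 p hpS, hB.z2 p hpS]
  · simp [pert, hB.zt p hpS, hB.z1t p hpS]
  · simp [pert, hB.z0 p hpS]
  · unfold GVal; rw [hP]; simp [pert, hB.z0 p hpS, hB.z1 p hpS, hB.zt p hpS]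

end

lemma kinv : Filter.Tendsto (fun n : ℕ => ((n:ℝ) + 1)⁻¹) Filter.atTop (nhds 0) := by
  simpa using (tendsto_one_div_add_atTop_nhds_zero_nat (𝕜 := ℝ))

lemma kinv_lt (C : ℝ) {δ : ℝ} (hδ : 0 < δ) : ∀ᶠ n : ℕ in Filter.atTop, C * ((n:ℝ) + 1)⁻¹ < δ := by
  have := kinv.const_mul C
  rw [mul_zero] at this
  exact this.eventually_lt_const hδ

lemma kone (n : ℕ) : (1:ℝ) ≤ (n:ℝ) + 1 := by
  have : (0:ℝ) ≤ n := n.cast_nonneg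
  linarith

section
variable {α T r1 r2 mstar ε GammaStar δ0 : ℝ} {sigma sm sp : ℝ → ℝ}
    {b bx c f : ℝ → ℝ → ℝ} {d : ℝ → ℝ} {us ust vs : ℝ → ℝ → ℝ} {E : Set (ℝ × ℝ)}
    {W : PairData} {χ χ1 χ2 χ3 χt χmt : ℝ × ℝ → ℝ} {S : Set (ℝ × ℝ)} {M : ℝ}

lemma unif_br {g : ℝ → ℝ} (hg : ∀ r ∈ Icc r1 r2, ContinuousAt g r) {e : ℝ} (he : 0 < e) :
    ∃ δ > 0, ∀ x ∈ Icc r1 r2, ∀ y ∈ Icc r1 r2, |x - y| < δ → |g x - g y| < e := by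
  have h := isCompact_Icc.uniformContinuousOn_of_continuous
    (f := g) (s := Icc r1 r2) (fun r hr => (hg r hr).continuousWithinAt)
  obtain ⟨δ, hδ, h⟩ := Metric.uniformContinuousOn_iff.1 h e he
  exact ⟨δ, hδ, h⟩

/-- The set where the phase is at distance more than `τ` from both wells. -/
def Aset (E : Set (ℝ × ℝ)) (sm sp : ℝ → ℝ) (b bx c f : ℝ → ℝ → ℝ) (W : PairData) (τ : ℝ) :
    Set (ℝ × ℝ) :=
  {p | p ∈ E ∧ sm (GVal b c bx f W.u W.vt p.1 p.2) + τ < W.ux p.1 p.2 ∧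
    W.ux p.1 p.2 + τ < sp (GVal b c bx f W.u W.vt p.1 p.2)}

lemma pert_grad (hT : 0 < T) (hcoeff : CoeffHyp α T b bx c f d)
    (hB : Bump χ χ1 χ2 χ3 χt χmt S M) (hBr : Br r1 r2 δ0 sm sp) (hE : E ⊆ OmegaT T)
    (h21 : C21 T W.u W.ux W.uxx W.ut) (h31 : C31 T W.v W.vx W.vxx W.vxxx W.vt)
    {τ : ℝ} (hτ : 0 < τ) (hSA : S ⊆ Aset E sm sp b bx c f W τ)
    (hχ0 : ∀ p, 0 ≤ χ p) (hχ1 : ∀ p, χ p ≤ τ / 2)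
    (hgrad : ∀ p ∈ E, GradInU r1 r2 mstar sm sp b c bx f W.u W.ux W.ut W.vx W.vt p) :
    ∀ᶠ n : ℕ in Filter.atTop, ∀ p ∈ E, GradInU r1 r2 mstar sm sp b c bx f
      (pert W χ χ1 χ2 χ3 χt χmt (n + 1)).u (pert W χ χ1 χ2 χ3 χt χmt (n + 1)).ux
      (pert W χ χ1 χ2 χ3 χt χmt (n + 1)).ut (pert W χ χ1 χ2 χ3 χt χmt (n + 1)).vx
      (pert W χ χ1 χ2 χ3 χt χmt (n + 1)).vt p := by
  have hSE : S ⊆ E := fun p hp => (hSA hp).1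
  have hSO := hSE.trans hE
  have hSC : S ⊆ ClOmegaT T := hSO.trans (OmegaT_subset T)
  have hGc := (contOn_GVal hT hcoeff h21.cont h31.cont_t).mono hSC
  obtain ⟨η1, hη1, m1⟩ := margin hB.Scomp hGc (a := r2) (fun p hp => (hgrad p (hSE hp)).2.2.2.1)
  obtain ⟨η2, hη2, m2⟩ := margin hB.Scomp hGc.neg (a := -r1)
    (fun p hp => neg_lt_neg (hgrad p (hSE hp)).2.2.1)
  obtain ⟨η3, hη3, m3⟩ := margin hB.Scomp (h21.cont_t.mono hSC).abs (a := mstar)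
    (fun p hp => (hgrad p (hSE hp)).2.1)
  obtain ⟨δ1, hδ1, u1⟩ := unif_br hBr.smc (e := τ / 4) (by positivity)
  obtain ⟨δ2, hδ2, u2⟩ := unif_br hBr.spc (e := τ / 4) (by positivity)
  obtain ⟨C, hC0, hC⟩ := pert_G hcoeff hB hSO h21
  filter_upwards [kinv_lt C hη1, kinv_lt C hη2, kinv_lt (3 * M) hη3, kinv_lt C hδ1, kinv_lt C hδ2,
    kinv_lt (3 * M) (by positivity : 0 < τ / 4)] with n n1 n2 n3 n4 n5 n6
  intro p hp
  have hpC := OmegaT_subset T (hE hp)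
  have hk := kone n
  have hk0 : (n:ℝ) + 1 ≠ 0 := by linarith
  obtain ⟨g1, g2, g3, g4, g5, g6⟩ := hgrad p hp
  by_cases hpS : p ∈ S
  · have hG := hC _ hk p hpC
    have hG' := abs_le.1 hG
    have k1 := m1 p hpS
    have k2 := m2 p hpS
    have k3 := m3 p hpS
    simp only [Pi.neg_apply] at k2
    obtain ⟨-, a1, a2⟩ := hSA hpS
    refine ⟨?_, ?_, ?_⟩
    · simp only [pert, g1]
    · have e := est2 (θ := (n + 1) * p.1) hk hB.Mpos (hB.b1t p) (hB.bt p)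
      refine (abs_add_le _ _).trans_lt ?_
      simp only [Prod.mk.eta]
      linarith
    · set G := GVal b c bx f W.u W.vt p.1 p.2
      set G' := GVal b c bx f (pert W χ χ1 χ2 χ3 χt χmt (n + 1)).u
        (pert W χ χ1 χ2 χ3 χt χmt (n + 1)).vt p.1 p.2
      have hr1 : r1 < G' := by linarith
      have hr2 : G' < r2 := by linarith
      have q1 := abs_lt.1 (u1 G' ⟨hr1.le, hr2.le⟩ G ⟨g3.le, g4.le⟩ (hG.trans_lt n4))
      have q2 := abs_lt.1 (u2 G' ⟨hr1.le, hr2.le⟩ G ⟨g3.le, g4.le⟩ (hG.trans_lt n5))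
      have e := abs_le.1 (est3 (θ := (n + 1) * p.1) hk hB.Mpos (hB.b2 p) (hB.b1 p))
      have ec : |χ p * Real.cos ((n + 1) * p.1)| ≤ τ / 2 := by
        rw [abs_mul, abs_of_nonneg (hχ0 p)]
        have := Real.abs_cos_le_one ((n + 1) * p.1)
        nlinarith [hχ0 p, hχ1 p, abs_nonneg (Real.cos ((n + 1) * p.1))]
      have ec' := abs_le.1 ec
      refine ⟨hr1, hr2, ?_, ?_⟩
      · change sm G' < W.ux p.1 p.2 + _
        simp only [Prod.mk.eta]
        linarith
      · change W.ux p.1 p.2 + _ < sp G'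
        simp only [Prod.mk.eta]
        linarith
  · obtain ⟨o1, o2, o3, o4, o5, o6⟩ := pert_off (f := f) hcoeff hB hSO h21 hk0 hpC hpS
    refine ⟨?_, ?_, ?_⟩
    · simp only [pert, g1]
    · rw [o3]; exact g2
    · rw [o2, o6]; exact ⟨g3, g4, g5, g6⟩

lemma contOn_comp_br (hT : 0 < T) (hcoeff : CoeffHyp α T b bx c f d) (hE : E ⊆ OmegaT T)
    (h21 : C21 T W.u W.ux W.uxx W.ut) (h31 : C31 T W.v W.vx W.vxx W.vxxx W.vt)
    (hin : ∀ p ∈ E, GVal b c bx f W.u W.vt p.1 p.2 ∈ Icc r1 r2)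
    {g : ℝ → ℝ} (hg : ∀ r ∈ Icc r1 r2, ContinuousAt g r) :
    ContinuousOn (fun p : ℝ × ℝ => g (GVal b c bx f W.u W.vt p.1 p.2)) E := by
  intro p hp
  exact (hg _ (hin p hp)).comp_continuousWithinAt
    (f := fun p : ℝ × ℝ => GVal b c bx f W.u W.vt p.1 p.2)
    (((contOn_GVal hT hcoeff h21.cont h31.cont_t) p (OmegaT_subset T (hE hp))).mono
      (hE.trans (OmegaT_subset T)))

lemma contOn_Z (hT : 0 < T) (hcoeff : CoeffHyp α T b bx c f d) (hBr : Br r1 r2 δ0 sm sp)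
    (hE : E ⊆ OmegaT T)
    (h21 : C21 T W.u W.ux W.uxx W.ut) (h31 : C31 T W.v W.vx W.vxx W.vxxx W.vt)
    (hin : ∀ p ∈ E, GVal b c bx f W.u W.vt p.1 p.2 ∈ Icc r1 r2) :
    ContinuousOn (Zfun sm sp b bx c f W.u W.vt W.ux) E := by
  have h1 := contOn_comp_br hT hcoeff hE h21 h31 hin hBr.smc
  have h2 := contOn_comp_br hT hcoeff hE h21 h31 hin hBr.spc
  refine ((h21.cont_x.mono (hE.trans (OmegaT_subset T))).sub h1).div (h2.sub h1) fun p hp => ?_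
  have := hBr.gap _ (hin p hp)
  have := hBr.δpos
  exact ne_of_gt (by linarith)

lemma Z_mem {a m q : ℝ} (h1 : m ≤ a) (h2 : a ≤ q) (h3 : m < q) :
    0 ≤ (a - m) / (q - m) ∧ (a - m) / (q - m) ≤ 1 := by
  constructor
  · exact div_nonneg (by linarith) (by linarith)
  · rw [div_le_one (by linarith)]; linarith

lemma pert_gauge (hT : 0 < T) (hcoeff : CoeffHyp α T b bx c f d)
    (hB : Bump χ χ1 χ2 χ3 χt χmt S M) (hBr : Br r1 r2 δ0 sm sp) (hE : E ⊆ OmegaT T)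
    (hEo : IsOpen E)
    (h21 : C21 T W.u W.ux W.uxx W.ut) (h31 : C31 T W.v W.vx W.vxx W.vxxx W.vt)
    (hSE : S ⊆ E)
    (hgrad : ∀ p ∈ E, (W.ux p.1 p.2, GVal b c bx f W.u W.vt p.1 p.2) ∈ Uprime sm sp r1 r2)
    (hgrad' : ∀ᶠ n : ℕ in Filter.atTop, ∀ p ∈ E,
      ((pert W χ χ1 χ2 χ3 χt χmt (n + 1)).ux p.1 p.2,
        GVal b c bx f (pert W χ χ1 χ2 χ3 χt χmt (n + 1)).u
        (pert W χ χ1 χ2 χ3 χt χmt (n + 1)).vt p.1 p.2) ∈ Uprime sm sp r1 r2) :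
    Filter.Tendsto (fun n : ℕ => Gauge sm sp b bx c f (pert W χ χ1 χ2 χ3 χt χmt (n + 1)).u
        (pert W χ χ1 χ2 χ3 χt χmt (n + 1)).vt (pert W χ χ1 χ2 χ3 χt χmt (n + 1)).ux E)
      Filter.atTop (nhds (Gauge sm sp b bx c f W.u W.vt W.ux E)) := by
  have hSO := hSE.trans hE
  have hEC : E ⊆ ClOmegaT T := hE.trans (OmegaT_subset T)
  have hEm := hEo.measurableSet
  have hfin : IsFiniteMeasure (volume.restrict E) :=
    ⟨by rw [Measure.restrict_apply_univ]
        exact (measure_mono hE).trans_lt (volume_OmegaT_lt_top T)⟩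
  set G : ℝ × ℝ → ℝ := fun p => GVal b c bx f W.u W.vt p.1 p.2 with hG
  have hin : ∀ p ∈ E, G p ∈ Icc r1 r2 := fun p hp => ⟨(hgrad p hp).1.le, (hgrad p hp).2.1.le⟩
  have cm := contOn_comp_br hT hcoeff hE h21 h31 hin hBr.smc
  have cp := contOn_comp_br hT hcoeff hE h21 h31 hin hBr.spc
  set D : ℝ × ℝ → ℝ := fun p => sp (G p) - sm (G p) with hD
  have hDpos : ∀ p ∈ E, δ0 ≤ D p := fun p hp => hBr.gap _ (hin p hp)
  have hδ := hBr.δpos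
  have hcD : ContinuousOn (fun p => χ p / D p) E :=
    hB.c0.continuousOn.div (cp.sub cm) fun p hp => (hδ.trans_le (hDpos p hp)).ne'
  have hbD : ∀ p ∈ E, |χ p / D p| ≤ M / δ0 := by
    intro p hp
    rw [abs_div, abs_of_pos (hδ.trans_le (hDpos p hp))]
    exact div_le_div₀ hB.Mpos (hB.b0 p) hδ (hDpos p hp)
  have hgi : IntegrableOn (fun p => χ p / D p) E :=
    Integrable.of_bound (hcD.aestronglyMeasurable hEm) (M / δ0)
      ((ae_restrict_iff' hEm).2 (Filter.Eventually.of_forall hbD))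
  have ha : Filter.Tendsto (fun n : ℕ => (n:ℝ) + 1) Filter.atTop Filter.atTop :=
    Filter.tendsto_atTop_add_const_right _ _ tendsto_natCast_atTop_atTop
  have hRL := RL (hgi.integrable_indicator hEm) ha
  have hRL' : Filter.Tendsto (fun n : ℕ => ∫ p in E, (χ p / D p) * Real.cos ((n + 1) * p.1))
      Filter.atTop (nhds 0) := by
    refine hRL.congr fun n => ?_
    rw [← integral_indicator hEm]
    refine integral_congr_ae (Filter.Eventually.of_forall fun p => ?_)
    by_cases hp : p ∈ E <;> simp [hp]
  set Z : ℝ × ℝ → ℝ := Zfun sm sp b bx c f W.u W.vt W.ux with hZ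
  set Z' : ℕ → ℝ × ℝ → ℝ := fun n => Zfun sm sp b bx c f (pert W χ χ1 χ2 χ3 χt χmt (n + 1)).u
        (pert W χ χ1 χ2 χ3 χt χmt (n + 1)).vt (pert W χ χ1 χ2 χ3 χt χmt (n + 1)).ux with hZ'
  have hZc : ContinuousOn Z E := contOn_Z hT hcoeff hBr hE h21 h31 hin
  have hZb : ∀ p ∈ E, |Z p| ≤ 1 := by
    intro p hp
    have h := hgrad p hp
    have := Z_mem h.2.2.1.le h.2.2.2.le (h.2.2.1.trans h.2.2.2)
    exact abs_le.2 ⟨(by norm_num : (-1:ℝ) ≤ 0).trans this.1, this.2⟩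
  have hZi : IntegrableOn Z E := Integrable.of_bound (hZc.aestronglyMeasurable hEm) 1
      ((ae_restrict_iff' hEm).2 (Filter.Eventually.of_forall hZb))
  have hk0 : ∀ n : ℕ, (n:ℝ) + 1 ≠ 0 := fun n => by have := kone n; linarith
  have hZ'c : ∀ᶠ n in Filter.atTop, ContinuousOn (Z' n) E := by
    filter_upwards [hgrad'] with n hn
    exact contOn_Z hT hcoeff hBr hE (pert_c21 hB (hk0 n) h21) (pert_c31 hB (hk0 n) h31)
      (fun p hp => ⟨(hn p hp).1.le, (hn p hp).2.1.le⟩)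
  have hZ'b : ∀ᶠ n in Filter.atTop, ∀ p ∈ E, |Z' n p| ≤ 1 := by
    filter_upwards [hgrad'] with n hn
    intro p hp
    have h := hn p hp
    have := Z_mem h.2.2.1.le h.2.2.2.le (h.2.2.1.trans h.2.2.2)
    exact abs_le.2 ⟨(by norm_num : (-1:ℝ) ≤ 0).trans this.1, this.2⟩
  have hcosc : ∀ n : ℕ, ContinuousOn (fun p : ℝ × ℝ => (χ p / D p) * Real.cos ((n + 1) * p.1)) E :=
    fun n => hcD.mul (Continuous.continuousOn (by fun_prop))
  have hcosb : ∀ n : ℕ, ∀ p ∈ E, |(χ p / D p) * Real.cos ((n + 1) * p.1)| ≤ M / δ0 := by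
    intro n p hp
    rw [abs_mul]
    calc _ ≤ (M / δ0) * 1 := mul_le_mul (hbD p hp) (Real.abs_cos_le_one _) (abs_nonneg _)
          (div_nonneg hB.Mpos hδ.le)
      _ = _ := mul_one _
  have hcosi : ∀ n : ℕ, IntegrableOn (fun p : ℝ × ℝ => (χ p / D p) * Real.cos ((n + 1) * p.1)) E :=
    fun n => Integrable.of_bound ((hcosc n).aestronglyMeasurable hEm) (M / δ0)
      ((ae_restrict_iff' hEm).2 (Filter.Eventually.of_forall (hcosb n)))
  -- pointwise convergence
  obtain ⟨C, hC0, hC⟩ := pert_G hcoeff hB hSO h21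
  have hpt : ∀ p ∈ E, Filter.Tendsto (fun n : ℕ => Z' n p - Z p
      + (χ p / D p) * Real.cos ((n + 1) * p.1)) Filter.atTop (nhds 0) := by
    intro p hp
    have hpC := hEC hp
    set G' : ℕ → ℝ := fun n => GVal b c bx f (pert W χ χ1 χ2 χ3 χt χmt (n + 1)).u
        (pert W χ χ1 χ2 χ3 χt χmt (n + 1)).vt p.1 p.2 with hG'
    have tG : Filter.Tendsto G' Filter.atTop (nhds (G p)) := by
      rw [tendsto_iff_dist_tendsto_zero]
      refine squeeze_zero (fun n => dist_nonneg) (fun n => hC _ (kone n) p hpC) ?_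
      simpa using kinv.const_mul C
    have tm := (hBr.smc _ (hin p hp)).tendsto.comp tG
    have tp := (hBr.spc _ (hin p hp)).tendsto.comp tG
    set e : ℕ → ℝ := fun n => ((n:ℝ) + 1)⁻¹ ^ 2 * χ2 p * Real.cos ((n + 1) * p.1)
      - 2 * ((n:ℝ) + 1)⁻¹ * χ1 p * Real.sin ((n + 1) * p.1) with he
    have te : Filter.Tendsto e Filter.atTop (nhds 0) := by
      rw [tendsto_zero_iff_abs_tendsto_zero]
      refine squeeze_zero (fun n => abs_nonneg _)
        (fun n => est3 (kone n) hB.Mpos (hB.b2 p) (hB.b1 p)) ?_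
      simpa using kinv.const_mul (3 * M)
    have hDne : D p ≠ 0 := (hδ.trans_le (hDpos p hp)).ne'
    have tD : Filter.Tendsto (fun n => (sp (G' n) - sm (G' n))⁻¹) Filter.atTop
        (nhds ((D p)⁻¹)) := (tp.sub tm).inv₀ hDne
    -- main identity
    have hid : ∀ n : ℕ, Z' n p - Z p + (χ p / D p) * Real.cos ((n + 1) * p.1)
        = (e n - (sm (G' n) - sm (G p))) * (sp (G' n) - sm (G' n))⁻¹
          + ((sp (G' n) - sm (G' n))⁻¹ - (D p)⁻¹)
            * (W.ux p.1 p.2 - sm (G p) - χ p * Real.cos ((n + 1) * p.1)) := by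
      intro n
      have h1 : Z' n p = (W.ux p.1 p.2 + (e n - χ p * Real.cos ((n + 1) * p.1)) - sm (G' n))
          * (sp (G' n) - sm (G' n))⁻¹ := rfl
      have h2 : Z p = (W.ux p.1 p.2 - sm (G p)) * (D p)⁻¹ := rfl
      rw [h1, h2, div_eq_mul_inv]; ring
    simp only [hid]
    have t1 : Filter.Tendsto (fun n => (e n - (sm (G' n) - sm (G p)))
        * (sp (G' n) - sm (G' n))⁻¹) Filter.atTop (nhds 0) := by
      have := (te.sub (tm.sub_const (sm (G p)))).mul tD
      simpa using this
    have t2 : Filter.Tendsto (fun n : ℕ => ((sp (G' n) - sm (G' n))⁻¹ - (D p)⁻¹)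
            * (W.ux p.1 p.2 - sm (G p) - χ p * Real.cos ((n + 1) * p.1)))
            Filter.atTop (nhds 0) := by
      have hz : Filter.Tendsto (fun n => (sp (G' n) - sm (G' n))⁻¹ - (D p)⁻¹) Filter.atTop
          (nhds 0) := by simpa using tD.sub_const ((D p)⁻¹)
      refine hz.zero_mul_isBoundedUnder_le
        ⟨|W.ux p.1 p.2 - sm (G p)| + M, ?_⟩
      rw [Filter.eventually_map]
      refine Filter.Eventually.of_forall fun n => ?_
      simp only [Function.comp, Real.norm_eq_abs]
      refine (abs_sub _ _).trans ?_
      gcongr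
      rw [abs_mul]
      calc _ ≤ M * 1 := mul_le_mul (hB.b0 p) (Real.abs_cos_le_one _) (abs_nonneg _) hB.Mpos
        _ = M := mul_one _
    simpa using t1.add t2
  have hDCT : Filter.Tendsto (fun n : ℕ => ∫ p in E, (Z' n p - Z p
      + (χ p / D p) * Real.cos ((n + 1) * p.1))) Filter.atTop (nhds (∫ p in E, (0:ℝ))) := by
    refine tendsto_integral_filter_of_dominated_convergence (fun _ => 1 + 1 + M / δ0) ?_ ?_
      (integrable_const _) ?_
    · filter_upwards [hZ'c] with n hn
      exact ((hn.sub hZc).add (hcosc n)).aestronglyMeasurable hEm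
    · filter_upwards [hZ'b] with n hn
      refine (ae_restrict_iff' hEm).2 (Filter.Eventually.of_forall fun p hp => ?_)
      refine (norm_add_le _ _).trans (add_le_add ((norm_sub_le _ _).trans
        (add_le_add (hn p hp) (hZb p hp))) (hcosb n p hp))
    · exact (ae_restrict_iff' hEm).2 (Filter.Eventually.of_forall hpt)
  simp only [integral_zero] at hDCT
  have hfinal : Filter.Tendsto (fun n : ℕ => ∫ p in E, Z' n p) Filter.atTop
      (nhds (∫ p in E, Z p)) := by
    have := (hDCT.sub hRL').add_const (∫ p in E, Z p)
    simp only [sub_zero, zero_add] at this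
    refine this.congr' ?_
    filter_upwards [hZ'c, hZ'b] with n h1 h2
    have hi : IntegrableOn (Z' n) E := Integrable.of_bound (h1.aestronglyMeasurable hEm) 1
      ((ae_restrict_iff' hEm).2 (Filter.Eventually.of_forall h2))
    have e1 : ∫ p in E, (Z' n p - Z p + (χ p / D p) * Real.cos ((n + 1) * p.1))
        = (∫ p in E, (Z' n p - Z p)) + ∫ p in E, (χ p / D p) * Real.cos ((n + 1) * p.1) :=
      integral_add (hi.sub hZi) (hcosi n)
    have e2 : ∫ p in E, (Z' n p - Z p) = (∫ p in E, Z' n p) - ∫ p in E, Z p := integral_sub hi hZi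
    rw [e1, e2]
    ring
  exact hfinal.const_mul _

end

section
variable {α T r1 r2 mstar ε GammaStar δ0 : ℝ} {sigma sm sp : ℝ → ℝ}
    {b bx c f : ℝ → ℝ → ℝ} {d : ℝ → ℝ} {us ust vs : ℝ → ℝ → ℝ} {E : Set (ℝ × ℝ)}
    {W : PairData} {χ χ1 χ2 χ3 χt χmt : ℝ × ℝ → ℝ} {S : Set (ℝ × ℝ)} {M : ℝ}

lemma pert_low (W : PairData) (hB : Bump χ χ1 χ2 χ3 χt χmt S M) (hχ0 : ∀ p, 0 ≤ χ p) {τ : ℝ}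
    (hτ : 0 < τ) {K : Set (ℝ × ℝ)} (hK : IsCompact K) (hKO : K ⊆ OmegaT T)
    (hχK : ∀ p ∈ K, χ p = τ / 2) {m0 : ENNReal} (hm0 : m0 < volume K) :
    ∀ᶠ n : ℕ in Filter.atTop, τ / 8 * m0.toReal ≤ ∫ p in OmegaT T,
      |(pert W χ χ1 χ2 χ3 χt χmt (n + 1)).ux p.1 p.2 - W.ux p.1 p.2| := by
  have hOm := measurableSet_OmegaT T
  have hχi : IntegrableOn χ (OmegaT T) :=
    Integrable.of_bound hB.c0.aestronglyMeasurable M (Filter.Eventually.of_forall hB.b0)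
  have ha : Filter.Tendsto (fun n : ℕ => 2 * ((n:ℝ) + 1)) Filter.atTop Filter.atTop :=
    (Filter.tendsto_atTop_add_const_right _ _ tendsto_natCast_atTop_atTop).const_mul_atTop
      (by norm_num)
  have hRL := RL (hχi.integrable_indicator hOm) ha
  have hRL' : Filter.Tendsto (fun n : ℕ => ∫ p in OmegaT T, χ p * Real.cos (2 * ((n:ℝ) + 1) * p.1))
      Filter.atTop (nhds 0) := by
    refine hRL.congr fun n => ?_
    rw [← integral_indicator hOm]
    refine integral_congr_ae (Filter.Eventually.of_forall fun p => ?_)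
    by_cases hp : p ∈ OmegaT T <;> simp [hp]
  have hKfin : volume K < ⊤ := hK.measure_lt_top
  have hKlow : τ / 2 * (volume K).toReal ≤ ∫ p in OmegaT T, χ p := by
    have h1 : ∫ p in K, χ p = τ / 2 * (volume K).toReal := by
      rw [setIntegral_congr_fun hK.measurableSet hχK, setIntegral_const, smul_eq_mul, mul_comm]
      rfl
    rw [← h1]
    exact setIntegral_mono_set hχi (Filter.Eventually.of_forall hχ0)
      (Filter.Eventually.of_forall hKO)
  have hm : m0.toReal < (volume K).toReal := (ENNReal.toReal_lt_toReal (hm0.ne_top) hKfin.ne).2 hm0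
  have hm00 : 0 ≤ m0.toReal := ENNReal.toReal_nonneg
  have hlim : Filter.Tendsto (fun n : ℕ => (1 / 2) * (∫ p in OmegaT T, χ p)
      + (1 / 2) * (∫ p in OmegaT T, χ p * Real.cos (2 * ((n:ℝ) + 1) * p.1))
      - (volume (OmegaT T)).toReal * (3 * M * ((n:ℝ) + 1)⁻¹)) Filter.atTop
      (nhds ((1 / 2) * (∫ p in OmegaT T, χ p) + (1 / 2) * 0
        - (volume (OmegaT T)).toReal * (3 * M * 0))) :=
    (((hRL'.const_mul _).const_add _).sub ((kinv.const_mul _).const_mul _))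
  have hgt : τ / 8 * m0.toReal < (1 / 2) * (∫ p in OmegaT T, χ p) + (1 / 2) * 0
        - (volume (OmegaT T)).toReal * (3 * M * 0) := by
    nlinarith
  filter_upwards [hlim.eventually_const_lt hgt] with n hn
  refine hn.le.trans ?_
  have hci : IntegrableOn (fun p : ℝ × ℝ => χ p * Real.cos (2 * ((n:ℝ) + 1) * p.1)) (OmegaT T) := by
    refine Integrable.of_bound (hB.c0.mul (by fun_prop)).aestronglyMeasurable M
      (Filter.Eventually.of_forall fun p => ?_)
    rw [Real.norm_eq_abs, abs_mul]
    calc _ ≤ M * 1 := mul_le_mul (hB.b0 p) (Real.abs_cos_le_one _) (abs_nonneg _) hB.Mpos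
      _ = M := mul_one _
  set L : ℝ × ℝ → ℝ := fun p => (1 / 2) * χ p + (1 / 2) * (χ p * Real.cos (2 * ((n:ℝ) + 1) * p.1))
    - 3 * M * ((n:ℝ) + 1)⁻¹ with hL
  have hLint : ∫ p in OmegaT T, L p = (1 / 2) * (∫ p in OmegaT T, χ p)
      + (1 / 2) * (∫ p in OmegaT T, χ p * Real.cos (2 * ((n:ℝ) + 1) * p.1))
      - (volume (OmegaT T)).toReal * (3 * M * ((n:ℝ) + 1)⁻¹) := by
    have i1 : IntegrableOn (fun p => (1 / 2) * χ p) (OmegaT T) := hχi.const_mul _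
    have i2 : IntegrableOn (fun p : ℝ × ℝ => (1 / 2) * (χ p * Real.cos (2 * ((n:ℝ) + 1) * p.1)))
      (OmegaT T) := hci.const_mul _
    have e0 : ∫ p in OmegaT T, L p
      = (∫ p in OmegaT T, ((1 / 2) * χ p + (1 / 2) * (χ p * Real.cos (2 * ((n:ℝ) + 1) * p.1))))
        - ∫ p in OmegaT T, 3 * M * ((n:ℝ) + 1)⁻¹ := integral_sub (i1.add i2) (integrable_const _)
    rw [e0, setIntegral_const, smul_eq_mul]
    have : ∫ p in OmegaT T, ((1 / 2) * χ p + (1 / 2) * (χ p * Real.cos (2 * ((n:ℝ) + 1) * p.1)))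
      = (∫ p in OmegaT T, (1 / 2) * χ p)
        + ∫ p in OmegaT T, (1 / 2) * (χ p * Real.cos (2 * ((n:ℝ) + 1) * p.1)) :=
      integral_add i1 i2
    rw [this, integral_const_mul, integral_const_mul]
    rfl
  rw [← hLint]
  have hexp : ∀ p : ℝ × ℝ, (pert W χ χ1 χ2 χ3 χt χmt (n + 1)).ux p.1 p.2 - W.ux p.1 p.2
      = (((n:ℝ) + 1)⁻¹ ^ 2 * χ2 p * Real.cos ((n + 1) * p.1)
    - 2 * ((n:ℝ) + 1)⁻¹ * χ1 p * Real.sin ((n + 1) * p.1)) - χ p * Real.cos ((n + 1) * p.1) := by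
    intro p; simp only [pert]; ring
  simp only [hexp]
  have hbd : ∀ p, |(((n:ℝ) + 1)⁻¹ ^ 2 * χ2 p * Real.cos ((n + 1) * p.1)
    - 2 * ((n:ℝ) + 1)⁻¹ * χ1 p * Real.sin ((n + 1) * p.1))| ≤ 3 * M * ((n:ℝ) + 1)⁻¹ :=
    fun p => est3 (kone n) hB.Mpos (hB.b2 p) (hB.b1 p)
  have hχc : ∀ p : ℝ × ℝ, |χ p * Real.cos ((n + 1) * p.1)| ≤ M := fun p => by
    rw [abs_mul]
    calc _ ≤ M * 1 := mul_le_mul (hB.b0 p) (Real.abs_cos_le_one _) (abs_nonneg _) hB.Mpos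
      _ = M := mul_one _
  refine setIntegral_mono_on ?_ ?_ hOm fun p _ => ?_
  · exact ((hχi.const_mul _).add (hci.const_mul _)).sub (integrable_const _)
  · have c0 := hB.c0; have c1 := hB.c1; have c2 := hB.c2
    refine Integrable.of_bound (Continuous.aestronglyMeasurable (by fun_prop))
      (3 * M * ((n:ℝ) + 1)⁻¹ + M) (Filter.Eventually.of_forall fun p => ?_)
    rw [Real.norm_eq_abs, abs_abs]
    exact (abs_sub _ _).trans (add_le_add (hbd p) (hχc p))
  · have h1 := hbd p
    have h2 := abs_sub_abs_le_abs_sub (χ p * Real.cos ((n + 1) * p.1))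
      (((n:ℝ) + 1)⁻¹ ^ 2 * χ2 p * Real.cos ((n + 1) * p.1)
    - 2 * ((n:ℝ) + 1)⁻¹ * χ1 p * Real.sin ((n + 1) * p.1))
    rw [abs_sub_comm (χ p * Real.cos ((n + 1) * p.1))] at h2
    have h3 : χ p * Real.cos ((n + 1) * p.1) ^ 2 ≤ |χ p * Real.cos ((n + 1) * p.1)| := by
      rw [abs_mul, abs_of_nonneg (hχ0 p), ← sq_abs]
      have := Real.abs_cos_le_one ((n + 1) * p.1)
      have := abs_nonneg (Real.cos ((n + 1) * p.1))
      refine mul_le_mul_of_nonneg_left ?_ (hχ0 p)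
      nlinarith
    have h4 : Real.cos (2 * ((n:ℝ) + 1) * p.1) = 2 * Real.cos ((n + 1) * p.1) ^ 2 - 1 := by
      rw [mul_assoc, Real.cos_two_mul]
    simp only [hL, h4]
    nlinarith

lemma Aset_open (hT : 0 < T) (hcoeff : CoeffHyp α T b bx c f d) (hBr : Br r1 r2 δ0 sm sp)
    (hE : E ⊆ OmegaT T) (hEo : IsOpen E)
    (h21 : C21 T W.u W.ux W.uxx W.ut) (h31 : C31 T W.v W.vx W.vxx W.vxxx W.vt)
    (hin : ∀ p ∈ E, GVal b c bx f W.u W.vt p.1 p.2 ∈ Icc r1 r2) (τ : ℝ) :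
    IsOpen (Aset E sm sp b bx c f W τ) := by
  have cm := contOn_comp_br hT hcoeff hE h21 h31 hin hBr.smc
  have cp := contOn_comp_br hT hcoeff hE h21 h31 hin hBr.spc
  have cx := h21.cont_x.mono (hE.trans (OmegaT_subset T))
  have e : Aset E sm sp b bx c f W τ
      = (E ∩ (fun p : ℝ × ℝ => W.ux p.1 p.2 - sm (GVal b c bx f W.u W.vt p.1 p.2)) ⁻¹' Ioi τ)
        ∩ (E ∩ (fun p : ℝ × ℝ => sp (GVal b c bx f W.u W.vt p.1 p.2) - W.ux p.1 p.2) ⁻¹' Ioi τ) := by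
    ext p
    simp only [Aset, mem_ofPred_eq, mem_inter_iff, mem_preimage, mem_Ioi]
    constructor
    · rintro ⟨h1, h2, h3⟩; exact ⟨⟨h1, by linarith⟩, h1, by linarith⟩
    · rintro ⟨⟨h1, h2⟩, -, h3⟩; exact ⟨h1, by linarith, by linarith⟩
  rw [e]
  exact ((cx.sub cm).isOpen_inter_preimage hEo isOpen_Ioi).inter
    ((cp.sub cx).isOpen_inter_preimage hEo isOpen_Ioi)

lemma perturb (hT : 0 < T) (hcoeff : CoeffHyp α T b bx c f d) (hBr : Br r1 r2 δ0 sm sp)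
    (hE : E ⊆ OmegaT T) (hEo : IsOpen E)
    (hus : ContinuousOn (fun p : ℝ × ℝ => us p.1 p.2) (ClOmegaT T))
    (hust : ContinuousOn (fun p : ℝ × ℝ => ust p.1 p.2) (ClOmegaT T))
    (hW : InAdmissible T r1 r2 mstar ε GammaStar sigma sm sp b bx c f us ust vs E W)
    {τ : ℝ} (hτ : 0 < τ) {m0 : ENNReal} (hm0 : m0 < volume (Aset E sm sp b bx c f W τ))
    {η : ℝ} (hη : 0 < η) :
    ∃ W' : PairData, InAdmissible T r1 r2 mstar ε GammaStar sigma sm sp b bx c f us ust vs E W' ∧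
      (∀ p ∈ OmegaT T, |W'.u p.1 p.2 - W.u p.1 p.2| ≤ η) ∧
      (∀ p ∈ OmegaT T, |W'.v p.1 p.2 - W.v p.1 p.2| ≤ η) ∧
      τ / 8 * m0.toReal ≤ ∫ p in OmegaT T, |W'.ux p.1 p.2 - W.ux p.1 p.2| := by
  obtain ⟨h21, h31, ⟨O, hO, hOE, hOc, hOf, hOeq, hOP⟩, hes1, hes2, hgrad, hgam⟩ := hW
  have hin : ∀ p ∈ E, GVal b c bx f W.u W.vt p.1 p.2 ∈ Icc r1 r2 :=
    fun p hp => ⟨(hgrad p hp).2.2.1.le, (hgrad p hp).2.2.2.1.le⟩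
  have hAo := Aset_open hT hcoeff hBr hE hEo h21 h31 hin τ
  obtain ⟨K, hKA, hKc, hKm⟩ := hAo.exists_lt_isCompact hm0
  obtain ⟨χ, χ1, χ2, χ3, χt, χmt, S, M, hB, hSA, hχ0, hχ1, hχK⟩ :=
    exists_bump hAo hKc hKA (half_pos hτ)
  have hSE : S ⊆ E := fun p hp => (hSA hp).1
  have hSO := hSE.trans hE
  obtain ⟨V, hVo, hSV, hVE, hVc, hVf⟩ := null_nbhd hB.Scomp hEo hSE
  have hg' := pert_grad hT hcoeff hB hBr hE h21 h31 hτ hSA hχ0 hχ1 hgrad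
  have hga := pert_gauge hT hcoeff hB hBr hE hEo h21 h31 hSE (fun p hp => (hgrad p hp).2.2)
    (hg'.mono fun n hn p hp => (hn p hp).2.2)
  have hga' := ((hga.sub_const GammaStar).abs).eventually_lt_const hgam
  have hlow := pert_low W hB hχ0 hτ hKc (fun p hp => hE (hKA hp).1) hχK hKm
  have hM := hB.Mpos
  obtain ⟨n, n1, n2, n3, n4, n5, n6, n7⟩ := (hg'.and (hga'.and (hlow.and
    ((kinv_lt (3 * M) (sub_pos.2 hes1)).and ((kinv_lt (3 * M) (sub_pos.2 hes2)).and
    ((kinv_lt (3 * M) hη).and (kinv_lt M hη))))))).exists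
  have hk := kone n
  have hk0 : (n:ℝ) + 1 ≠ 0 := by linarith
  have eu : ∀ p : ℝ × ℝ, |(pert W χ χ1 χ2 χ3 χt χmt (n + 1)).u p.1 p.2 - W.u p.1 p.2|
      ≤ 3 * M * ((n:ℝ) + 1)⁻¹ := by
    intro p
    simp only [pert, add_sub_cancel_left]
    exact est2 hk hM (hB.b1 p) (hB.b0 p)
  have et : ∀ p : ℝ × ℝ, |(pert W χ χ1 χ2 χ3 χt χmt (n + 1)).ut p.1 p.2 - W.ut p.1 p.2|
      ≤ 3 * M * ((n:ℝ) + 1)⁻¹ := by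
    intro p
    simp only [pert, add_sub_cancel_left]
    exact est2 hk hM (hB.b1t p) (hB.bt p)
  have ev : ∀ p : ℝ × ℝ, |(pert W χ χ1 χ2 χ3 χt χmt (n + 1)).v p.1 p.2 - W.v p.1 p.2|
      ≤ M * ((n:ℝ) + 1)⁻¹ := by
    intro p
    simp only [pert, add_sub_cancel_left]
    exact est1 hk hM (hB.b0 p)
  refine ⟨pert W χ χ1 χ2 χ3 χt χmt (n + 1), ⟨pert_c21 hB hk0 h21, pert_c31 hB hk0 h31,
    ⟨O ∪ V, hO.union hVo, ?_, ?_, ?_, ?_, ?_⟩, ?_, ?_, n1, n2⟩, fun p _ => (eu p).trans n6.le,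
    fun p _ => (ev p).trans n7.le, n3⟩
  · rw [closure_union]; exact union_subset hOE hVE
  · rw [closure_union]; exact hOc.union hVc
  · refine measure_mono_null (frontier_union_subset O V) ?_
    exact measure_union_null (measure_mono_null inter_subset_left hOf)
          (measure_mono_null inter_subset_right hVf)
  · rintro p ⟨hp, hpn⟩
    rw [closure_union] at hpn
    have hpS : p ∉ S := fun h => hpn (Or.inr (subset_closure (hSV h)))
    obtain ⟨o1, o2, o3, o4, o5, o6⟩ :=
      pert_off (f := f) hcoeff hB hSO h21 hk0 (OmegaT_subset T hp) hpS
    rw [o1, o4]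
    exact hOeq p ⟨hp, fun h => hpn (Or.inl h)⟩
  · rintro p ⟨hp, hpn⟩
    rw [closure_union] at hpn
    have hpS : p ∉ S := fun h => hpn (Or.inr (subset_closure (hSV h)))
    obtain ⟨o1, o2, o3, o4, o5, o6⟩ :=
      pert_off (f := f) hcoeff hB hSO h21 hk0 (OmegaT_subset T hp) hpS
    rw [o5]
    exact hOP p ⟨hp, fun h => hpn (Or.inl h)⟩
  · refine (EssSupAbs_le' hT (C := EssSupAbs T (fun x t => W.u x t - us x t)
      + 3 * M * ((n:ℝ) + 1)⁻¹) fun p hp => ?_).trans_lt (by linarith)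
    have h1 := le_EssSupAbs (g := fun x t => W.u x t - us x t) (h21.cont.sub hus) p hp
    have h2 := eu p
    have h3 := abs_add_le ((pert W χ χ1 χ2 χ3 χt χmt (n + 1)).u p.1 p.2 - W.u p.1 p.2)
      (W.u p.1 p.2 - us p.1 p.2)
    rw [sub_add_sub_cancel] at h3
    linarith
  · refine (EssSupAbs_le' hT (C := EssSupAbs T (fun x t => W.ut x t - ust x t)
      + 3 * M * ((n:ℝ) + 1)⁻¹) fun p hp => ?_).trans_lt (by linarith)
    have h1 := le_EssSupAbs (g := fun x t => W.ut x t - ust x t) (h21.cont_t.sub hust) p hp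
    have h2 := et p
    have h3 := abs_add_le ((pert W χ χ1 χ2 χ3 χt χmt (n + 1)).ut p.1 p.2 - W.ut p.1 p.2)
      (W.ut p.1 p.2 - ust p.1 p.2)
    rw [sub_add_sub_cancel] at h3
    linarith

end

lemma int_dx {T : ℝ} (hT : 0 < T) {u ux : ℝ → ℝ → ℝ}
    (hlip : ∃ K : ℝ≥0, LipschitzOnWith K (fun p : ℝ × ℝ => u p.1 p.2) (ClOmegaT T))
    (hux : ∀ᵐ p ∂(volume.restrict (OmegaT T)), HasDerivAt (fun y => u y p.2) (ux p.1 p.2) p.1) :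
    IntegrableOn (fun p : ℝ × ℝ => ux p.1 p.2) (OmegaT T) := by
  obtain ⟨K, hK⟩ := hlip
  have hc := continuous_extR hT (g := u) hK.continuousOn
  have hm := measurable_deriv_with_param (f := fun t x : ℝ => extR T u x t)
    (hc.comp continuous_swap)
  have hm2 := hm.comp measurable_swap
  have hmem := ae_restrict_mem (μ := (volume : Measure (ℝ × ℝ))) (measurableSet_OmegaT T)
  refine Integrable.of_bound (C := K) ⟨_, hm2.stronglyMeasurable, ?_⟩ ?_
  · filter_upwards [hux, hmem] with p h1 hp
    have : (fun x : ℝ => extR T u x p.2) =ᶠ[nhds p.1] fun x => u x p.2 := by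
      filter_upwards [nx hp] with x hx
      exact extR_eq hx (OmegaT_subset T hp).2
    exact (h1.congr_of_eventuallyEq this).deriv.symm
  · filter_upwards [hux, hmem] with p h1 hp
    refine h1.le_of_lipschitzOn (nx hp) (C := K) ?_
    rw [lipschitzOnWith_iff_dist_le_mul] at hK ⊢
    intro x hx y hy
    have := hK (x, p.2) ⟨hx, (OmegaT_subset T hp).2⟩ (y, p.2) ⟨hy, (OmegaT_subset T hp).2⟩
    simpa [Prod.dist_eq] using this

lemma int_dt {T : ℝ} (hT : 0 < T) {u ut : ℝ → ℝ → ℝ}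
    (hlip : ∃ K : ℝ≥0, LipschitzOnWith K (fun p : ℝ × ℝ => u p.1 p.2) (ClOmegaT T))
    (hut : ∀ᵐ p ∂(volume.restrict (OmegaT T)), HasDerivAt (fun τ => u p.1 τ) (ut p.1 p.2) p.2) :
    IntegrableOn (fun p : ℝ × ℝ => ut p.1 p.2) (OmegaT T) := by
  obtain ⟨K, hK⟩ := hlip
  have hc := continuous_extR hT (g := u) hK.continuousOn
  have hm := measurable_deriv_with_param (f := fun x t : ℝ => extR T u x t) hc
  have hmem := ae_restrict_mem (μ := (volume : Measure (ℝ × ℝ))) (measurableSet_OmegaT T)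
  refine Integrable.of_bound (C := K) ⟨_, hm.stronglyMeasurable, ?_⟩ ?_
  · filter_upwards [hut, hmem] with p h1 hp
    have : (fun t : ℝ => extR T u p.1 t) =ᶠ[nhds p.2] fun t => u p.1 t := by
      filter_upwards [nt hp] with t ht
      exact extR_eq (OmegaT_subset T hp).1 ht
    exact (h1.congr_of_eventuallyEq this).deriv.symm
  · filter_upwards [hut, hmem] with p h1 hp
    refine h1.le_of_lipschitzOn (nt hp) (C := K) ?_
    rw [lipschitzOnWith_iff_dist_le_mul] at hK ⊢
    intro x hx y hy
    have := hK (p.1, x) ⟨(OmegaT_subset T hp).1, hx⟩ (p.1, y) ⟨(OmegaT_subset T hp).1, hy⟩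
    simpa [Prod.dist_eq] using this

lemma int_of_cont {T : ℝ} {g : ℝ × ℝ → ℝ} (hg : ContinuousOn g (ClOmegaT T)) :
    IntegrableOn g (OmegaT T) :=
  (hg.integrableOn_compact (isCompact_ClOmegaT T)).mono_set (OmegaT_subset T)

lemma ae_subseq {X : Type*} [MeasurableSpace X] {μ : Measure X} {H : ℕ → X → ℝ}
    (hi : ∀ j, Integrable (H j) μ) (h0 : ∀ j x, 0 ≤ H j x)
    (hl : Filter.Tendsto (fun j => ∫ x, H j x ∂μ) Filter.atTop (nhds 0)) :
    ∃ ns : ℕ → ℕ, StrictMono ns ∧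
      ∀ᵐ x ∂μ, Filter.Tendsto (fun j => H (ns j) x) Filter.atTop (nhds 0) := by
  have h1 : TendstoInMeasure μ H Filter.atTop (fun _ => (0:ℝ)) := by
    refine tendstoInMeasure_of_tendsto_eLpNorm (p := 1) one_ne_zero
      (fun j => (hi j).aestronglyMeasurable) aestronglyMeasurable_const ?_
    have e : ∀ j, eLpNorm (H j - fun _ => (0:ℝ)) 1 μ = ENNReal.ofReal (∫ x, H j x ∂μ) := by
      intro j
      have : (H j - fun _ => (0:ℝ)) = H j := by ext x; simp
      rw [this, eLpNorm_one_eq_lintegral_enorm, ← ofReal_integral_norm_eq_lintegral_enorm (hi j)]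
      congr 2
      ext x
      rw [Real.norm_eq_abs, abs_of_nonneg (h0 j x)]
    simp only [e]
    simpa using ENNReal.tendsto_ofReal hl
  exact h1.exists_seq_tendsto_ae

lemma tendsto_of_abs_le {a e : ℕ → ℝ} {l : ℝ} (h : ∀ j, |a j - l| ≤ e j)
    (he : Filter.Tendsto e Filter.atTop (nhds 0)) : Filter.Tendsto a Filter.atTop (nhds l) := by
  rw [tendsto_iff_dist_tendsto_zero]
  exact squeeze_zero (fun _ => dist_nonneg) (fun j => by rw [Real.dist_eq]; exact h j) he

/-- uniform closeness from essential sup of the Euclidean distance -/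
lemma unif_of_ess {T : ℝ} (hT : 0 < T) {W : PairData} {u v : ℝ → ℝ → ℝ}
    (h1 : ContinuousOn (fun p : ℝ × ℝ => W.u p.1 p.2) (ClOmegaT T))
    (h2 : ContinuousOn (fun p : ℝ × ℝ => W.v p.1 p.2) (ClOmegaT T))
    (h3 : ContinuousOn (fun p : ℝ × ℝ => u p.1 p.2) (ClOmegaT T))
    (h4 : ContinuousOn (fun p : ℝ × ℝ => v p.1 p.2) (ClOmegaT T)) :
    ∀ p ∈ ClOmegaT T, |W.u p.1 p.2 - u p.1 p.2| ≤ EssSupAbs T (fun x t =>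
          Real.sqrt ((W.u x t - u x t) ^ 2 + (W.v x t - v x t) ^ 2))
      ∧ |W.v p.1 p.2 - v p.1 p.2| ≤ EssSupAbs T (fun x t =>
          Real.sqrt ((W.u x t - u x t) ^ 2 + (W.v x t - v x t) ^ 2)) := by
  have hc : ContinuousOn (fun p : ℝ × ℝ => Real.sqrt ((W.u p.1 p.2 - u p.1 p.2) ^ 2
      + (W.v p.1 p.2 - v p.1 p.2) ^ 2)) (ClOmegaT T) :=
    (((h1.sub h3).pow 2).add ((h2.sub h4).pow 2)).sqrt
  have hle := le_EssSupAbs (g := fun x t =>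
          Real.sqrt ((W.u x t - u x t) ^ 2 + (W.v x t - v x t) ^ 2)) hc
  have hle2 : ∀ p ∈ ClOmegaT T, Real.sqrt ((W.u p.1 p.2 - u p.1 p.2) ^ 2
      + (W.v p.1 p.2 - v p.1 p.2) ^ 2) ≤ EssSupAbs T (fun x t =>
          Real.sqrt ((W.u x t - u x t) ^ 2 + (W.v x t - v x t) ^ 2)) :=
    le_of_le_Omega hT hc fun p hp => (le_abs_self _).trans (hle p hp)
  intro p hp
  exact ⟨(Real.abs_le_sqrt (by nlinarith [sq_nonneg (W.v p.1 p.2 - v p.1 p.2)])).trans (hle2 p hp),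
    (Real.abs_le_sqrt (by nlinarith [sq_nonneg (W.u p.1 p.2 - u p.1 p.2)])).trans (hle2 p hp)⟩

lemma ess_le_of_unif {T : ℝ} (hT : 0 < T) {W : PairData} {u v : ℝ → ℝ → ℝ} {C : ℝ}
    (h : ∀ p ∈ OmegaT T, |W.u p.1 p.2 - u p.1 p.2| ≤ C ∧ |W.v p.1 p.2 - v p.1 p.2| ≤ C) :
    EssSupAbs T (fun x t => Real.sqrt ((W.u x t - u x t) ^ 2 + (W.v x t - v x t) ^ 2))
      ≤ 2 * C := by
  refine EssSupAbs_le' hT fun p hp => ?_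
  obtain ⟨h1, h2⟩ := h p hp
  have hC : 0 ≤ C := (abs_nonneg _).trans h1
  rw [abs_of_nonneg (Real.sqrt_nonneg _)]
  refine Real.sqrt_le_iff.2 ⟨by linarith, ?_⟩
  have e1 := sq_le_sq' (by linarith [(abs_le.1 h1).1]) (abs_le.1 h1).2
  have e2 := sq_le_sq' (by linarith [(abs_le.1 h2).1]) (abs_le.1 h2).2
  nlinarith

lemma ess_nonneg {T : ℝ} (hT : 0 < T) {g : ℝ → ℝ → ℝ}
    (hg : ContinuousOn (fun p : ℝ × ℝ => g p.1 p.2) (ClOmegaT T)) : 0 ≤ EssSupAbs T g := by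
  obtain ⟨p, hp⟩ := OmegaT_nonempty hT
  exact (abs_nonneg _).trans (le_EssSupAbs hg p hp)

/-- A sequence of good pairs converging uniformly and with a.e. convergent gradients. -/
structure Lim (T r1 r2 ε : ℝ) (sm sp sigmat : ℝ → ℝ) (b bx c f : ℝ → ℝ → ℝ) (u0 : ℝ → ℝ)
    (us usx ust : ℝ → ℝ → ℝ) (E : Set (ℝ × ℝ)) (W : ℕ → PairData) (e : ℕ → ℝ)
    (u ux ut vt : ℝ → ℝ → ℝ) : Prop where
  good : ∀ j, Good T r1 r2 ε sm sp sigmat b bx c f u0 us usx ust E (W j)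
  e0 : Filter.Tendsto e Filter.atTop (nhds 0)
  ucv : ∀ j, ∀ p ∈ ClOmegaT T, |(W j).u p.1 p.2 - u p.1 p.2| ≤ e j
  ucont : ContinuousOn (fun p : ℝ × ℝ => u p.1 p.2) (ClOmegaT T)
  aex : ∀ᵐ p ∂(volume.restrict (OmegaT T)),
    Filter.Tendsto (fun j => (W j).ux p.1 p.2) Filter.atTop (nhds (ux p.1 p.2))
  aet : ∀ᵐ p ∂(volume.restrict (OmegaT T)),
    Filter.Tendsto (fun j => (W j).ut p.1 p.2) Filter.atTop (nhds (ut p.1 p.2))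
  aev : ∀ᵐ p ∂(volume.restrict (OmegaT T)),
    Filter.Tendsto (fun j => (W j).vt p.1 p.2) Filter.atTop (nhds (vt p.1 p.2))

section
variable {α T r1 r2 ε δ0 : ℝ} {sigma sm sp sigmat : ℝ → ℝ}
    {b bx c f : ℝ → ℝ → ℝ} {d : ℝ → ℝ} {u0 : ℝ → ℝ}
    {us usx ust : ℝ → ℝ → ℝ} {E : Set (ℝ × ℝ)} {W : ℕ → PairData} {e : ℕ → ℝ}
    {u ux ut vt : ℝ → ℝ → ℝ}

lemma lim_u (hL : Lim T r1 r2 ε sm sp sigmat b bx c f u0 us usx ust E W e u ux ut vt)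
    {p : ℝ × ℝ} (hp : p ∈ ClOmegaT T) :
    Filter.Tendsto (fun j => (W j).u p.1 p.2) Filter.atTop (nhds (u p.1 p.2)) :=
  tendsto_of_abs_le (fun j => hL.ucv j p hp) hL.e0

lemma lim_Pot (hcoeff : CoeffHyp α T b bx c f d)
    (hL : Lim T r1 r2 ε sm sp sigmat b bx c f u0 us usx ust E W e u ux ut vt)
    {p : ℝ × ℝ} (hp : p ∈ ClOmegaT T) :
    Filter.Tendsto (fun j => Pot c bx (W j).u p.1 p.2) Filter.atTop
      (nhds (Pot c bx u p.1 p.2)) := by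
  have hb : ∀ j, |Pot c bx (W j).u p.1 p.2 - Pot c bx u p.1 p.2| ≤ |d p.2| * (e j * |p.1 - 0|) := by
    intro j
    rw [Pot_eq hcoeff hp.1 hp.2, Pot_eq hcoeff hp.1 hp.2, ← mul_sub, abs_mul]
    refine mul_le_mul_of_nonneg_left ?_ (abs_nonneg _)
    rw [← intervalIntegral.integral_sub
      (ii_of_cont (slice_x (hL.good j).c21.cont hp.2) hp.1) (ii_of_cont (slice_x hL.ucont hp.2) hp.1)]
    rw [← Real.norm_eq_abs]
    refine intervalIntegral.norm_integral_le_of_norm_le_const fun y hy => ?_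
    rw [uIoc_of_le hp.1.1] at hy
    exact hL.ucv j (y, p.2) ⟨⟨hy.1.le, hy.2.trans hp.1.2⟩, hp.2⟩
  refine tendsto_of_abs_le hb ?_
  simpa using (hL.e0.mul_const |p.1 - 0|).const_mul |d p.2|

lemma lim_G (hcoeff : CoeffHyp α T b bx c f d)
    (hL : Lim T r1 r2 ε sm sp sigmat b bx c f u0 us usx ust E W e u ux ut vt) :
    ∀ᵐ p ∂(volume.restrict (OmegaT T)),
      Filter.Tendsto (fun j => GVal b c bx f (W j).u (W j).vt p.1 p.2) Filter.atTop
        (nhds (GVal b c bx f u vt p.1 p.2)) := by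
  filter_upwards [hL.aev, ae_restrict_mem (measurableSet_OmegaT T)] with p h1 hp
  have hpC := OmegaT_subset T hp
  exact ((h1.sub ((lim_u hL hpC).const_mul _)).sub (lim_Pot hcoeff hL hpC)).sub_const _

lemma lim_off (hcoeff : CoeffHyp α T b bx c f d)
    (hL : Lim T r1 r2 ε sm sp sigmat b bx c f u0 us usx ust E W e u ux ut vt) :
    (∀ p ∈ OmegaT T, p ∉ E → u p.1 p.2 = us p.1 p.2) ∧
    (∀ᵐ p ∂(volume.restrict (OmegaT T)), p ∉ E → ux p.1 p.2 = usx p.1 p.2 ∧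
      GVal b c bx f u vt p.1 p.2 = sigmat (usx p.1 p.2)) := by
  constructor
  · intro p hp hpE
    refine tendsto_nhds_unique (lim_u hL (OmegaT_subset T hp)) ?_
    simp only [(hL.good _).off_u p hp hpE]
    exact tendsto_const_nhds
  · filter_upwards [hL.aex, lim_G hcoeff hL, ae_restrict_mem (measurableSet_OmegaT T)]
      with p h1 h2 hp hpE
    constructor
    · refine tendsto_nhds_unique h1 ?_
      simp only [(hL.good _).off_ux p hp hpE]
      exact tendsto_const_nhds
    · refine tendsto_nhds_unique h2 ?_
      simp only [(hL.good _).off_G p hp hpE]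
      exact tendsto_const_nhds

lemma lim_close (hT : 0 < T)
    (hL : Lim T r1 r2 ε sm sp sigmat b bx c f u0 us usx ust E W e u ux ut vt) :
    EssSupAbs T (fun x t => u x t - us x t) ≤ ε / 2 ∧
    EssSupAbs T (fun x t => ut x t - ust x t) ≤ ε / 2 := by
  constructor
  · refine EssSupAbs_le' hT fun p hp => ?_
    exact le_of_tendsto ((lim_u hL (OmegaT_subset T hp)).sub_const _).abs
      (Filter.Eventually.of_forall fun j => (hL.good j).u_close p hp)
  · refine EssSupAbs_le hT ?_
    filter_upwards [hL.aet, ae_restrict_mem (measurableSet_OmegaT T)] with p h1 hp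
    exact le_of_tendsto (h1.sub_const _).abs
      (Filter.Eventually.of_forall fun j => (hL.good j).ut_close p hp)

lemma lim_inE (hcoeff : CoeffHyp α T b bx c f d) (hBr : Br r1 r2 δ0 sm sp)
    (hE : E ⊆ OmegaT T)
    (hL : Lim T r1 r2 ε sm sp sigmat b bx c f u0 us usx ust E W e u ux ut vt) :
    ∀ᵐ p ∂(volume.restrict (OmegaT T)), p ∈ E → GVal b c bx f u vt p.1 p.2 ∈ Icc r1 r2 ∧
      sm (GVal b c bx f u vt p.1 p.2) ≤ ux p.1 p.2 ∧
      ux p.1 p.2 ≤ sp (GVal b c bx f u vt p.1 p.2) := by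
  filter_upwards [hL.aex, lim_G hcoeff hL] with p h1 h2 hpE
  have hI : GVal b c bx f u vt p.1 p.2 ∈ Icc r1 r2 :=
    isClosed_Icc.mem_of_tendsto h2 (Filter.Eventually.of_forall fun j =>
      ⟨((hL.good j).inE p hpE).1.le, ((hL.good j).inE p hpE).2.1.le⟩)
  refine ⟨hI, ?_, ?_⟩
  · exact le_of_tendsto_of_tendsto' ((hBr.smc _ hI).tendsto.comp h2) h1
      fun j => ((hL.good j).inE p hpE).2.2.1.le
  · exact le_of_tendsto_of_tendsto' h1 ((hBr.spc _ hI).tendsto.comp h2)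
      fun j => ((hL.good j).inE p hpE).2.2.2.le

lemma good_bound (hT : 0 < T) (hBr : Br r1 r2 δ0 sm sp) (hst : Continuous sigmat)
    (hus : ContinuousOn (fun p : ℝ × ℝ => us p.1 p.2) (ClOmegaT T))
    (husx : ContinuousOn (fun p : ℝ × ℝ => usx p.1 p.2) (ClOmegaT T)) :
    ∃ M : ℝ, 0 ≤ M ∧ ∀ W : PairData, Good T r1 r2 ε sm sp sigmat b bx c f u0 us usx ust E W →
      (∀ p ∈ ClOmegaT T, |W.u p.1 p.2| ≤ M) ∧
      (∀ p ∈ OmegaT T, |W.ux p.1 p.2| ≤ M ∧ |GVal b c bx f W.u W.vt p.1 p.2| ≤ M) := by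
  obtain ⟨M1, h10, h1⟩ := bdd_of_contOn hus
  obtain ⟨M2, h20, h2⟩ := bdd_of_contOn husx
  obtain ⟨M3, h30, h3⟩ := bdd_of_contOn (hst.comp_continuousOn husx)
  obtain ⟨M4, h4⟩ := (isCompact_Icc (a := r1) (b := r2)).exists_bound_of_continuousOn (f := sm)
    fun r hr => (hBr.smc r hr).continuousWithinAt
  obtain ⟨M5, h5⟩ := (isCompact_Icc (a := r1) (b := r2)).exists_bound_of_continuousOn (f := sp)
    fun r hr => (hBr.spc r hr).continuousWithinAt
  have p4 := le_abs_self M4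
  have p5 := le_abs_self M5
  have q4 := abs_nonneg M4
  have q5 := abs_nonneg M5
  have q1 := abs_nonneg r1
  have q2 := abs_nonneg r2
  have q3 := abs_nonneg ε
  refine ⟨M1 + |ε| + M2 + M3 + |M4| + |M5| + |r1| + |r2|, by positivity, fun W hW => ⟨?_, ?_⟩⟩
  · refine le_of_le_Omega hT hW.c21.cont.abs fun p hp => ?_
    have a1 := h1 p (OmegaT_subset T hp)
    have a2 := hW.u_close p hp
    have a3 := abs_add_le (W.u p.1 p.2 - us p.1 p.2) (us p.1 p.2)
    rw [sub_add_cancel] at a3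
    have := le_abs_self ε
    linarith
  · intro p hp
    by_cases hpE : p ∈ E
    · obtain ⟨b1, b2, b3, b4⟩ := hW.inE p hpE
      dsimp only at b1 b2 b3 b4
      have c1 := h4 _ ⟨b1.le, b2.le⟩
      have c2 := h5 _ ⟨b1.le, b2.le⟩
      rw [Real.norm_eq_abs, abs_le] at c1 c2
      constructor
      · rw [abs_le]; constructor <;> linarith
      · have := neg_abs_le r1
        have := le_abs_self r2
        rw [abs_le]; constructor <;> linarith
    · rw [hW.off_ux p hp hpE, hW.off_G p hp hpE]
      have a1 := h2 p (OmegaT_subset T hp)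
      have a2 := h3 p (OmegaT_subset T hp)
      simp only [Function.comp] at a2
      constructor <;> linarith

lemma iter_int {s : ℝ} {Ψ : ℝ × ℝ → ℝ}
    (h : IntegrableOn Ψ (Ioo (0:ℝ) 1 ×ˢ Ioo (0:ℝ) s)) :
    ∫ p in Ioo (0:ℝ) 1 ×ˢ Ioo (0:ℝ) s, Ψ p = ∫ t in Ioo (0:ℝ) s, ∫ x in Ioo (0:ℝ) 1, Ψ (x, t) := by
  rw [IntegrableOn, Measure.volume_eq_prod, ← Measure.prod_restrict] at h
  rw [Measure.volume_eq_prod, ← Measure.prod_restrict]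
  exact integral_prod_symm _ h

lemma zeta_facts {ζ : ℝ → ℝ → ℝ} (hζ : ContDiff ℝ (⊤ : ℕ∞) (fun p : ℝ × ℝ => ζ p.1 p.2)) :
    Continuous (fun p : ℝ × ℝ => ζ p.1 p.2) ∧
    Continuous (fun p : ℝ × ℝ => deriv (fun τ => ζ p.1 τ) p.2) ∧
    Continuous (fun p : ℝ × ℝ => deriv (fun y => ζ y p.2) p.1) := by
  have hζd : ∀ p : ℝ × ℝ, HasFDerivAt (fun p : ℝ × ℝ => ζ p.1 p.2)
      (fderiv ℝ (fun p : ℝ × ℝ => ζ p.1 p.2) p) p := fun p =>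
    ((hζ.differentiable (by simp)) p).hasFDerivAt
  have hDc : Continuous (fderiv ℝ (fun p : ℝ × ℝ => ζ p.1 p.2)) := hζ.continuous_fderiv (by simp)
  refine ⟨hζ.continuous, ?_, ?_⟩
  · have : (fun p : ℝ × ℝ => deriv (fun τ => ζ p.1 τ) p.2)
        = fun p => fderiv ℝ (fun p : ℝ × ℝ => ζ p.1 p.2) p (0, 1) := by
      ext p
      exact ((hζd (p.1, p.2)).comp_hasDerivAt p.2
        ((hasDerivAt_const p.2 p.1).prodMk (hasDerivAt_id p.2))).deriv
    rw [this]
    exact hDc.clm_apply continuous_const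
  · have : (fun p : ℝ × ℝ => deriv (fun y => ζ y p.2) p.1)
        = fun p => fderiv ℝ (fun p : ℝ × ℝ => ζ p.1 p.2) p (1, 0) := by
      ext p
      exact ((hζd (p.1, p.2)).comp_hasDerivAt p.1
        ((hasDerivAt_id p.1).prodMk (hasDerivAt_const p.1 p.2))).deriv
    rw [this]
    exact hDc.clm_apply continuous_const

end

section
variable {α T r1 r2 ε δ0 : ℝ} {sigma sm sp sigmat : ℝ → ℝ}
    {b bx c f : ℝ → ℝ → ℝ} {d : ℝ → ℝ} {u0 : ℝ → ℝ}
    {us usx ust : ℝ → ℝ → ℝ} {E : Set (ℝ × ℝ)} {W : ℕ → PairData} {e : ℕ → ℝ}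
    {u ux ut vt : ℝ → ℝ → ℝ}

lemma abs_mul_le' {a a' M M' : ℝ} (h : |a| ≤ M) (h' : |a'| ≤ M') : |a * a'| ≤ M * M' := by
  rw [abs_mul]
  exact mul_le_mul h h' (abs_nonneg _) ((abs_nonneg _).trans h)

lemma lim_weak (hT : 0 < T) (hcoeff : CoeffHyp α T b bx c f d) (hBr : Br r1 r2 δ0 sm sp)
    (hst : Continuous sigmat)
    (hus : ContinuousOn (fun p : ℝ × ℝ => us p.1 p.2) (ClOmegaT T))
    (husx : ContinuousOn (fun p : ℝ × ℝ => usx p.1 p.2) (ClOmegaT T))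
    (hL : Lim T r1 r2 ε sm sp sigmat b bx c f u0 us usx ust E W e u ux ut vt)
    (hG : ∀ᵐ p ∂(volume.restrict (OmegaT T)), GVal b c bx f u vt p.1 p.2 = sigma (ux p.1 p.2))
    {ζ : ℝ → ℝ → ℝ} (hζ : ContDiff ℝ (⊤ : ℕ∞) (fun p : ℝ × ℝ => ζ p.1 p.2)) {s : ℝ}
    (hs : s ∈ Icc 0 T) :
    (∫ t in Ioo (0:ℝ) s, ∫ x in Ioo (0:ℝ) 1,
        (u x t * deriv (fun τ => ζ x τ) t - sigma (ux x t) * deriv (fun y => ζ y t) x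
          + (b x t * ux x t + c x t * u x t + f x t) * ζ x t))
      = ∫ x in Ioo (0:ℝ) 1, (u x s * ζ x s - u0 x * ζ x 0) := by
  obtain ⟨M, hM0, hM⟩ := good_bound (ε := ε) (b := b) (bx := bx) (c := c) (f := f) (u0 := u0)
    (ust := ust) (E := E) hT hBr hst hus husx
  obtain ⟨cζ, cζt, cζx⟩ := zeta_facts hζ
  obtain ⟨Z, hZ0, hZ⟩ := bdd_of_contOn (T := T) cζ.continuousOn
  obtain ⟨Zt, hZt0, hZt⟩ := bdd_of_contOn (T := T) cζt.continuousOn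
  obtain ⟨Zx, hZx0, hZx⟩ := bdd_of_contOn (T := T) cζx.continuousOn
  obtain ⟨B, hB0, hB⟩ := bdd_of_contOn hcoeff.b_cont
  obtain ⟨C, hC0, hC⟩ := bdd_of_contOn hcoeff.c_cont
  obtain ⟨F, hF0, hF⟩ := bdd_of_contOn hcoeff.f_cont
  set S : Set (ℝ × ℝ) := Ioo (0:ℝ) 1 ×ˢ Ioo (0:ℝ) s with hS
  have hSO : S ⊆ OmegaT T := prod_mono subset_rfl (Ioo_subset_Ioo_right hs.2)
  have hSm : MeasurableSet S := measurableSet_Ioo.prod measurableSet_Ioo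
  have hSf : IsFiniteMeasure ((volume : Measure (ℝ × ℝ)).restrict S) :=
    ⟨by rw [Measure.restrict_apply_univ]; exact (measure_mono hSO).trans_lt (volume_OmegaT_lt_top T)⟩
  set Φ : ℕ → ℝ × ℝ → ℝ := fun j p => (W j).u p.1 p.2 * deriv (fun τ => ζ p.1 τ) p.2
    - GVal b c bx f (W j).u (W j).vt p.1 p.2 * deriv (fun y => ζ y p.2) p.1
    + (b p.1 p.2 * (W j).ux p.1 p.2 + c p.1 p.2 * (W j).u p.1 p.2 + f p.1 p.2) * ζ p.1 p.2 with hΦ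
  set Ψ : ℝ × ℝ → ℝ := fun p => u p.1 p.2 * deriv (fun τ => ζ p.1 τ) p.2
    - sigma (ux p.1 p.2) * deriv (fun y => ζ y p.2) p.1
    + (b p.1 p.2 * ux p.1 p.2 + c p.1 p.2 * u p.1 p.2 + f p.1 p.2) * ζ p.1 p.2 with hΨ
  have hΦc : ∀ j, ContinuousOn (Φ j) (ClOmegaT T) := by
    intro j
    have g := hL.good j
    exact (((g.c21.cont.mul cζt.continuousOn).sub
      ((contOn_GVal hT hcoeff g.c21.cont g.c31.cont_t).mul cζx.continuousOn)).add
      ((((hcoeff.b_cont.mul g.c21.cont_x).add (hcoeff.c_cont.mul g.c21.cont)).add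
        hcoeff.f_cont).mul cζ.continuousOn))
  have hΦi : ∀ j, IntegrableOn (Φ j) S := fun j => (int_of_cont (hΦc j)).mono_set hSO
  have hΦb : ∀ j, ∀ p ∈ S, |Φ j p| ≤ M * Zt + M * Zx + (B * M + C * M + F) * Z := by
    intro j p hp
    have hpO := hSO hp
    have hpC := OmegaT_subset T hpO
    obtain ⟨m1, m2⟩ := hM _ (hL.good j)
    have a1 := abs_mul_le' (m1 p hpC) (hZt p hpC)
    have a2 := abs_mul_le' (m2 p hpO).2 (hZx p hpC)
    have a3 := abs_mul_le' (hB p hpC) (m2 p hpO).1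
    have a4 := abs_mul_le' (hC p hpC) (m1 p hpC)
    have a5 : |b p.1 p.2 * (W j).ux p.1 p.2 + c p.1 p.2 * (W j).u p.1 p.2 + f p.1 p.2|
        ≤ B * M + C * M + F :=
      (abs_add_three _ _ _).trans (add_le_add (add_le_add a3 a4) (hF p hpC))
    have a6 := abs_mul_le' a5 (hZ p hpC)
    exact (abs_add_le _ _).trans (add_le_add ((abs_sub _ _).trans (add_le_add a1 a2)) a6)
  have hlim : ∀ᵐ p ∂(volume.restrict S),
      Filter.Tendsto (fun j => Φ j p) Filter.atTop (nhds (Ψ p)) := by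
    have hall : ∀ᵐ p ∂(volume.restrict (OmegaT T)),
      Filter.Tendsto (fun j => Φ j p) Filter.atTop (nhds (Ψ p)) := by
      filter_upwards [hL.aex, lim_G hcoeff hL, hG, ae_restrict_mem (measurableSet_OmegaT T)]
        with p h1 h2 h3 hp
      rw [h3] at h2
      have h4 := lim_u hL (OmegaT_subset T hp)
      exact ((h4.mul_const _).sub (h2.mul_const _)).add
        ((((h1.const_mul _).add (h4.const_mul _)).add_const _).mul_const _)
    exact ae_restrict_of_ae_restrict_of_subset hSO hall
  have hΨi : IntegrableOn Ψ S := by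
    refine Integrable.of_bound (C := M * Zt + M * Zx + (B * M + C * M + F) * Z)
      (aestronglyMeasurable_of_tendsto_ae Filter.atTop (fun j => (hΦi j).aestronglyMeasurable) hlim)
      ?_
    filter_upwards [hlim, ae_restrict_mem hSm] with p h1 hp
    exact le_of_tendsto h1.norm (Filter.Eventually.of_forall fun j => hΦb j p hp)
  have hconv : Filter.Tendsto (fun j => ∫ p in S, Φ j p) Filter.atTop (nhds (∫ p in S, Ψ p)) := by
    refine tendsto_integral_of_dominated_convergence
      (fun _ => M * Zt + M * Zx + (B * M + C * M + F) * Z)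
      (fun j => (hΦi j).aestronglyMeasurable) (integrable_const _) (fun j => ?_) hlim
    filter_upwards [ae_restrict_mem hSm] with p hp
    exact hΦb j p hp
  have hR : ∀ j, ∫ p in S, Φ j p
      = ∫ x in Ioo (0:ℝ) 1, ((W j).u x s * ζ x s - u0 x * ζ x 0) := by
    intro j
    have := good_weak hT hcoeff (hL.good j) hζ hs
    simp only [intervalIntegral.integral_of_le hs.1, intervalIntegral.integral_of_le zero_le_one,
      integral_Ioc_eq_integral_Ioo] at this
    rw [iter_int (hΦi j)]
    exact this
  have hconv2 : Filter.Tendsto (fun j => ∫ x in Ioo (0:ℝ) 1, ((W j).u x s * ζ x s - u0 x * ζ x 0))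
      Filter.atTop (nhds (∫ x in Ioo (0:ℝ) 1, (u x s * ζ x s - u0 x * ζ x 0))) := by
    have h0T : (0:ℝ) ∈ Icc 0 T := ⟨le_rfl, hT.le⟩
    have hini : ∀ j, ∀ x ∈ Ioo (0:ℝ) 1, u0 x = (W j).u x 0 :=
      fun j x hx => ((hL.good j).init x (Ioo_subset_Icc_self hx)).symm
    refine tendsto_integral_of_dominated_convergence (fun _ => M * Z + M * Z)
      (fun j => ?_) (integrable_const _) (fun j => ?_) ?_
    · have hc : ContinuousOn (fun x => (W j).u x s * ζ x s - (W j).u x 0 * ζ x 0) (Icc 0 1) :=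
        ((slice_x (hL.good j).c21.cont hs).mul (slice_x (T := T) cζ.continuousOn hs)).sub
        ((slice_x (hL.good j).c21.cont h0T).mul (slice_x (T := T) cζ.continuousOn h0T))
      refine ((hc.mono Ioo_subset_Icc_self).congr fun x hx => ?_).aestronglyMeasurable
        measurableSet_Ioo
      simp only [hini j x hx]
    · filter_upwards [ae_restrict_mem measurableSet_Ioo] with x hx
      have hx' := Ioo_subset_Icc_self hx
      rw [hini j x hx, Real.norm_eq_abs]
      obtain ⟨m1, m2⟩ := hM _ (hL.good j)
      exact (abs_sub _ _).trans (add_le_add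
        (abs_mul_le' (m1 (x, s) ⟨hx', hs⟩) (hZ (x, s) ⟨hx', hs⟩))
        (abs_mul_le' (m1 (x, 0) ⟨hx', h0T⟩) (hZ (x, 0) ⟨hx', h0T⟩)))
    · filter_upwards [ae_restrict_mem measurableSet_Ioo] with x hx
      exact ((lim_u hL (p := (x, s)) ⟨Ioo_subset_Icc_self hx, hs⟩).mul_const _).sub_const _
  simp only [hR] at hconv
  rw [← tendsto_nhds_unique hconv hconv2, iter_int hΨi]

end

section
variable {α T r1 r2 mstar GammaStar ε δ0 : ℝ} {sigma sm sp sigmat : ℝ → ℝ}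
    {b bx c f : ℝ → ℝ → ℝ} {d : ℝ → ℝ} {u0 : ℝ → ℝ}
    {us usx ust vs : ℝ → ℝ → ℝ} {E : Set (ℝ × ℝ)} {W : ℕ → PairData} {e : ℕ → ℝ}
    {u v ux ut vt : ℝ → ℝ → ℝ}

lemma lim_null (hT : 0 < T) (hcoeff : CoeffHyp α T b bx c f d) (hBr : Br r1 r2 δ0 sm sp)
    (hE : E ⊆ OmegaT T) (hEo : IsOpen E)
    (hus : ContinuousOn (fun p : ℝ × ℝ => us p.1 p.2) (ClOmegaT T))
    (hust : ContinuousOn (fun p : ℝ × ℝ => ust p.1 p.2) (ClOmegaT T))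
    (hvc : ContinuousOn (fun p : ℝ × ℝ => v p.1 p.2) (ClOmegaT T))
    (hadm : ∀ j, InAdmissible T r1 r2 mstar ε GammaStar sigma sm sp b bx c f us ust vs E (W j))
    (hL : Lim T r1 r2 ε sm sp sigmat b bx c f u0 us usx ust E W e u ux ut vt)
    (hvcv : ∀ j, ∀ p ∈ ClOmegaT T, |(W j).v p.1 p.2 - v p.1 p.2| ≤ e j)
    (huxi : IntegrableOn (fun p : ℝ × ℝ => ux p.1 p.2) (OmegaT T))
    (hcx : ∀ W' : ℕ → PairData,
      (∀ j, InAdmissible T r1 r2 mstar ε GammaStar sigma sm sp b bx c f us ust vs E (W' j)) →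
      Filter.Tendsto (fun j => EssSupAbs T (fun x t =>
          Real.sqrt (((W' j).u x t - u x t) ^ 2 + ((W' j).v x t - v x t) ^ 2)))
        Filter.atTop (nhds 0) →
      Filter.Tendsto (fun j => ∫ p in OmegaT T, |(W' j).ux p.1 p.2 - ux p.1 p.2|)
        Filter.atTop (nhds 0))
    {τ : ℝ} (hτ : 0 < τ) (n : ℕ) :
    volume (⋂ k : ℕ, Aset E sm sp b bx c f (W (n + k)) τ) = 0 := by
  by_contra hne
  obtain ⟨m0, hm0, hm1⟩ := exists_between (pos_iff_ne_zero.2 hne)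
  have hk : ∀ k : ℕ, ∃ W' : PairData,
      InAdmissible T r1 r2 mstar ε GammaStar sigma sm sp b bx c f us ust vs E W' ∧
      (∀ p ∈ OmegaT T, |W'.u p.1 p.2 - (W (n + k)).u p.1 p.2| ≤ ((k:ℝ) + 1)⁻¹) ∧
      (∀ p ∈ OmegaT T, |W'.v p.1 p.2 - (W (n + k)).v p.1 p.2| ≤ ((k:ℝ) + 1)⁻¹) ∧
      τ / 8 * m0.toReal ≤ ∫ p in OmegaT T, |W'.ux p.1 p.2 - (W (n + k)).ux p.1 p.2| := fun k =>
    perturb hT hcoeff hBr hE hEo hus hust (hadm _) hτ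
      (hm1.trans_le (measure_mono (iInter_subset _ k))) (by positivity)
  choose W' hA hu' hv' hlow using hk
  have hen : Filter.Tendsto (fun k => e (n + k)) Filter.atTop (nhds 0) :=
    hL.e0.comp (Filter.tendsto_atTop_mono (fun k => Nat.le_add_left k n) Filter.tendsto_id)
  have hsq : ∀ (V : PairData), InAdmissible T r1 r2 mstar ε GammaStar sigma sm sp b bx c f
      us ust vs E V → 0 ≤ EssSupAbs T (fun x t =>
          Real.sqrt ((V.u x t - u x t) ^ 2 + (V.v x t - v x t) ^ 2)) := fun V hV =>
    ess_nonneg hT ((((hV.1.cont.sub hL.ucont).pow 2).add ((hV.2.1.cont.sub hvc).pow 2)).sqrt)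
  have t1 := hcx W' hA (by
    refine squeeze_zero (g := fun k : ℕ => 2 * (((k:ℝ) + 1)⁻¹ + e (n + k))) (fun k => hsq _ (hA k))
      (fun k => ess_le_of_unif hT fun p hp => ⟨?_, ?_⟩) ?_
    · have a := abs_add_le ((W' k).u p.1 p.2 - (W (n + k)).u p.1 p.2)
        ((W (n + k)).u p.1 p.2 - u p.1 p.2)
      rw [sub_add_sub_cancel] at a
      exact a.trans (add_le_add (hu' k p hp) (hL.ucv _ p (OmegaT_subset T hp)))
    · have a := abs_add_le ((W' k).v p.1 p.2 - (W (n + k)).v p.1 p.2)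
        ((W (n + k)).v p.1 p.2 - v p.1 p.2)
      rw [sub_add_sub_cancel] at a
      exact a.trans (add_le_add (hv' k p hp) (hvcv _ p (OmegaT_subset T hp)))
    · simpa using (kinv.add hen).const_mul 2)
  have t2 := hcx (fun k => W (n + k)) (fun k => hadm _) (by
    refine squeeze_zero (g := fun k => 2 * e (n + k)) (fun k => hsq _ (hadm _))
      (fun k => ess_le_of_unif hT fun p hp => ⟨hL.ucv _ p (OmegaT_subset T hp),
        hvcv _ p (OmegaT_subset T hp)⟩) ?_
    simpa using hen.const_mul 2)
  have t3 := t1.add t2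
  rw [add_zero] at t3
  have hle : ∀ k, τ / 8 * m0.toReal ≤ (∫ p in OmegaT T, |(W' k).ux p.1 p.2 - ux p.1 p.2|)
      + ∫ p in OmegaT T, |(W (n + k)).ux p.1 p.2 - ux p.1 p.2| := by
    intro k
    have i1 : IntegrableOn (fun p : ℝ × ℝ => (W' k).ux p.1 p.2) (OmegaT T) :=
      int_of_cont (hA k).1.cont_x
    have i2 : IntegrableOn (fun p : ℝ × ℝ => (W (n + k)).ux p.1 p.2) (OmegaT T) :=
      int_of_cont (hadm (n + k)).1.cont_x
    have j1 : IntegrableOn (fun p : ℝ × ℝ => |(W' k).ux p.1 p.2 - ux p.1 p.2|) (OmegaT T) :=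
      (i1.sub huxi).abs
    have j2 : IntegrableOn (fun p : ℝ × ℝ => |(W (n + k)).ux p.1 p.2 - ux p.1 p.2|) (OmegaT T) :=
      (i2.sub huxi).abs
    refine (hlow k).trans ?_
    have := integral_add j1 j2
    rw [← this]
    refine integral_mono (i1.sub i2).abs (j1.add j2) fun p => ?_
    have a := abs_sub_le ((W' k).ux p.1 p.2) (ux p.1 p.2) ((W (n + k)).ux p.1 p.2)
    rw [abs_sub_comm (ux p.1 p.2)] at a
    exact a
  have h0 := ge_of_tendsto' t3 hle
  have : 0 < m0.toReal := ENNReal.toReal_pos hm0.ne' (hm1.ne_top)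
  have : 0 < τ / 8 * m0.toReal := by positivity
  linarith

lemma lim_extremal (hT : 0 < T) (hcoeff : CoeffHyp α T b bx c f d) (hBr : Br r1 r2 δ0 sm sp)
    (hE : E ⊆ OmegaT T)
    (hL : Lim T r1 r2 ε sm sp sigmat b bx c f u0 us usx ust E W e u ux ut vt)
    (hnull : ∀ τ : ℝ, 0 < τ → ∀ n : ℕ,
      volume (⋂ k : ℕ, Aset E sm sp b bx c f (W (n + k)) τ) = 0) :
    ∀ᵐ p ∂(volume.restrict (OmegaT T)), p ∈ E →
      ux p.1 p.2 = sm (GVal b c bx f u vt p.1 p.2) ∨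
      ux p.1 p.2 = sp (GVal b c bx f u vt p.1 p.2) := by
  have hN : ∀ᵐ p ∂(volume.restrict (OmegaT T)), ∀ i n : ℕ,
      p ∉ ⋂ k : ℕ, Aset E sm sp b bx c f (W (n + k)) (((i:ℝ) + 1)⁻¹) := by
    rw [ae_all_iff]; intro i
    rw [ae_all_iff]; intro n
    exact ae_restrict_of_ae (measure_eq_zero_iff_ae_notMem.1 (hnull _ (by positivity) n))
  filter_upwards [hL.aex, lim_G hcoeff hL, lim_inE hcoeff hBr hE hL, hN] with p h1 h2 h3 h4 hpE
  obtain ⟨hI, hm, hp⟩ := h3 hpE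
  by_contra hcon
  push Not at hcon
  have q1 := lt_of_le_of_ne hm hcon.1.symm
  have q2 := lt_of_le_of_ne hp hcon.2
  have l1 := h1.sub ((hBr.smc _ hI).tendsto.comp h2)
  have l2 := ((hBr.spc _ hI).tendsto.comp h2).sub h1
  have q3 : 0 < min (ux p.1 p.2 - sm (GVal b c bx f u vt p.1 p.2))
    (sp (GVal b c bx f u vt p.1 p.2) - ux p.1 p.2) := lt_min (by linarith) (by linarith)
  obtain ⟨i, hi⟩ := (kinv_lt 1 q3).exists
  rw [one_mul] at hi
  have hi := lt_min_iff.1 hi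
  obtain ⟨n, hn⟩ := Filter.eventually_atTop.1
    ((l1.eventually_const_lt hi.1).and (l2.eventually_const_lt hi.2))
  refine h4 i n (mem_iInter.2 fun k => ?_)
  have := hn (n + k) (Nat.le_add_right _ _)
  simp only [Function.comp] at this
  exact ⟨hpE, by linarith [this.1], by linarith [this.2]⟩

end

lemma vol_of_ind {E : Set (ℝ × ℝ)} (hEm : MeasurableSet E) {g z : ℝ × ℝ → ℝ} {I : Set ℝ}
    (hI : MeasurableSet I) (hg : AEMeasurable g (volume.restrict E))
    (hz : ∀ᵐ p ∂(volume.restrict E), (g p ∈ I ∧ z p = 1) ∨ (g p ∉ I ∧ z p = 0)) :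
    ∫ p in E, z p = (volume {p ∈ E | g p ∈ I}).toReal := by
  have hn : NullMeasurableSet (g ⁻¹' I) (volume.restrict E) := hg.nullMeasurable hI
  have h1 : ∫ p in E, z p = ∫ p in E, (g ⁻¹' I).indicator (fun _ => (1:ℝ)) p := by
    refine integral_congr_ae ?_
    filter_upwards [hz] with p hp
    rcases hp with ⟨h, h'⟩ | ⟨h, h'⟩ <;> simp [h, h']
  rw [h1, integral_indicator₀ hn, setIntegral_const, smul_eq_mul, mul_one, Measure.real,
    Measure.restrict_apply' hEm]
  congr 2
  ext p
  simp [and_comm]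

section
variable {α T r1 r2 mstar GammaStar ε δ0 : ℝ} {sigma sm sp sigmat : ℝ → ℝ}
    {b bx c f : ℝ → ℝ → ℝ} {d : ℝ → ℝ} {u0 : ℝ → ℝ}
    {us usx ust vs : ℝ → ℝ → ℝ} {E : Set (ℝ × ℝ)} {W : ℕ → PairData} {e : ℕ → ℝ}
    {u v ux ut vt : ℝ → ℝ → ℝ}

lemma lim_gauge (hT : 0 < T) (hcoeff : CoeffHyp α T b bx c f d) (hBr : Br r1 r2 δ0 sm sp)
    (hE : E ⊆ OmegaT T) (hEo : IsOpen E)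
    (hL : Lim T r1 r2 ε sm sp sigmat b bx c f u0 us usx ust E W e u ux ut vt)
    (hg : ∀ j, |Gauge sm sp b bx c f (W j).u (W j).vt (W j).ux E - GammaStar| ≤ ε / 2) :
    |Gauge sm sp b bx c f u vt ux E - GammaStar| ≤ ε / 2 := by
  have hEf : IsFiniteMeasure ((volume : Measure (ℝ × ℝ)).restrict E) :=
    ⟨by rw [Measure.restrict_apply_univ]; exact (measure_mono hE).trans_lt (volume_OmegaT_lt_top T)⟩
  have key : Filter.Tendsto (fun j => Gauge sm sp b bx c f (W j).u (W j).vt (W j).ux E)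
      Filter.atTop (nhds (Gauge sm sp b bx c f u vt ux E)) := by
    refine Filter.Tendsto.const_mul _ ?_
    refine tendsto_integral_of_dominated_convergence (fun _ => 1) (fun j => ?_)
      (integrable_const _) (fun j => ?_) ?_
    · exact (contOn_Z hT hcoeff hBr hE (hL.good j).c21 (hL.good j).c31 fun p hp =>
        ⟨((hL.good j).inE p hp).1.le, ((hL.good j).inE p hp).2.1.le⟩).aestronglyMeasurable
        hEo.measurableSet
    · filter_upwards [ae_restrict_mem hEo.measurableSet] with p hp
      obtain ⟨a1, a2, a3, a4⟩ := (hL.good j).inE p hp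
      have := Z_mem a3.le a4.le (a3.trans a4)
      rw [Real.norm_eq_abs, abs_le]
      exact ⟨(by norm_num : (-1:ℝ) ≤ 0).trans this.1, this.2⟩
    · have hall : ∀ᵐ p ∂(volume.restrict (OmegaT T)), p ∈ E → Filter.Tendsto
          (fun j => Zfun sm sp b bx c f (W j).u (W j).vt (W j).ux p) Filter.atTop
          (nhds (Zfun sm sp b bx c f u vt ux p)) := by
        filter_upwards [hL.aex, lim_G hcoeff hL, lim_inE hcoeff hBr hE hL] with p h1 h2 h3 hpE
        obtain ⟨hI, -, -⟩ := h3 hpE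
        have l1 := (hBr.smc _ hI).tendsto.comp h2
        have l2 := (hBr.spc _ hI).tendsto.comp h2
        refine (h1.sub l1).div (l2.sub l1) ?_
        have := hBr.gap _ hI
        have := hBr.δpos
        exact ne_of_gt (by linarith)
      filter_upwards [ae_restrict_of_ae_restrict_of_subset hE hall,
        ae_restrict_mem hEo.measurableSet] with p h hp
      exact h hp
  exact le_of_tendsto (key.sub_const _).abs (Filter.Eventually.of_forall hg)

lemma gauge_mul : Gauge sm sp b bx c f u vt ux E * (volume E).toReal
    = ∫ p in E, Zfun sm sp b bx c f u vt ux p ∨ volume E = ⊤ := by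
  by_cases h : volume E = 0
  · left
    rw [h, Measure.restrict_eq_zero.2 h]
    simp
  · by_cases h2 : volume E = ⊤
    · exact Or.inr h2
    · left
      have : (volume E).toReal ≠ 0 := ENNReal.toReal_ne_zero.2 ⟨h, h2⟩
      unfold Gauge
      field_simp

lemma lim_vol (hBr : Br r1 r2 δ0 sm sp)
    (hE : E ⊆ OmegaT T) (hEo : IsOpen E)
    (hmm : MonotoneOn sm (Icc r1 r2)) (hpm : MonotoneOn sp (Icc r1 r2))
    (hr12 : r1 ≤ r2) (hsep : sm r2 < sp r1)
    (huxi : IntegrableOn (fun p : ℝ × ℝ => ux p.1 p.2) (OmegaT T))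
    (hex : ∀ᵐ p ∂(volume.restrict E), GVal b c bx f u vt p.1 p.2 ∈ Icc r1 r2 ∧
      (ux p.1 p.2 = sm (GVal b c bx f u vt p.1 p.2) ∨
      ux p.1 p.2 = sp (GVal b c bx f u vt p.1 p.2))) :
    ((volume {p ∈ E | ux p.1 p.2 ∈ Icc (sp r1) (sp r2)}).toReal
      = Gauge sm sp b bx c f u vt ux E * (volume E).toReal) ∧
    ((volume {p ∈ E | ux p.1 p.2 ∈ Icc (sm r1) (sm r2)}).toReal
      = (1 - Gauge sm sp b bx c f u vt ux E) * (volume E).toReal) := by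
  have hEf : volume E ≠ ⊤ := ((measure_mono hE).trans_lt (volume_OmegaT_lt_top T)).ne
  have hEf' : IsFiniteMeasure ((volume : Measure (ℝ × ℝ)).restrict E) :=
    ⟨by rw [Measure.restrict_apply_univ]; exact hEf.lt_top⟩
  have hga := (gauge_mul (sm := sm) (sp := sp) (b := b) (bx := bx) (c := c) (f := f) (u := u)
    (vt := vt) (ux := ux) (E := E)).resolve_right hEf
  have hgm : AEMeasurable (fun p : ℝ × ℝ => ux p.1 p.2) (volume.restrict E) :=
    (huxi.mono_set hE).aestronglyMeasurable.aemeasurable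
  have h1I : r1 ∈ Icc r1 r2 := ⟨le_rfl, hr12⟩
  have h2I : r2 ∈ Icc r1 r2 := ⟨hr12, le_rfl⟩
  have hcase : ∀ᵐ p ∂(volume.restrict E),
      (ux p.1 p.2 ∈ Icc (sm r1) (sm r2) ∧ ux p.1 p.2 ∉ Icc (sp r1) (sp r2) ∧
        Zfun sm sp b bx c f u vt ux p = 0) ∨
      (ux p.1 p.2 ∉ Icc (sm r1) (sm r2) ∧ ux p.1 p.2 ∈ Icc (sp r1) (sp r2) ∧
        Zfun sm sp b bx c f u vt ux p = 1) := by
    filter_upwards [hex] with p hp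
    obtain ⟨hI, hp⟩ := hp
    have gap := hBr.gap _ hI
    have dp := hBr.δpos
    rcases hp with hp | hp
    · left
      have a1 := hmm h1I hI hI.1
      have a2 := hmm hI h2I hI.2
      refine ⟨by rw [hp]; exact ⟨a1, a2⟩, fun h => ?_, ?_⟩
      · rw [hp] at h; linarith [h.1]
      · unfold Zfun; rw [hp, sub_self, zero_div]
    · right
      have a1 := hpm h1I hI hI.1
      have a2 := hpm hI h2I hI.2
      refine ⟨fun h => ?_, by rw [hp]; exact ⟨a1, a2⟩, ?_⟩
      · rw [hp] at h; linarith [h.2]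
      · unfold Zfun; rw [hp]; exact div_self (ne_of_gt (by linarith))
  have hp := vol_of_ind hEo.measurableSet (measurableSet_Icc (a := sp r1) (b := sp r2)) hgm
    (z := Zfun sm sp b bx c f u vt ux)
    (hcase.mono fun p hp => by
      rcases hp with ⟨-, h2, h3⟩ | ⟨-, h2, h3⟩
      · exact Or.inr ⟨h2, h3⟩
      · exact Or.inl ⟨h2, h3⟩)
  have hm := vol_of_ind hEo.measurableSet (measurableSet_Icc (a := sm r1) (b := sm r2)) hgm
    (z := fun p => 1 - Zfun sm sp b bx c f u vt ux p)
    (hcase.mono fun p hp => by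
      rcases hp with ⟨h2, -, h3⟩ | ⟨h2, -, h3⟩
      · exact Or.inl ⟨h2, by rw [h3, sub_zero]⟩
      · exact Or.inr ⟨h2, by rw [h3, sub_self]⟩)
  have hZi : IntegrableOn (Zfun sm sp b bx c f u vt ux) E := by
    have hn : NullMeasurableSet ((fun p : ℝ × ℝ => ux p.1 p.2) ⁻¹' Icc (sp r1) (sp r2))
      (volume.restrict E) := hgm.nullMeasurable measurableSet_Icc
    have hi : IntegrableOn (((fun p : ℝ × ℝ => ux p.1 p.2) ⁻¹' Icc (sp r1) (sp r2)).indicator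
      (fun _ => (1:ℝ))) E := (integrable_const (1:ℝ)).indicator₀ hn
    refine hi.congr ?_
    filter_upwards [hcase] with p hp
    rcases hp with ⟨-, h, h'⟩ | ⟨-, h, h'⟩
    · rw [h', indicator_of_notMem (s := (fun p : ℝ × ℝ => ux p.1 p.2) ⁻¹' Icc (sp r1) (sp r2)) h]
    · rw [h', indicator_of_mem (s := (fun p : ℝ × ℝ => ux p.1 p.2) ⁻¹' Icc (sp r1) (sp r2)) h]
  refine ⟨by rw [hga, hp], ?_⟩
  have hs : ∫ p in E, (1 - Zfun sm sp b bx c f u vt ux p)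
    = (∫ p in E, (1:ℝ)) - ∫ p in E, Zfun sm sp b bx c f u vt ux p :=
    integral_sub (integrable_const _) hZi
  rw [← hm, hs, sub_mul, one_mul, hga, setIntegral_const, smul_eq_mul, mul_one]
  rfl

end

/-- If `w = (u,v)` lies in the `L∞`-closure `𝒳` of the admissible set `𝒜`
and the a.e.-gradient map `∇` is continuous at `w`, then `u` is a Lipschitz solution of the
initial–Neumann problem satisfying properties (a)–(d). -/
theorem continuity_point_gives_solution
    (α s1 s2 lam Lam T s1star s2star r1 r2 x0 lamt Lamt mstar GammaStar ε : ℝ)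
    (sigma sigma' sm sp sigmat sigmat' : ℝ → ℝ)
    (b bx c f : ℝ → ℝ → ℝ) (d : ℝ → ℝ) (u0 u0' u0'' : ℝ → ℝ)
    (us usx usxx ust : ℝ → ℝ → ℝ)
    (hT : 0 < T)
    (hflux : FluxHyp α s1 s2 lam Lam sigma sigma')
    (hcoeff : CoeffHyp α T b bx c f d)
    (hinit : InitHyp α u0 u0' u0'')
    (hs1star : 0 ≤ s1star) (hs1star' : s1star < s1) (hs1star_eq : sigma s1star = sigma s2)
    (hs2star : s2 < s2star) (hs2star_eq : sigma s2star = sigma s1)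
    (hsm : ∀ r ∈ Icc (sigma s2) (sigma s1), sm r ∈ Icc s1star s1 ∧ sigma (sm r) = r)
    (hsp : ∀ r ∈ Icc (sigma s2) (sigma s1), sp r ∈ Icc s2 s2star ∧ sigma (sp r) = r)
    (hr1 : sigma s2 < r1) (hr12 : r1 < r2) (hr2 : r2 < sigma s1)
    (hx0 : x0 ∈ Ioo (0:ℝ) 1) (hx0l : sm r1 < u0' x0) (hx0r : u0' x0 < sp r2)
    (htilde : TildeHyp α r1 r2 lamt Lamt sigma sm sp sigmat sigmat')
    (hstar : StarSol α T sigmat sigmat' b bx c f u0 us usx usxx ust)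
    (hmstar : mstar = EssSupAbs T ust + 1)
    (hGammaStar : GammaStar = Gauge sm sp b bx c f us (VStarT sigmat b bx c f us usx) usx
      (Omega2 T (sm r1) (sp r2) usx))
    (hε : 0 < ε)
    -- `w = (u,v)`, a Lipschitz pair with a.e. gradient data `(ux, ut, vx, vt)`
    (u v ux ut vx vt : ℝ → ℝ → ℝ)
    (hlip_u : ∃ K : ℝ≥0, LipschitzOnWith K (fun p : ℝ × ℝ => u p.1 p.2) (ClOmegaT T))
    (hlip_v : ∃ K : ℝ≥0, LipschitzOnWith K (fun p : ℝ × ℝ => v p.1 p.2) (ClOmegaT T))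
    (hux : ∀ᵐ p ∂(volume.restrict (OmegaT T)), HasDerivAt (fun y => u y p.2) (ux p.1 p.2) p.1)
    (hut : ∀ᵐ p ∂(volume.restrict (OmegaT T)), HasDerivAt (fun τ => u p.1 τ) (ut p.1 p.2) p.2)
    (hvx : ∀ᵐ p ∂(volume.restrict (OmegaT T)), HasDerivAt (fun y => v y p.2) (vx p.1 p.2) p.1)
    (hvt : ∀ᵐ p ∂(volume.restrict (OmegaT T)), HasDerivAt (fun τ => v p.1 τ) (vt p.1 p.2) p.2)
    -- `w ∈ 𝒳`: `w` is an `L∞(Ω_T;ℝ²)`-limit of elements of `𝒜`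
    (hclosure : ∃ Wseq : ℕ → PairData,
      (∀ j, InAdmissible T r1 r2 mstar ε GammaStar sigma sm sp b bx c f
        us ust (VStar sigmat b bx c f u0 us usx) (Omega2 T (sm r1) (sp r2) usx) (Wseq j)) ∧
      Filter.Tendsto (fun j => EssSupAbs T (fun x t =>
          Real.sqrt (((Wseq j).u x t - u x t) ^ 2 + ((Wseq j).v x t - v x t) ^ 2)))
        Filter.atTop (nhds 0))
    -- the gradient operator `∇` is continuous at `w`
    (hcont : ∀ Wseq : ℕ → PairData,
      (∀ j, InAdmissible T r1 r2 mstar ε GammaStar sigma sm sp b bx c f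
        us ust (VStar sigmat b bx c f u0 us usx) (Omega2 T (sm r1) (sp r2) usx) (Wseq j)) →
      Filter.Tendsto (fun j => EssSupAbs T (fun x t =>
          Real.sqrt (((Wseq j).u x t - u x t) ^ 2 + ((Wseq j).v x t - v x t) ^ 2)))
        Filter.atTop (nhds 0) →
      Filter.Tendsto (fun j => ∫ p in OmegaT T,
          (|(Wseq j).ux p.1 p.2 - ux p.1 p.2| + |(Wseq j).ut p.1 p.2 - ut p.1 p.2|
            + |(Wseq j).vx p.1 p.2 - vx p.1 p.2| + |(Wseq j).vt p.1 p.2 - vt p.1 p.2|))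
        Filter.atTop (nhds 0)) :
    IsLipschitzSolution T sigma b c f u0 u ux ∧
    -- (a)
    (∀ p ∈ Omega1 T (sm r1) usx ∪ Omega3 T (sp r2) usx, u p.1 p.2 = us p.1 p.2) ∧
    EssSupAbs T (fun x t => u x t - us x t) < ε ∧
    EssSupAbs T (fun x t => ut x t - ust x t) < ε ∧
    -- (b)
    (∀ᵐ p ∂(volume.restrict (Omega1 T (sm r1) usx)), ux p.1 p.2 < sm r1) ∧
    (∀ᵐ p ∂(volume.restrict (Omega2 T (sm r1) (sp r2) usx)),
      ux p.1 p.2 ∈ Icc (sm r1) (sm r2) ∪ Icc (sp r1) (sp r2)) ∧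
    (∀ᵐ p ∂(volume.restrict (Omega3 T (sp r2) usx)), sp r2 < ux p.1 p.2) ∧
    -- (c)
    (∀ᵐ p ∂(volume.restrict (Omega0m T (sm r1) usx)), ux p.1 p.2 = sm r1) ∧
    (∀ᵐ p ∂(volume.restrict (Omega0p T (sp r2) usx)), ux p.1 p.2 = sp r2) ∧
    -- (d)
    ((volume {p ∈ Omega2 T (sm r1) (sp r2) usx | ux p.1 p.2 ∈ Icc (sp r1) (sp r2)}).toReal
      = Gauge sm sp b bx c f u vt ux (Omega2 T (sm r1) (sp r2) usx)
          * (volume (Omega2 T (sm r1) (sp r2) usx)).toReal) ∧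
    ((volume {p ∈ Omega2 T (sm r1) (sp r2) usx | ux p.1 p.2 ∈ Icc (sm r1) (sm r2)}).toReal
      = (1 - Gauge sm sp b bx c f u vt ux (Omega2 T (sm r1) (sp r2) usx))
          * (volume (Omega2 T (sm r1) (sp r2) usx)).toReal) ∧
    |Gauge sm sp b bx c f u vt ux (Omega2 T (sm r1) (sp r2) usx) - GammaStar| < ε := by
  have hmL := flux_mono_left hflux
  have hmR := flux_mono_right hflux
  have hsubL : Icc s1star s1 ⊆ Iic s1 := fun x hx => hx.2
  have hsubR : Icc s2 s2star ⊆ Ici s2 := fun x hx => hx.1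
  have hIsub : Icc r1 r2 ⊆ Icc (sigma s2) (sigma s1) := Icc_subset_Icc hr1.le hr2.le
  have hBr : Br r1 r2 (s2 - s1) sm sp := by
    refine ⟨sub_pos.2 hflux.s1_lt_s2, fun r hr => ?_, fun r hr => ?_, fun r hr => ?_⟩
    · exact branch_continuousAt hmL hsubL hs1star_eq rfl hsm
        ⟨hr1.trans_le hr.1, hr.2.trans_lt hr2⟩
    · exact branch_continuousAt hmR hsubR rfl hs2star_eq hsp
        ⟨hr1.trans_le hr.1, hr.2.trans_lt hr2⟩
    · have a := (hsm r (hIsub hr)).1.2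
      have b' := (hsp r (hIsub hr)).1.1
      linarith
  have hmm : MonotoneOn sm (Icc r1 r2) := (branch_strictMono hmL hsubL hsm).monotoneOn.mono hIsub
  have hpm : MonotoneOn sp (Icc r1 r2) := (branch_strictMono hmR hsubR hsp).monotoneOn.mono hIsub
  have h1I : r1 ∈ Icc r1 r2 := ⟨le_rfl, hr12.le⟩
  have h2I : r2 ∈ Icc r1 r2 := ⟨hr12.le, le_rfl⟩
  have hsep : sm r2 < sp r1 := by
    have a := (hsm r2 (hIsub h2I)).1.2
    have b' := (hsp r1 (hIsub h1I)).1.1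
    linarith [hflux.s1_lt_s2]
  have hs0 : sigmat 0 = 0 := by
    rw [htilde.eq_left 0 (hs1star.trans (hsm r1 (hIsub h1I)).1.1), hflux.sigma_zero]
  have hstc : Continuous sigmat := continuous_iff_continuousAt.2 fun s => (htilde.deriv s).continuousAt
  have husxO : ContinuousOn (fun p : ℝ × ℝ => usx p.1 p.2) (OmegaT T) :=
    hstar.reg.cont_x.mono (OmegaT_subset T)
  have hEo : IsOpen (Omega2 T (sm r1) (sp r2) usx) :=
    husxO.isOpen_inter_preimage (isOpen_OmegaT T) (isOpen_Ioo (a := sm r1) (b := sp r2))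
  have h1o : IsOpen (Omega1 T (sm r1) usx) :=
    husxO.isOpen_inter_preimage (isOpen_OmegaT T) (isOpen_Iio (a := sm r1))
  have h3o : IsOpen (Omega3 T (sp r2) usx) :=
    husxO.isOpen_inter_preimage (isOpen_OmegaT T) (isOpen_Ioi (a := sp r2))
  have hmeas0 : ∀ a : ℝ, MeasurableSet {p ∈ OmegaT T | usx p.1 p.2 = a} := by
    intro a
    have h : IsOpen {p ∈ OmegaT T | usx p.1 p.2 ≠ a} :=
      husxO.isOpen_inter_preimage (isOpen_OmegaT T) (isOpen_ne (x := a))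
    convert (measurableSet_OmegaT T).diff h.measurableSet using 1
    ext p
    simp only [mem_diff, mem_ofPred_eq, not_and, not_not]
    exact ⟨fun h => ⟨h.1, fun _ => h.2⟩, fun h => ⟨h.1, h.2 h.1⟩⟩
  have hE : Omega2 T (sm r1) (sp r2) usx ⊆ OmegaT T := fun p hp => hp.1
  have huc : ContinuousOn (fun p : ℝ × ℝ => u p.1 p.2) (ClOmegaT T) := by
    obtain ⟨K, hK⟩ := hlip_u; exact hK.continuousOn
  have hvc : ContinuousOn (fun p : ℝ × ℝ => v p.1 p.2) (ClOmegaT T) := by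
    obtain ⟨K, hK⟩ := hlip_v; exact hK.continuousOn
  have huxi := int_dx hT hlip_u hux
  have huti := int_dt hT hlip_u hut
  have hvxi := int_dx hT hlip_v hvx
  have hvti := int_dt hT hlip_v hvt
  have hHi : ∀ V : PairData, C21 T V.u V.ux V.uxx V.ut → C31 T V.v V.vx V.vxx V.vxxx V.vt →
      IntegrableOn (fun p : ℝ × ℝ => |V.ux p.1 p.2 - ux p.1 p.2| + |V.ut p.1 p.2 - ut p.1 p.2|
            + |V.vx p.1 p.2 - vx p.1 p.2| + |V.vt p.1 p.2 - vt p.1 p.2|) (OmegaT T) := by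
    intro V h1 h2
    have a1 : IntegrableOn (fun p : ℝ × ℝ => |V.ux p.1 p.2 - ux p.1 p.2|) (OmegaT T) :=
      ((int_of_cont h1.cont_x).sub huxi).abs
    have a2 : IntegrableOn (fun p : ℝ × ℝ => |V.ut p.1 p.2 - ut p.1 p.2|) (OmegaT T) :=
      ((int_of_cont h1.cont_t).sub huti).abs
    have a3 : IntegrableOn (fun p : ℝ × ℝ => |V.vx p.1 p.2 - vx p.1 p.2|) (OmegaT T) :=
      ((int_of_cont h2.cont_x).sub hvxi).abs
    have a4 : IntegrableOn (fun p : ℝ × ℝ => |V.vt p.1 p.2 - vt p.1 p.2|) (OmegaT T) :=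
      ((int_of_cont h2.cont_t).sub hvti).abs
    exact ((a1.add a2).add a3).add a4
  have hcx : ∀ W' : ℕ → PairData,
      (∀ j, InAdmissible T r1 r2 mstar ε GammaStar sigma sm sp b bx c f
        us ust (VStar sigmat b bx c f u0 us usx) (Omega2 T (sm r1) (sp r2) usx) (W' j)) →
      Filter.Tendsto (fun j => EssSupAbs T (fun x t =>
          Real.sqrt (((W' j).u x t - u x t) ^ 2 + ((W' j).v x t - v x t) ^ 2)))
        Filter.atTop (nhds 0) →
      Filter.Tendsto (fun j => ∫ p in OmegaT T, |(W' j).ux p.1 p.2 - ux p.1 p.2|)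
        Filter.atTop (nhds 0) := by
    intro W' hW' h0
    refine squeeze_zero (fun j => integral_nonneg fun p => abs_nonneg _) (fun j => ?_)
      (hcont W' hW' h0)
    refine integral_mono ?_ (hHi _ (hW' j).1 (hW' j).2.1) fun p => ?_
    · exact ((int_of_cont (hW' j).1.cont_x).sub huxi).abs
    · have b1 := abs_nonneg ((W' j).ut p.1 p.2 - ut p.1 p.2)
      have b2 := abs_nonneg ((W' j).vx p.1 p.2 - vx p.1 p.2)
      have b3 := abs_nonneg ((W' j).vt p.1 p.2 - vt p.1 p.2)
      show |(W' j).ux p.1 p.2 - ux p.1 p.2| ≤ |(W' j).ux p.1 p.2 - ux p.1 p.2|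
        + |(W' j).ut p.1 p.2 - ut p.1 p.2|
            + |(W' j).vx p.1 p.2 - vx p.1 p.2| + |(W' j).vt p.1 p.2 - vt p.1 p.2|
      linarith
  obtain ⟨Ws, hWs, hWs0⟩ := hclosure
  obtain ⟨ns, hns, hae⟩ := ae_subseq (μ := volume.restrict (OmegaT T))
    (H := fun j p => |(Ws j).ux p.1 p.2 - ux p.1 p.2| + |(Ws j).ut p.1 p.2 - ut p.1 p.2|
            + |(Ws j).vx p.1 p.2 - vx p.1 p.2| + |(Ws j).vt p.1 p.2 - vt p.1 p.2|)
    (fun j => hHi _ (hWs j).1 (hWs j).2.1) (fun j p => by positivity) (hcont Ws hWs hWs0)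
  have hL : Lim T r1 r2 ε sm sp sigmat b bx c f u0 us usx ust (Omega2 T (sm r1) (sp r2) usx)
      (fun j => Ws (ns j)) (fun j => EssSupAbs T (fun x t =>
          Real.sqrt (((Ws (ns j)).u x t - u x t) ^ 2 + ((Ws (ns j)).v x t - v x t) ^ 2)))
      u ux ut vt := by
    refine ⟨fun j => good_of_adm hT hcoeff htilde.deriv hs0 hstar hE (hWs (ns j)),
      hWs0.comp hns.tendsto_atTop, fun j p hp =>
        (unif_of_ess hT (hWs (ns j)).1.cont (hWs (ns j)).2.1.cont huc hvc p hp).1, huc, ?_, ?_, ?_⟩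
    · filter_upwards [hae] with p hp
      refine tendsto_of_abs_le (fun j => ?_) hp
      have b0 := abs_nonneg ((Ws (ns j)).ux p.1 p.2 - ux p.1 p.2)
      have b1 := abs_nonneg ((Ws (ns j)).ut p.1 p.2 - ut p.1 p.2)
      have b2 := abs_nonneg ((Ws (ns j)).vx p.1 p.2 - vx p.1 p.2)
      have b3 := abs_nonneg ((Ws (ns j)).vt p.1 p.2 - vt p.1 p.2)
      linarith
    · filter_upwards [hae] with p hp
      refine tendsto_of_abs_le (fun j => ?_) hp
      have b0 := abs_nonneg ((Ws (ns j)).ux p.1 p.2 - ux p.1 p.2)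
      have b1 := abs_nonneg ((Ws (ns j)).ut p.1 p.2 - ut p.1 p.2)
      have b2 := abs_nonneg ((Ws (ns j)).vx p.1 p.2 - vx p.1 p.2)
      have b3 := abs_nonneg ((Ws (ns j)).vt p.1 p.2 - vt p.1 p.2)
      linarith
    · filter_upwards [hae] with p hp
      refine tendsto_of_abs_le (fun j => ?_) hp
      have b0 := abs_nonneg ((Ws (ns j)).ux p.1 p.2 - ux p.1 p.2)
      have b1 := abs_nonneg ((Ws (ns j)).ut p.1 p.2 - ut p.1 p.2)
      have b2 := abs_nonneg ((Ws (ns j)).vx p.1 p.2 - vx p.1 p.2)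
      have b3 := abs_nonneg ((Ws (ns j)).vt p.1 p.2 - vt p.1 p.2)
      linarith
  have hvcv : ∀ j, ∀ p ∈ ClOmegaT T, |(Ws (ns j)).v p.1 p.2 - v p.1 p.2| ≤ EssSupAbs T
      (fun x t => Real.sqrt (((Ws (ns j)).u x t - u x t) ^ 2 + ((Ws (ns j)).v x t - v x t) ^ 2)) :=
    fun j p hp => (unif_of_ess hT (hWs (ns j)).1.cont (hWs (ns j)).2.1.cont huc hvc p hp).2
  have hext := lim_extremal hT hcoeff hBr hE hL fun τ hτ n =>
    lim_null hT hcoeff hBr hE hEo hstar.reg.cont hstar.reg.cont_t hvc (fun j => hWs (ns j)) hL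
      hvcv huxi hcx hτ n
  have hin := lim_inE hcoeff hBr hE hL
  obtain ⟨hoff1, hoff2⟩ := lim_off hcoeff hL
  have hG : ∀ᵐ p ∂(volume.restrict (OmegaT T)), GVal b c bx f u vt p.1 p.2 = sigma (ux p.1 p.2) := by
    filter_upwards [hext, hin, hoff2, ae_restrict_mem (measurableSet_OmegaT T)] with p h1 h2 h3 hp
    by_cases hpE : p ∈ Omega2 T (sm r1) (sp r2) usx
    · obtain ⟨hI, -, -⟩ := h2 hpE
      rcases h1 hpE with h | h
      · rw [h, (hsm _ (hIsub hI)).2]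
      · rw [h, (hsp _ (hIsub hI)).2]
    · obtain ⟨h4, h5⟩ := h3 hpE
      rw [h5, h4]
      by_cases hc : usx p.1 p.2 ≤ sm r1
      · exact htilde.eq_left _ hc
      · refine htilde.eq_right _ (not_lt.1 fun hlt => hpE ⟨hp, not_le.1 hc, hlt⟩)
  have hexE : ∀ᵐ p ∂(volume.restrict (Omega2 T (sm r1) (sp r2) usx)),
      GVal b c bx f u vt p.1 p.2 ∈ Icc r1 r2 ∧
      (ux p.1 p.2 = sm (GVal b c bx f u vt p.1 p.2) ∨
      ux p.1 p.2 = sp (GVal b c bx f u vt p.1 p.2)) := by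
    filter_upwards [ae_restrict_of_ae_restrict_of_subset hE hext,
      ae_restrict_of_ae_restrict_of_subset hE hin, ae_restrict_mem hEo.measurableSet] with p h1 h2 hp
    exact ⟨(h2 hp).1, h1 hp⟩
  have hoffS : ∀ S : Set (ℝ × ℝ), MeasurableSet S → S ⊆ OmegaT T →
      (∀ p ∈ S, p ∉ Omega2 T (sm r1) (sp r2) usx) →
      ∀ᵐ p ∂(volume.restrict S), p ∈ S ∧ ux p.1 p.2 = usx p.1 p.2 := by
    intro S hS hSO hd
    filter_upwards [ae_restrict_of_ae_restrict_of_subset hSO hoff2, ae_restrict_mem hS] with p h1 hp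
    exact ⟨hp, (h1 (hd p hp)).1⟩
  have hcl := lim_close hT hL
  obtain ⟨hd1, hd2⟩ := lim_vol hBr hE hEo hmm hpm hr12.le hsep huxi hexE
  have hlr : sm r1 < sp r2 := hx0l.trans hx0r
  refine ⟨⟨hlip_u, hux, fun ζ hζ s hs => lim_weak hT hcoeff hBr hstc hstar.reg.cont
    hstar.reg.cont_x hL hG hζ hs⟩, ?_, by linarith [hcl.1], by linarith [hcl.2],
    ?_, ?_, ?_, ?_, ?_, hd1, hd2, ?_⟩
  · rintro p (hp | hp)
    · exact hoff1 p hp.1 fun h => lt_asymm hp.2 h.2.1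
    · exact hoff1 p hp.1 fun h => lt_asymm hp.2 h.2.2
  · filter_upwards [hoffS _ h1o.measurableSet (fun p hp => hp.1)
      (fun p hp h => lt_asymm hp.2 h.2.1)] with p hp
    rw [hp.2]; exact hp.1.2
  · filter_upwards [hexE] with p hp
    obtain ⟨hI, h | h⟩ := hp
    · left; rw [h]; exact ⟨hmm h1I hI hI.1, hmm hI h2I hI.2⟩
    · right; rw [h]; exact ⟨hpm h1I hI hI.1, hpm hI h2I hI.2⟩
  · filter_upwards [hoffS _ h3o.measurableSet (fun p hp => hp.1)
      (fun p hp h => lt_asymm hp.2 h.2.2)] with p hp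
    rw [hp.2]; exact hp.1.2
  · filter_upwards [hoffS _ (hmeas0 (sm r1)) (fun p hp => hp.1)
      (fun p hp h => ne_of_gt h.2.1 hp.2)] with p hp
    rw [hp.2]; exact hp.1.2
  · filter_upwards [hoffS _ (hmeas0 (sp r2)) (fun p hp => hp.1)
      (fun p hp h => ne_of_lt h.2.2 hp.2)] with p hp
    rw [hp.2]; exact hp.1.2
  · have := lim_gauge hT hcoeff hBr hE hEo hL (GammaStar := GammaStar)
      (fun j => (hWs (ns j)).2.2.2.2.2.2.le)
    linarith
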